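/- Let n ≥ 1 and let α = (α_1, …, α_p) and β = (β_1, …, β_q) be partitions of n with p and q parts respectively, and let d = gcd(α, β) be the greatest common divisor of all the numbers α_1, …, α_p, β_1, …, β_q (so d divides n). Then the following are equivalent: (i) there exist coprime monic polynomials P, Q ∈ ℂ[X] with factorization patterns α and β respectively such that deg(P − Q) = (n + 1) − (p + q); (ii) p + q ≤ n/d + 1. -/

import Mathlib

open Polynomial

/-!
If `d` divides all the exponents, then `P = P₁ ^ d` and `Q = Q₁ ^ d`, so `P - Q` is `P₁ - Q₁`
times a polynomial of degree `n - n / d`.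

Conversely, the minimal degree is attained when `P'/P - Q'/Q` has no zeros in the plane, that is,
when the weights `α i` and `-β j` are the residues of a differential `L dx / ∏ k, (x - c k)`. For
arbitrary real weights `w k` that are such residues at points `c k`, the potential
`∑ k, w k * log ‖x - c k‖` has no critical points, each component of its positive or negative set
contains one of the points `c k`, and the components that share a boundary point form a tree. A
tree with positive edge weights, two-coloured by a sign, determines the weights `w k` as the signed
sums of the weights of the edges at `k`, and all such `w` are realized by points `c k`. This is
proved by induction on the tree: a new leaf of small weight is attached far away, and the edge
weights are then moved continuously to their prescribed values. Points that degenerate during the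
motion would break up into clusters of total weight zero, whereas the total weight on either side of
an edge is, up to sign, the weight of this edge.

It remains to find a tree with positive edge weights and vertex weights `α i` and `β j`. A vertex of
the transportation polytope has a forest as its support. As long as two edges in different
components of the forest have different weights, an exchange between them enlarges the forest. If
the process stops before the forest is a tree, then all edge weights are equal to some `τ`, so that
all `α i` and `β j` are multiples of `τ`; the number of edges, which is less than `p + q - 1`, is
then at least `n / d`.
-/

namespace Zannier

open Set Filter Topology Asymptotics Bornology

/-! ### Cells of a potential on the plane -/

section Cell

variable {E : Type*} [TopologicalSpace E] {φ : E → ℝ} {s t : ℝ} {x y z : E}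

/-- The connected component of `y` in the open sublevel set `{φ < t}`, empty when `t ≤ φ y`.
Components of superlevel sets are the cells of `-φ`. -/
def cell (φ : E → ℝ) (t : ℝ) (y : E) : Set E :=
  connectedComponentIn {x | φ x < t} y

theorem isOpen_cell [LocallyConnectedSpace E] (hφ : Continuous φ) : IsOpen (cell φ t y) :=
  (isOpen_lt hφ continuous_const).connectedComponentIn

theorem isPreconnected_cell : IsPreconnected (cell φ t y) :=
  isPreconnected_connectedComponentIn

theorem lt_of_mem_cell (hx : x ∈ cell φ t y) : φ x < t :=
  connectedComponentIn_subset {x | φ x < t} y hx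

theorem pos_of_mem_cell_neg (hx : x ∈ cell (-φ) 0 y) : 0 < φ x :=
  neg_lt_zero.mp (lt_of_mem_cell (φ := -φ) hx)

theorem base_lt_of_mem_cell (hx : x ∈ cell φ t y) : φ y < t :=
  connectedComponentIn_nonempty_iff (F := {x | φ x < t}).mp ⟨x, hx⟩

theorem mem_cell_self (hy : φ y < t) : y ∈ cell φ t y :=
  mem_connectedComponentIn hy

theorem subset_cell {S : Set E} (hS : IsPreconnected S) (hy : y ∈ S) (h : ∀ x ∈ S, φ x < t) :
    S ⊆ cell φ t y :=
  hS.subset_connectedComponentIn hy h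

theorem cell_eq_of_mem (h : x ∈ cell φ t y) : cell φ t y = cell φ t x :=
  connectedComponentIn_eq h

theorem cell_mono (hst : s ≤ t) : cell φ s y ⊆ cell φ t y :=
  connectedComponentIn_mono _ fun _ hx ↦ lt_of_lt_of_le hx hst

theorem le_of_mem_closure_cell (hφ : Continuous φ) (hx : x ∈ closure (cell φ t y)) : φ x ≤ t :=
  closure_minimal (fun _ hw ↦ (lt_of_mem_cell hw).le) (isClosed_le hφ continuous_const) hx

theorem mem_cell_of_mem_closure (hx : x ∈ closure (cell φ t y)) (hxt : φ x < t) :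
    x ∈ cell φ t y := by
  obtain ⟨w, hw⟩ : (cell φ t y).Nonempty := closure_nonempty_iff.mp ⟨x, hx⟩
  have hp : IsPreconnected (insert x (cell φ t y)) :=
    isPreconnected_cell.subset_closure (subset_insert _ _) (insert_subset hx subset_closure)
  refine subset_cell hp (mem_insert_of_mem _ (mem_cell_self (base_lt_of_mem_cell hw))) ?_
    (mem_insert _ _)
  rintro u (rfl | hu)
  exacts [hxt, lt_of_mem_cell hu]

theorem exists_lt_mem_cell [LocallyPathConnectedSpace E] (hφ : Continuous φ)
    (hx : x ∈ cell φ t y) : ∃ s < t, x ∈ cell φ s y := by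
  have hpath : IsPathConnected (cell φ t y) :=
    (isOpen_cell hφ).isConnected_iff_isPathConnected.mp ⟨⟨x, hx⟩, isPreconnected_cell⟩
  obtain ⟨γ, hγ⟩ := hpath.joinedIn y (mem_cell_self (base_lt_of_mem_cell hx)) x hx
  obtain ⟨_, ⟨r, rfl⟩, hmax⟩ :=
    (isCompact_range γ.continuous).exists_isMaxOn ⟨_, mem_range_self 0⟩ hφ.continuousOn
  obtain ⟨s, hs, hst⟩ := exists_between (lt_of_mem_cell (hγ r))
  exact ⟨s, hst, subset_cell (isPreconnected_range γ.continuous) ⟨0, γ.source⟩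
    (fun w hw ↦ (hmax hw).trans_lt hs) ⟨1, γ.target⟩⟩

/-- The sublevel cell of `y` and the superlevel cell of `z` at level `0` share a boundary point. -/
def CellsTouch (φ : E → ℝ) (y z : E) : Prop :=
  ∃ x, φ x = 0 ∧ x ∈ closure (cell φ 0 y) ∧ x ∈ closure (cell (-φ) 0 z)

theorem CellsTouch.neg (h : CellsTouch φ y z) : CellsTouch (-φ) z y := by
  obtain ⟨x, hx, hxy, hxz⟩ := h
  exact ⟨x, by simp [hx], hxz, by rwa [neg_neg]⟩

end Cell

section Connectedness

theorem exists_mem_frontier_of_isPreconnected {E : Type*} [TopologicalSpace E] {S O : Set E}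
    (hS : IsPreconnected S) (hO : IsOpen O) (hin : (S ∩ O).Nonempty) (hout : ¬ S ⊆ O) :
    ∃ w ∈ S, w ∈ frontier O := by
  by_contra! hfr
  have hcover : S ⊆ O ∪ (closure O)ᶜ := fun w hw ↦ by
    by_cases hwO : w ∈ O
    · exact Or.inl hwO
    · exact Or.inr fun hc ↦ hfr w hw (hO.frontier_eq ▸ ⟨hc, hwO⟩)
  obtain ⟨v, hvS, hvO⟩ := not_subset.mp hout
  obtain ⟨w, -, hwO, hw⟩ := hS O (closure O)ᶜ hO isClosed_closure.isOpen_compl hcover hin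
    ⟨v, hvS, (hcover hvS).resolve_left hvO⟩
  exact hw (subset_closure hwO)

theorem isPreconnected_compl_closedBall {r : ℝ} (hr : 0 ≤ r) :
    IsPreconnected (Metric.closedBall (0 : ℂ) r)ᶜ := by
  have hpolar : IsPreconnected ((fun p : ℝ × ℂ ↦ (p.1 : ℂ) * p.2) ''
      (Ioi r ×ˢ Metric.sphere (0 : ℂ) 1)) :=
    (isPreconnected_Ioi.prod (isPreconnected_sphere (by simp) 0 1)).image _ (by fun_prop)
  convert hpolar using 1
  ext x
  simp only [mem_compl_iff, Metric.mem_closedBall, dist_zero_right, not_le, mem_image, mem_prod,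
    mem_Ioi, mem_sphere_iff_norm, sub_zero, Prod.exists]
  constructor
  · intro hx
    have hx0 : ‖x‖ ≠ 0 := (hr.trans_lt hx).ne'
    refine ⟨‖x‖, x / ‖x‖, ⟨hx, by simp [hx0]⟩, mul_div_cancel₀ _ (by exact_mod_cast hx0)⟩
  · rintro ⟨a, b, ⟨ha, hb⟩, rfl⟩
    rw [norm_mul, hb, Complex.norm_of_nonneg (hr.trans ha.le), mul_one]
    exact ha

theorem not_isBounded_compl_closedBall (r : ℝ) :
    ¬ Bornology.IsBounded (Metric.closedBall (0 : ℂ) r)ᶜ := fun hb ↦ by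
  have := (Metric.isBounded_closedBall (x := (0 : ℂ)) (r := r)).union hb
  rw [union_compl_self] at this
  exact NormedSpace.unbounded_univ ℝ ℂ this

theorem eq_of_isPreconnected_of_int {E : Type*} [TopologicalSpace E] {S : Set E}
    (hS : IsPreconnected S) {g : E → ℝ} (hg : Continuous g) (hint : ∀ x ∈ S, ∃ n : ℤ, g x = n)
    {u v : E} (hu : u ∈ S) (hv : v ∈ S) : g u = g v := by
  have hdiscrete : IsDiscrete (range ((↑) : ℤ → ℝ)) :=
    Int.isClosedEmbedding_coe_real.isEmbedding.isDiscrete_range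
  exact hS.constant_of_mapsTo hdiscrete hg.continuousOn
    (fun x hx ↦ (hint x hx).imp fun _ h ↦ h.symm) hu hv

theorem mem_of_isUpperSet {S : Set ℝ} (hS : IsUpperSet S) {a b : ℝ} (hb : b ∈ S)
    (hdown : ∀ t ∈ S, a < t → ∃ s < t, s ∈ S)
    (hup : ∀ t ∉ S, a ≤ t → t < b → ∃ s > t, s ∉ S) : a ∈ S := by
  by_contra ha
  have hlb : a ∈ lowerBounds S := fun t ht ↦ le_of_not_gt fun hta ↦ ha (hS hta.le ht)
  have hle : a ≤ sInf S := le_csInf ⟨b, hb⟩ hlb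
  have hinf : sInf S ∉ S := fun hmem ↦ by
    obtain ⟨s, hs, hsS⟩ := hdown _ hmem (hle.lt_of_ne fun h ↦ ha (h ▸ hmem))
    exact (csInf_le ⟨a, hlb⟩ hsS).not_gt hs
  obtain ⟨s, hs, hsS⟩ := hup _ hinf hle ((csInf_le ⟨a, hlb⟩ hb).lt_of_ne fun h ↦ hinf (h ▸ hb))
  obtain ⟨t, htS, hts⟩ := exists_lt_of_csInf_lt ⟨b, hb⟩ hs
  exact hsS (hS hts.le htS)

end Connectedness

/-- The function `tanh (h / 2)` for a harmonic `h` on the plane with finitely many logarithmic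
poles, no critical points and limit `0` at infinity, described by the topological properties that
matter. The field `regular` is what the absence of critical points says about level sets: near a
point `x` that is not a pole, `{φ < φ x}` and `{φ > φ x}` are both connected and both accumulate
at every point of the level set. -/
structure IsRegularPotential (φ : ℂ → ℝ) : Prop where
  continuous : Continuous φ
  neg_one_le : ∀ x, -1 ≤ φ x
  le_one : ∀ x, φ x ≤ 1
  tendsto_zero : Tendsto φ (cocompact ℂ) (𝓝 0)
  finite_eq_neg_one : {x | φ x = -1}.Finite
  finite_eq_one : {x | φ x = 1}.Finite
  regular : ∀ x, -1 < φ x → φ x < 1 → ∀ U ∈ 𝓝 x, ∃ O ⊆ U, IsOpen O ∧ x ∈ O ∧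
    IsPreconnected (O ∩ {y | φ y < φ x}) ∧ IsPreconnected (O ∩ {y | φ x < φ y}) ∧
    ∀ y ∈ O, φ y = φ x →
      y ∈ closure (O ∩ {y | φ y < φ x}) ∧ y ∈ closure (O ∩ {y | φ x < φ y})

namespace IsRegularPotential

variable {φ : ℂ → ℝ} {t : ℝ} {x y z : ℂ}

theorem neg (h : IsRegularPotential φ) : IsRegularPotential (-φ) where
  continuous := h.continuous.neg
  neg_one_le x := neg_le_neg (h.le_one x)
  le_one x := neg_le.mp (h.neg_one_le x)
  tendsto_zero := by simpa [Pi.neg_def] using h.tendsto_zero.neg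
  finite_eq_neg_one := by simpa using h.finite_eq_one
  finite_eq_one := by simpa [neg_eq_iff_eq_neg] using h.finite_eq_neg_one
  regular x hlo hhi U hU := by
    simp only [Pi.neg_apply] at hlo hhi
    obtain ⟨O, hOU, hO, hxO, hbelow, habove, hcl⟩ :=
      h.regular x (by linarith) (by linarith) U hU
    refine ⟨O, hOU, hO, hxO, by simpa using habove, by simpa using hbelow, fun y hy hyx ↦ ?_⟩
    simpa using (hcl y hy (by simpa using hyx)).symm

theorem exists_nhd_subset_closure_cell (h : IsRegularPotential φ) (hlo : -1 < t) (hhi : t < 1)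
    (hxt : φ x = t) (hx : x ∈ closure (cell φ t y)) :
    ∃ O, IsOpen O ∧ x ∈ O ∧ (∀ z ∈ O, φ z < t → z ∈ cell φ t y) ∧
      ∀ z ∈ O, φ z ≤ t → z ∈ closure (cell φ t y) := by
  subst hxt
  obtain ⟨O, -, hO, hxO, hpre, -, hcl⟩ := h.regular x hlo hhi univ univ_mem
  obtain ⟨u, huO, hu⟩ := mem_closure_iff.mp hx O hO hxO
  have hsub : O ∩ {z | φ z < φ x} ⊆ cell φ (φ x) y := by
    rw [cell_eq_of_mem hu]
    exact subset_cell hpre ⟨huO, lt_of_mem_cell hu⟩ fun _ hz ↦ hz.2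
  refine ⟨O, hO, hxO, fun z hz hzx ↦ hsub ⟨hz, hzx⟩, fun z hz hzx ↦ ?_⟩
  rcases hzx.lt_or_eq with hlt | heq
  · exact subset_closure (hsub ⟨hz, hlt⟩)
  · exact closure_mono hsub (hcl z hz heq).1

theorem cell_eq_of_mem_closure (h : IsRegularPotential φ) (hlo : -1 < t) (hhi : t < 1)
    (hy : x ∈ closure (cell φ t y)) (hz : x ∈ closure (cell φ t z)) :
    cell φ t y = cell φ t z := by
  rcases (le_of_mem_closure_cell h.continuous hy).lt_or_eq with hxt | hxt
  · rw [cell_eq_of_mem (mem_cell_of_mem_closure hy hxt),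
      cell_eq_of_mem (mem_cell_of_mem_closure hz hxt)]
  · obtain ⟨O, hO, hxO, hsub, -⟩ := h.exists_nhd_subset_closure_cell hlo hhi hxt hy
    obtain ⟨u, huO, hu⟩ := mem_closure_iff.mp hz O hO hxO
    rw [cell_eq_of_mem hu, cell_eq_of_mem (hsub u huO (lt_of_mem_cell hu))]

theorem exists_mem_closure_cell (h : IsRegularPotential φ) (hlo : -1 < φ x) (hhi : φ x < 1) :
    ∃ y, φ y < φ x ∧ x ∈ closure (cell φ (φ x) y) := by
  obtain ⟨O, -, -, hxO, hpre, -, hcl⟩ := h.regular x hlo hhi univ univ_mem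
  have hx := (hcl x hxO rfl).1
  obtain ⟨u, hu⟩ := closure_nonempty_iff.mp ⟨x, hx⟩
  exact ⟨u, hu.2, closure_mono (subset_cell hpre hu fun _ hz ↦ hz.2) hx⟩

theorem exists_isOpen_frontier_gt (h : IsRegularPotential φ) (hlo : -1 < t) (hhi : t < 1)
    (hb : Bornology.IsBounded (cell φ t y)) :
    ∃ O, IsOpen O ∧ Bornology.IsBounded O ∧ cell φ t y ⊆ O ∧
      (∀ x ∈ O, φ x ≤ t → x ∈ closure (cell φ t y)) ∧ ∀ x ∈ frontier O, t < φ x := by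
  have hlocal : ∀ x ∈ closure (cell φ t y), ∃ O, IsOpen O ∧ x ∈ O ∧
      ∀ z ∈ O, φ z ≤ t → z ∈ closure (cell φ t y) := by
    intro x hx
    rcases (le_of_mem_closure_cell h.continuous hx).lt_or_eq with hlt | heq
    · exact ⟨cell φ t y, isOpen_cell h.continuous, mem_cell_of_mem_closure hx hlt,
        fun z hz _ ↦ subset_closure hz⟩
    · obtain ⟨O, hO, hxO, -, hsub⟩ := h.exists_nhd_subset_closure_cell hlo hhi heq hx
      exact ⟨O, hO, hxO, hsub⟩
  choose! N hNo hxN hN using hlocal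
  obtain ⟨V, hV, hKV, hVN, hVc⟩ := exists_open_between_and_isCompact_closure hb.isCompact_closure
    (isOpen_biUnion hNo) fun x hx ↦ mem_biUnion hx (hxN x hx)
  have hclosure : ∀ x ∈ closure V, φ x ≤ t → x ∈ closure (cell φ t y) := fun x hx hxt ↦ by
    obtain ⟨w, hw, hxw⟩ := mem_iUnion₂.mp (hVN hx)
    exact hN w hw x hxw hxt
  refine ⟨V, hV, hVc.isBounded.subset subset_closure, subset_closure.trans hKV,
    fun x hx ↦ hclosure x (subset_closure hx), fun x hx ↦ ?_⟩
  by_contra! hxt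
  rw [hV.frontier_eq] at hx
  exact hx.2 (hKV (hclosure x hx.1 hxt))

theorem exists_gt_cell_subset (h : IsRegularPotential φ) (hlo : -1 < t) (hhi : t < 1)
    (hy : φ y < t) (hb : Bornology.IsBounded (cell φ t y)) :
    ∃ s > t, Bornology.IsBounded (cell φ s y) ∧ ∀ x ∈ cell φ s y, φ x < t → x ∈ cell φ t y := by
  obtain ⟨O, hO, hOb, hsub, hcl, hfr⟩ := h.exists_isOpen_frontier_gt hlo hhi hb
  have hcompact : IsCompact (frontier O) :=
    hOb.isCompact_closure.of_isClosed_subset isClosed_frontier frontier_subset_closure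
  obtain ⟨s, hs, hsfr⟩ := hcompact.exists_forall_le' h.continuous.continuousOn hfr
  have hsO : cell φ s y ⊆ O := by
    by_contra hout
    obtain ⟨w, hw, hwO⟩ := exists_mem_frontier_of_isPreconnected isPreconnected_cell hO
      ⟨y, mem_cell_self (hy.trans hs), hsub (mem_cell_self hy)⟩ hout
    exact (hsfr w hwO).not_gt (lt_of_mem_cell hw)
  exact ⟨s, hs, hOb.subset hsO, fun x hx hxt ↦ mem_cell_of_mem_closure (hcl x (hsO hx) hxt.le) hxt⟩

theorem isCompact_sublevel (h : IsRegularPotential φ) (ht : t < 0) : IsCompact {x | φ x ≤ t} := by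
  obtain ⟨K, hK, hsub⟩ := mem_cocompact.mp (h.tendsto_zero.eventually (lt_mem_nhds ht))
  refine hK.of_isClosed_subset (isClosed_le h.continuous continuous_const) fun x hx ↦ ?_
  by_contra hxK
  exact (show φ x ≤ t from hx).not_gt (hsub hxK)

theorem isBounded_cell (h : IsRegularPotential φ) (ht : t < 0) :
    Bornology.IsBounded (cell φ t y) :=
  (h.isCompact_sublevel ht).isBounded.subset fun _ hw ↦ (lt_of_mem_cell hw).le

theorem exists_pole_mem_cell (h : IsRegularPotential φ) (hy : φ y < 0) :
    ∃ a ∈ cell φ 0 y, φ a = -1 := by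
  obtain ⟨m, hm, hmin⟩ := ((h.isCompact_sublevel hy).inter_left isClosed_closure).exists_isMinOn
    ⟨y, subset_closure (mem_cell_self hy), le_refl (φ y)⟩ h.continuous.continuousOn
  have hm0 : φ m < 0 := lt_of_le_of_lt hm.2 hy
  have hmcell : m ∈ cell φ 0 y := mem_cell_of_mem_closure hm.1 hm0
  refine ⟨m, hmcell, ?_⟩
  by_contra hne
  obtain ⟨O, hOU, -, hmO, -, -, hcl⟩ := h.regular m ((h.neg_one_le m).lt_of_ne' hne) (by linarith)
    _ ((isOpen_cell h.continuous).mem_nhds hmcell)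
  obtain ⟨u, huO, hum : φ u < φ m⟩ := closure_nonempty_iff.mp ⟨m, (hcl m hmO rfl).1⟩
  have hmu : φ m ≤ φ u := hmin ⟨subset_closure (hOU huO), (hum.trans_le hm.2).le⟩
  exact hmu.not_gt hum

theorem exists_isolating_ball (h : IsRegularPotential φ) :
    ∃ ε > 0, (∀ w ∈ Metric.ball y ε, φ w = -1 → w = y) ∧
      ∀ w ∈ Metric.sphere y ε, -1 < φ w := by
  have hnhds : ({x | φ x = -1} \ {y})ᶜ ∈ 𝓝 y :=
    (h.finite_eq_neg_one.sdiff).isClosed.isOpen_compl.mem_nhds (by simp)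
  obtain ⟨ε, hε, hsub⟩ := Metric.nhds_basis_closedBall.mem_iff.mp hnhds
  have hball : ∀ w ∈ Metric.closedBall y ε, φ w = -1 → w = y := fun w hw hw1 ↦ by
    by_contra hne
    exact hsub hw ⟨hw1, hne⟩
  refine ⟨ε, hε, fun w hw ↦ hball w (Metric.ball_subset_closedBall hw), fun w hw ↦ ?_⟩
  refine (h.neg_one_le w).lt_of_ne' fun hw1 ↦ Metric.ne_of_mem_sphere hw hε.ne' ?_
  exact hball w (Metric.sphere_subset_closedBall hw) hw1

theorem eq_of_mem_cell (h : IsRegularPotential φ) (hy : φ y = -1) (hz : φ z = -1)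
    (hzy : z ∈ cell φ 0 y) : z = y := by
  by_contra hne
  obtain ⟨ε, hε, hball, hsphere⟩ := h.exists_isolating_ball (y := y)
  obtain ⟨m, hm, hmsphere⟩ := (isCompact_sphere y ε).exists_forall_le'
    h.continuous.continuousOn hsphere
  have hsep : ∀ t ≤ m, z ∉ cell φ t y := fun t ht hzt ↦ by
    obtain ⟨w, hw, hwfr⟩ := exists_mem_frontier_of_isPreconnected isPreconnected_cell
      Metric.isOpen_ball ⟨y, mem_cell_self (base_lt_of_mem_cell hzt), Metric.mem_ball_self hε⟩
      fun hsub ↦ hne (hball z (hsub hzt) hz)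
    exact ((lt_of_mem_cell hw).trans_le ht).not_ge
      (hmsphere w (Metric.frontier_ball_subset_sphere hwfr))
  rcases lt_or_ge m 0 with hm0 | hm0
  · refine hsep m le_rfl (mem_of_isUpperSet (S := {t | z ∈ cell φ t y})
      (fun s t hst hs ↦ cell_mono hst hs) hzy
      (fun t ht _ ↦ exists_lt_mem_cell h.continuous ht) fun t ht hmt ht0 ↦ ?_)
    have ht1 : -1 < t := hm.trans_le hmt
    obtain ⟨s, hs, -, hcell⟩ := h.exists_gt_cell_subset ht1 (by linarith) (hy ▸ ht1)
      (h.isBounded_cell ht0)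
    exact ⟨s, hs, fun hzs ↦ ht (hcell z hzs (hz ▸ ht1))⟩
  · exact hsep 0 hm0 hzy

theorem eq_of_mem_closure_cell (h : IsRegularPotential φ) (hy : φ y = -1) (hz : φ z = -1)
    (hxy : x ∈ closure (cell φ 0 y)) (hxz : x ∈ closure (cell φ 0 z)) : y = z := by
  refine h.eq_of_mem_cell hz hy ?_
  rw [← h.cell_eq_of_mem_closure (by norm_num) one_pos hxy hxz]
  exact mem_cell_self (by linarith)

theorem exists_compl_closedBall_subset_cell (h : IsRegularPotential φ) (ht : 0 < t) :
    ∃ r, ∀ s ≥ t, ∀ x ∈ cell φ s y, r < ‖x‖ → (Metric.closedBall (0 : ℂ) r)ᶜ ⊆ cell φ s y := by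
  have hev : ∀ᶠ x in Bornology.cobounded ℂ, φ x < t :=
    Metric.cobounded_eq_cocompact (α := ℂ) ▸ h.tendsto_zero.eventually (gt_mem_nhds ht)
  obtain ⟨r, hr⟩ := (Metric.hasBasis_cobounded_compl_closedBall (0 : ℂ)).eventually_iff.mp hev
  refine ⟨max r 0, fun s hts x hx hrx ↦ ?_⟩
  rw [cell_eq_of_mem hx]
  refine subset_cell (isPreconnected_compl_closedBall (le_max_right r 0)) (by simpa using hrx)
    fun w hw ↦ (hr.2 ?_).trans_le hts
  exact fun hwr ↦ hw (Metric.closedBall_subset_closedBall (le_max_left r 0) hwr)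

theorem exists_lt_not_isBounded_cell (h : IsRegularPotential φ) (ht : 0 < t)
    (hunb : ¬ Bornology.IsBounded (cell φ t y)) :
    ∃ s < t, ¬ Bornology.IsBounded (cell φ s y) := by
  obtain ⟨r, hr⟩ := h.exists_compl_closedBall_subset_cell (y := y) (half_pos ht)
  obtain ⟨x, hx, hrx⟩ : ∃ x ∈ cell φ t y, r < ‖x‖ := by
    by_contra! hle
    exact hunb (Metric.isBounded_closedBall.subset
      fun x hx ↦ mem_closedBall_zero_iff.mpr (hle x hx))
  obtain ⟨s, hst, hxs⟩ := exists_lt_mem_cell h.continuous hx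
  refine ⟨max s (t / 2), max_lt hst (half_lt_self ht), fun hb ↦ ?_⟩
  exact not_isBounded_compl_closedBall r (hb.subset
    (hr _ (le_max_right _ _) x (cell_mono (le_max_left _ _) hxs) hrx))

theorem not_isBounded_cell_one (h : IsRegularPotential φ) (hy : φ y < 1) :
    ¬ Bornology.IsBounded (cell φ 1 y) := fun hb ↦ by
  have hconn : IsConnected ({x | φ x = 1}ᶜ) :=
    h.finite_eq_one.countable.isConnected_compl_of_one_lt_rank (by simp)
  have hsub : {x | φ x = 1}ᶜ ⊆ cell φ 1 y :=
    subset_cell hconn.isPreconnected hy.ne fun w hw ↦ (h.le_one w).lt_of_ne hw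
  have huniv := h.finite_eq_one.isBounded.union (hb.subset hsub)
  rw [union_compl_self] at huniv
  exact NormedSpace.unbounded_univ ℝ ℂ huniv

theorem not_isBounded_cell_zero (h : IsRegularPotential φ) (hy : φ y = -1) :
    ¬ Bornology.IsBounded (cell φ 0 y) := by
  refine mem_of_isUpperSet (S := {t | ¬ Bornology.IsBounded (cell φ t y)})
    (fun s t hst hs ht ↦ hs (ht.subset (cell_mono hst)))
    (h.not_isBounded_cell_one (by linarith))
    (fun t ht ht0 ↦ h.exists_lt_not_isBounded_cell ht0 ht) fun t ht ht0 ht1 ↦ ?_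
  obtain ⟨s, hs, hb, -⟩ := h.exists_gt_cell_subset (by linarith) ht1 (by linarith) (not_not.mp ht)
  exact ⟨s, hs, not_not.mpr hb⟩

theorem exists_pole_mem_closure_cell (h : IsRegularPotential φ) (hx : φ x = 0) :
    ∃ y, φ y = -1 ∧ x ∈ closure (cell φ 0 y) := by
  obtain ⟨y, hy, hxy⟩ := h.exists_mem_closure_cell (x := x) (by linarith) (by linarith)
  rw [hx] at hy hxy
  obtain ⟨a, ha, ha1⟩ := h.exists_pole_mem_cell hy
  exact ⟨a, ha1, by rwa [← cell_eq_of_mem ha]⟩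

variable {P : ℂ → Prop}

/-- The union of the closed sublevel cells, at level `0`, of the poles `y` of `φ` with `φ y = -1`
that satisfy `P`. -/
def closedCells (φ : ℂ → ℝ) (P : ℂ → Prop) : Set ℂ :=
  ⋃ y ∈ {y | φ y = -1 ∧ P y}, closure (cell φ 0 y)

theorem isClosed_closedCells (h : IsRegularPotential φ) : IsClosed (closedCells φ P) :=
  (h.finite_eq_neg_one.subset fun _ hy ↦ hy.1).isClosed_biUnion fun _ _ ↦ isClosed_closure

theorem closure_cell_subset_closedCells (hy : φ y = -1) (hP : P y) :
    closure (cell φ 0 y) ⊆ closedCells φ P :=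
  subset_biUnion_of_mem (u := fun y ↦ closure (cell φ 0 y))
    (show y ∈ {y | φ y = -1 ∧ P y} from ⟨hy, hP⟩)

theorem nonpos_of_mem_closedCells (h : IsRegularPotential φ) (hx : x ∈ closedCells φ P) :
    φ x ≤ 0 := by
  obtain ⟨y, -, hxy⟩ := mem_iUnion₂.mp hx
  exact le_of_mem_closure_cell h.continuous hxy

theorem mem_closedCells_iff (h : IsRegularPotential φ) (hy : φ y = -1)
    (hxy : x ∈ closure (cell φ 0 y)) : x ∈ closedCells φ P ↔ P y := by
  refine ⟨fun hx ↦ ?_, fun hP ↦ closure_cell_subset_closedCells hy hP hxy⟩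
  obtain ⟨z, ⟨hz, hPz⟩, hxz⟩ := mem_iUnion₂.mp hx
  rwa [h.eq_of_mem_closure_cell hy hz hxy hxz]

theorem closedCells_mem_nhds (h : IsRegularPotential φ) (hx : x ∈ closedCells φ P)
    (hx0 : φ x < 0) : closedCells φ P ∈ 𝓝 x := by
  obtain ⟨y, ⟨hy, hPy⟩, hxy⟩ := mem_iUnion₂.mp hx
  exact mem_of_superset
    ((isOpen_cell h.continuous).mem_nhds (mem_cell_of_mem_closure hxy hx0))
    (subset_closure.trans (closure_cell_subset_closedCells hy hPy))

theorem eventually_mem_closedCells (h : IsRegularPotential φ) (hx : x ∈ closedCells φ P)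
    (hx0 : φ x = 0) : ∀ᶠ w in 𝓝 x, φ w ≤ 0 → w ∈ closedCells φ P := by
  obtain ⟨y, ⟨hy, hPy⟩, hxy⟩ := mem_iUnion₂.mp hx
  obtain ⟨O, hO, hxO, -, hsub⟩ :=
    h.exists_nhd_subset_closure_cell (by norm_num) one_pos hx0 hxy
  filter_upwards [hO.mem_nhds hxO] with w hw hw0
  exact closure_cell_subset_closedCells hy hPy (hsub w hw hw0)

theorem mem_closedCells_neg_iff (h : IsRegularPotential φ)
    (hP : ∀ y z, φ y = -1 → φ z = 1 → CellsTouch φ y z → (P y ↔ P z)) (hx : φ x = 0) :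
    x ∈ closedCells (-φ) P ↔ x ∈ closedCells φ P := by
  obtain ⟨y, hy, hxy⟩ := h.exists_pole_mem_closure_cell hx
  obtain ⟨z, hz, hxz⟩ := h.neg.exists_pole_mem_closure_cell (x := x) (by simp [hx])
  rw [h.mem_closedCells_iff hy hxy, h.neg.mem_closedCells_iff hz hxz,
    hP y z hy (by simpa using hz) ⟨x, hx, hxy, hxz⟩]

theorem isOpen_union_closedCells (h : IsRegularPotential φ)
    (hP : ∀ y z, φ y = -1 → φ z = 1 → CellsTouch φ y z → (P y ↔ P z)) :
    IsOpen (closedCells φ P ∪ closedCells (-φ) P) := by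
  refine isOpen_iff_mem_nhds.mpr fun x hx ↦ ?_
  rcases lt_trichotomy (φ x) 0 with hx0 | hx0 | hx0
  · have hx' : x ∉ closedCells (-φ) P := fun hx' ↦
      (h.neg.nonpos_of_mem_closedCells hx').not_gt (neg_pos.mpr hx0)
    exact mem_of_superset (h.closedCells_mem_nhds (hx.resolve_right hx') hx0) subset_union_left
  · rw [mem_union, h.mem_closedCells_neg_iff hP hx0, or_self] at hx
    have hx' := (h.mem_closedCells_neg_iff hP hx0).mpr hx
    filter_upwards [h.eventually_mem_closedCells hx hx0,
      h.neg.eventually_mem_closedCells hx' (by simp [hx0])] with w hlow hhigh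
    rcases le_total (φ w) 0 with hw | hw
    exacts [Or.inl (hlow hw), Or.inr (hhigh (neg_nonpos.mpr hw))]
  · have hx' : x ∉ closedCells φ P := fun hx' ↦ (h.nonpos_of_mem_closedCells hx').not_gt hx0
    exact mem_of_superset
      (h.neg.closedCells_mem_nhds (hx.resolve_left hx') (neg_neg_iff_pos.mpr hx0))
      subset_union_right

theorem mem_union_closedCells_iff (h : IsRegularPotential φ) (hy : φ y = -1 ∨ φ y = 1) :
    y ∈ closedCells φ P ∪ closedCells (-φ) P ↔ P y := by
  have low : ∀ {φ : ℂ → ℝ}, IsRegularPotential φ → φ y = -1 →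
      (y ∈ closedCells φ P ∪ closedCells (-φ) P ↔ P y) := fun {φ} h hy ↦ by
    have hy' : y ∉ closedCells (-φ) P := fun hy' ↦
      (h.neg.nonpos_of_mem_closedCells hy').not_gt (by simp [hy])
    rw [mem_union, or_iff_left hy',
      h.mem_closedCells_iff hy (subset_closure (mem_cell_self (by linarith)))]
  rcases hy with hy | hy
  · exact low h hy
  · rw [union_comm]
    simpa using low h.neg (by simp [hy])

/-- The union of the closed cells of the poles with `P` is clopen, because the two cells on
either side of a zero of `φ` touch. -/
theorem forall_pole_of_cellsTouch_iff (h : IsRegularPotential φ)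
    (hP : ∀ y z, φ y = -1 → φ z = 1 → CellsTouch φ y z → (P y ↔ P z))
    (hex : ∃ y, (φ y = -1 ∨ φ y = 1) ∧ P y) (hz : φ z = -1 ∨ φ z = 1) : P z := by
  obtain ⟨y, hy, hPy⟩ := hex
  have huniv : closedCells φ P ∪ closedCells (-φ) P = univ :=
    IsClopen.eq_univ ⟨h.isClosed_closedCells.union h.neg.isClosed_closedCells,
      h.isOpen_union_closedCells hP⟩ ⟨y, (h.mem_union_closedCells_iff hy).mpr hPy⟩
  exact (h.mem_union_closedCells_iff hz).mp (huniv ▸ mem_univ z)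

end IsRegularPotential

theorem exists_int_of_coe_addCircle_eq_zero {r : ℝ} (hr : (r : AddCircle (1 : ℝ)) = 0) :
    ∃ n : ℤ, r = n := by
  obtain ⟨n, hn⟩ := (AddCircle.coe_eq_zero_iff 1).mp hr
  exact ⟨n, by rw [← hn]; simp⟩

/-- Lift to `ℝ` of the circle-valued map which winds once along any path that crosses `V` from
`A` to `B` and is constant outside `V`. -/
theorem exists_continuous_int_off {E : Type*} [TopologicalSpace E] [NormalSpace E]
    [SimplyConnectedSpace E] [LocallyPathConnectedSpace E] {V A B : Set E} (hV : IsOpen V)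
    (hA : IsClosed A) (hB : IsClosed B) (hAB : Disjoint A B) (hfr : frontier V ⊆ A ∪ B) :
    ∃ g ρ : C(E, ℝ), EqOn ρ 0 A ∧ EqOn ρ 1 B ∧ (∀ x ∉ V, ∃ n : ℤ, g x = n) ∧
      ∀ x ∈ closure V, ∃ n : ℤ, (g - ρ) x = n := by
  classical
  obtain ⟨ρ, hρA, hρB, -⟩ := exists_continuous_zero_one_of_isClosed hA hB hAB
  have hρfr : ∀ x ∈ frontier V, (ρ x : AddCircle (1 : ℝ)) = 0 := fun x hx ↦ by
    rcases hfr hx with hxA | hxB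
    · simp [hρA hxA]
    · simp [hρB hxB]
  let ψ : E → AddCircle (1 : ℝ) := V.piecewise (fun x ↦ ρ x) 0
  have hψ_in : ∀ x ∈ V, ψ x = ρ x := fun x hx ↦ piecewise_eq_of_mem _ _ _ hx
  have hψ_out : ∀ x ∉ V, ψ x = 0 := fun x hx ↦ piecewise_eq_of_notMem _ _ _ hx
  have hψ : Continuous ψ := Continuous.piecewise hρfr
    ((AddCircle.continuous_mk' 1).comp ρ.continuous) continuous_const
  obtain ⟨x₀⟩ : Nonempty E := PathConnectedSpace.nonempty
  obtain ⟨r₀, hr₀⟩ := QuotientAddGroup.mk_surjective (ψ x₀)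
  obtain ⟨g, ⟨-, hlift⟩, -⟩ :=
    (AddCircle.isCoveringMap_coe 1).existsUnique_continuousMap_lifts ⟨ψ, hψ⟩ x₀ r₀ hr₀
  have hg : ∀ x, ((g x : ℝ) : AddCircle (1 : ℝ)) = ψ x := congrFun hlift
  refine ⟨g, ρ, hρA, hρB, fun x hx ↦ exists_int_of_coe_addCircle_eq_zero ?_,
    fun x hx ↦ exists_int_of_coe_addCircle_eq_zero ?_⟩
  · rw [hg, hψ_out x hx]
  · rw [ContinuousMap.sub_apply, AddCircle.coe_sub, hg]
    by_cases hxV : x ∈ V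
    · rw [hψ_in x hxV, sub_self]
    · rw [hψ_out x hxV, hρfr x (hV.frontier_eq ▸ ⟨hx, hxV⟩), sub_self]

namespace IsRegularPotential

variable {φ : ℂ → ℝ} {a b x y z : ℂ}

theorem eq_zero_of_mem_frontier_cell (h : IsRegularPotential φ)
    (hx : x ∈ frontier (cell φ 0 y)) : φ x = 0 := by
  rw [(isOpen_cell h.continuous).frontier_eq] at hx
  by_contra hne
  exact hx.2 (mem_cell_of_mem_closure hx.1
    ((le_of_mem_closure_cell h.continuous hx.1).lt_of_ne hne))

theorem mem_frontier_cell (h : IsRegularPotential φ) (hx : x ∈ closure (cell φ 0 y))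
    (hx0 : φ x = 0) : x ∈ frontier (cell φ 0 y) := by
  rw [(isOpen_cell h.continuous).frontier_eq]
  exact ⟨hx, fun hmem ↦ (lt_of_mem_cell hmem).ne hx0⟩

theorem isClosed_diff_closure_cell (h : IsRegularPotential φ) {F : Set ℂ}
    (hF : IsClosed F) (hF0 : ∀ x ∈ F, φ x = 0) : IsClosed (F \ closure (cell φ 0 a)) := by
  refine isOpen_compl_iff.mp (isOpen_iff_mem_nhds.mpr fun x hx ↦ ?_)
  by_cases hxF : x ∈ F
  · have hxa : x ∈ closure (cell φ 0 a) := by_contra fun hxa ↦ hx ⟨hxF, hxa⟩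
    obtain ⟨O, hO, hxO, -, hsub⟩ :=
      h.exists_nhd_subset_closure_cell (by norm_num) one_pos (hF0 x hxF) hxa
    filter_upwards [hO.mem_nhds hxO] with w hw hwF
    exact hwF.2 (hsub w hw (hF0 w hwF.1).le)
  · filter_upwards [hF.isOpen_compl.mem_nhds hxF] with w hw hwF using hw hwF.1

theorem exists_continuous_cell_lift (h : IsRegularPotential φ) (a : ℂ) (hb : φ b = 1) :
    ∃ g ρ : C(ℂ, ℝ), EqOn ρ 0 (frontier (cell (-φ) 0 b) \ closure (cell φ 0 a)) ∧
      EqOn ρ 1 (frontier (cell (-φ) 0 b) ∩ closure (cell φ 0 a)) ∧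
      (∀ x ∉ cell (-φ) 0 b, ∃ n : ℤ, g x = n) ∧
      ∀ x ∈ closure (cell (-φ) 0 b), g x - ρ x = g b := by
  have hF0 : ∀ x ∈ frontier (cell (-φ) 0 b), φ x = 0 := fun x hx ↦ by
    simpa using h.neg.eq_zero_of_mem_frontier_cell hx
  obtain ⟨g, ρ, hρ0, hρ1, hoff, hon⟩ := exists_continuous_int_off
    (V := cell (-φ) 0 b) (A := insert b (frontier (cell (-φ) 0 b) \ closure (cell φ 0 a)))
    (B := frontier (cell (-φ) 0 b) ∩ closure (cell φ 0 a)) (isOpen_cell h.neg.continuous)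
    (isClosed_singleton.union (h.isClosed_diff_closure_cell isClosed_frontier hF0))
    (isClosed_frontier.inter isClosed_closure)
    (disjoint_left.mpr <| by
      rintro x (rfl | hx) hxB
      · linarith [hF0 _ hxB.1]
      · exact hx.2 hxB.2)
    (fun x hx ↦ by by_cases hxa : x ∈ closure (cell φ 0 a) <;> simp [hx, hxa])
  refine ⟨g, ρ, hρ0.mono (subset_insert _ _), hρ1, hoff, fun x hx ↦ ?_⟩
  have hconst := eq_of_isPreconnected_of_int isPreconnected_cell.closure (g - ρ).continuous hon hx
    (subset_closure (mem_cell_self (by simp [hb])))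
  simpa [hρ0 (mem_insert b _)] using hconst

/-- Pushing a path across the common boundary of the touching cells of `a` and `b` changes the
lift of `exists_continuous_cell_lift` by `1`; every other crossing leaves it unchanged. -/
theorem exists_separating_function (h : IsRegularPotential φ) (ha : φ a = -1) (hb : φ b = 1)
    (hab : CellsTouch φ a b) :
    ∃ γ : ℂ → ℝ, γ a ≠ γ b ∧ ∀ y z, φ y = -1 → φ z = 1 → CellsTouch φ y z →
      ¬ (y = a ∧ z = b) → γ y = γ z := by
  obtain ⟨g, ρ, hρ0, hρ1, hoff, hcell⟩ := h.exists_continuous_cell_lift a hb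
  have hlow : ∀ y, φ y = -1 → ∀ x ∈ closure (cell φ 0 y), g x = g y := fun y hy x hx ↦
    eq_of_isPreconnected_of_int isPreconnected_cell.closure g.continuous
      (fun w hw ↦ hoff w fun hwb ↦
        (le_of_mem_closure_cell h.continuous hw).not_gt (pos_of_mem_cell_neg hwb))
      hx (subset_closure (mem_cell_self (by linarith)))
  have hhigh : ∀ z, φ z = 1 → z ≠ b → ∀ x ∈ closure (cell (-φ) 0 z), g x = g z :=
    fun z hz hzb x hx ↦
    eq_of_isPreconnected_of_int isPreconnected_cell.closure g.continuous
      (fun w hw ↦ hoff w fun hwb ↦ hzb (h.neg.eq_of_mem_closure_cell (by simp [hz]) (by simp [hb])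
        hw (subset_closure hwb))) hx (subset_closure (mem_cell_self (by simp [hz])))
  refine ⟨g, fun hgab ↦ ?_, fun y z hy hz ⟨x, hx, hxy, hxz⟩ hne ↦ ?_⟩
  · obtain ⟨x, hx, hxa, hxb⟩ := hab
    have hρx : ρ x = 1 := hρ1 ⟨h.neg.mem_frontier_cell hxb (by simp [hx]), hxa⟩
    linarith [hlow a ha x hxa, hcell x hxb]
  · rcases eq_or_ne z b with rfl | hzb
    · have hxa : x ∉ closure (cell φ 0 a) := fun hxa ↦
        hne ⟨h.eq_of_mem_closure_cell hy ha hxy hxa, rfl⟩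
      have hρx : ρ x = 0 := hρ0 ⟨h.neg.mem_frontier_cell hxz (by simp [hx]), hxa⟩
      linarith [hlow y hy x hxy, hcell x hxz]
    · rw [← hlow y hy x hxy, ← hhigh z hz hzb x hxz]

end IsRegularPotential

/-! ### Residue configurations -/

section Residues

variable {ι : Type*} [Fintype ι]

open scoped Classical in
/-- The differential `L dx / ∏ k, (x - c k)`, where `L ≠ 0`, has residue `w k` at `c k` for each
`k`. This forces the points `c k` to be distinct and the weights `w k` to be nonzero. -/
structure HasResidues (c : ι → ℂ) (w : ι → ℝ) (L : ℂ) : Prop where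
  ne_zero : L ≠ 0
  weight_mul_prod : ∀ k, (w k : ℂ) * ∏ l ∈ Finset.univ.erase k, (c k - c l) = L

/-- The real weights `w` are the residues at the points `c` of a differential without zeros in the
finite plane and with simple poles exactly at these points. -/
def IsResidueConfig (c : ι → ℂ) (w : ι → ℝ) : Prop := ∃ L, HasResidues c w L

variable {c : ι → ℂ} {w : ι → ℝ} {L : ℂ}

namespace HasResidues

open scoped Classical in
theorem prod_ne_zero (h : HasResidues c w L) (k : ι) :
    ∏ l ∈ Finset.univ.erase k, (c k - c l) ≠ 0 :=
  right_ne_zero_of_mul (h.weight_mul_prod k ▸ h.ne_zero)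

theorem weight_ne_zero (h : HasResidues c w L) (k : ι) : w k ≠ 0 := fun hk ↦
  h.ne_zero (by rw [← h.weight_mul_prod k, hk, Complex.ofReal_zero, zero_mul])

theorem injective (h : HasResidues c w L) : Function.Injective c := by
  classical
  intro k l hkl
  by_contra hne
  exact h.prod_ne_zero k (Finset.prod_eq_zero (i := l) (by simp [Ne.symm hne]) (by simp [hkl]))

theorem neg (h : HasResidues c w L) : HasResidues c (-w) (-L) :=
  ⟨neg_ne_zero.mpr h.ne_zero, fun k ↦ by
    rw [Pi.neg_apply, Complex.ofReal_neg, neg_mul, h.weight_mul_prod k]⟩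

theorem sum_weight_mul_eval (h : HasResidues c w L) {P : ℂ[X]}
    (hP : P.degree < Fintype.card ι) :
    ∑ k, (w k : ℂ) * P.eval (c k) = L * P.coeff (Fintype.card ι - 1) := by
  classical
  rw [← Finset.card_univ, Lagrange.coeff_eq_sum (s := Finset.univ) h.injective.injOn
    (by simpa using hP), Finset.mul_sum]
  refine Finset.sum_congr rfl fun k _ ↦ ?_
  rw [← h.weight_mul_prod k, mul_assoc, mul_div_cancel₀ _ (h.prod_ne_zero k)]

theorem sum_weight_mul_pow (h : HasResidues c w L) {j : ℕ} (hj : j + 1 < Fintype.card ι) :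
    ∑ k, (w k : ℂ) * c k ^ j = 0 := by
  have hdeg : (X ^ j : ℂ[X]).degree < Fintype.card ι := by
    rw [degree_X_pow]
    exact_mod_cast (by omega : j < Fintype.card ι)
  have := h.sum_weight_mul_eval hdeg
  simpa [coeff_X_pow, show Fintype.card ι - 1 ≠ j by omega] using this

theorem sum_weight_mul_pow_top (h : HasResidues c w L) {j : ℕ} (hj : j + 1 = Fintype.card ι) :
    ∑ k, (w k : ℂ) * c k ^ j = L := by
  have hdeg : (X ^ j : ℂ[X]).degree < Fintype.card ι := by
    rw [degree_X_pow]
    exact_mod_cast (by omega : j < Fintype.card ι)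
  have := h.sum_weight_mul_eval hdeg
  simpa [coeff_X_pow, show Fintype.card ι - 1 = j by omega] using this

theorem sum_weight_eq_zero [Nontrivial ι] (h : HasResidues c w L) : ∑ k, w k = 0 := by
  have := h.sum_weight_mul_pow (j := 0) (by simpa using Fintype.one_lt_card)
  simp only [pow_zero, mul_one] at this
  exact_mod_cast this

open scoped Classical in
theorem sum_weight_mul_prod [Nonempty ι] (h : HasResidues c w L) (x : ℂ) :
    ∑ k, (w k : ℂ) * ∏ l ∈ Finset.univ.erase k, (x - c l) = L := by
  have hone := congrArg (fun P ↦ L * eval x P)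
    (Lagrange.sum_basis (s := Finset.univ) h.injective.injOn Finset.univ_nonempty)
  simp only [eval_one, mul_one, eval_finsetSum, Finset.mul_sum] at hone
  rw [← hone]
  refine Finset.sum_congr rfl fun k _ ↦ ?_
  have := h.prod_ne_zero k
  rw [← h.weight_mul_prod k, Lagrange.basis, eval_prod]
  simp only [Lagrange.basisDivisor, eval_mul, eval_C, eval_sub, eval_X, Finset.prod_mul_distrib,
    Finset.prod_inv_distrib]
  field_simp

theorem sum_weight_div [Nonempty ι] (h : HasResidues c w L) {x : ℂ} (hx : ∀ k, x ≠ c k) :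
    ∑ k, (w k : ℂ) / (x - c k) = L / ∏ k, (x - c k) := by
  classical
  have hne : ∀ k, x - c k ≠ 0 := fun k ↦ sub_ne_zero.mpr (hx k)
  rw [← h.sum_weight_mul_prod x, Finset.sum_div]
  refine Finset.sum_congr rfl fun k _ ↦ ?_
  have := hne k
  have : ∏ l ∈ Finset.univ.erase k, (x - c l) ≠ 0 := Finset.prod_ne_zero_iff.mpr fun l _ ↦ hne l
  rw [← Finset.mul_prod_erase Finset.univ (fun k ↦ x - c k) (Finset.mem_univ k)]
  field_simp

theorem sum_weight_div_ne_zero [Nonempty ι] (h : HasResidues c w L) {x : ℂ}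
    (hx : ∀ k, x ≠ c k) : ∑ k, (w k : ℂ) / (x - c k) ≠ 0 := by
  rw [h.sum_weight_div hx]
  exact div_ne_zero h.ne_zero (Finset.prod_ne_zero_iff.mpr fun k _ ↦ sub_ne_zero.mpr (hx k))

end HasResidues

namespace IsResidueConfig

theorem neg (h : IsResidueConfig c w) : IsResidueConfig c (-w) :=
  let ⟨_, hL⟩ := h
  ⟨_, hL.neg⟩

theorem injective (h : IsResidueConfig c w) : Function.Injective c :=
  let ⟨_, hL⟩ := h
  hL.injective

theorem weight_ne_zero (h : IsResidueConfig c w) (k : ι) : w k ≠ 0 :=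
  let ⟨_, hL⟩ := h
  hL.weight_ne_zero k

theorem sum_weight_eq_zero [Nontrivial ι] (h : IsResidueConfig c w) : ∑ k, w k = 0 :=
  let ⟨_, hL⟩ := h
  hL.sum_weight_eq_zero

end IsResidueConfig

theorem sum_mul_eval_eq_zero_of_moments
    (hmom : ∀ j, j + 1 < Fintype.card ι → ∑ k, (w k : ℂ) * c k ^ j = 0) {P : ℂ[X]}
    (hP : P.natDegree + 1 < Fintype.card ι) : ∑ k, (w k : ℂ) * P.eval (c k) = 0 := by
  simp only [eval_eq_sum_range, Finset.mul_sum]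
  rw [Finset.sum_comm]
  refine Finset.sum_eq_zero fun j hj ↦ ?_
  simp only [mul_left_comm _ (P.coeff j)]
  rw [← Finset.mul_sum, hmom j (by rw [Finset.mem_range] at hj; omega), mul_zero]

open scoped Classical in
theorem weight_mul_prod_eq_of_moments
    (hmom : ∀ j, j + 1 < Fintype.card ι → ∑ k, (w k : ℂ) * c k ^ j = 0) (k m : ι) :
    (w k : ℂ) * ∏ l ∈ Finset.univ.erase k, (c k - c l) =
      (w m : ℂ) * ∏ l ∈ Finset.univ.erase m, (c m - c l) := by
  rcases eq_or_ne k m with rfl | hkm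
  · rfl
  have hm : m ∈ Finset.univ.erase k := by simp [hkm.symm]
  have hk : k ∈ Finset.univ.erase m := by simp [hkm]
  set S := (Finset.univ.erase k).erase m with hS
  have hcard : S.card + 2 = Fintype.card ι := by
    rw [← Finset.card_univ, ← Finset.card_erase_add_one (Finset.mem_univ k),
      ← Finset.card_erase_add_one hm]
  -- the nodal polynomial of the other points only sees `c k` and `c m`
  have hsum := sum_mul_eval_eq_zero_of_moments hmom (P := ∏ l ∈ S, (X - C (c l))) (by
    rw [natDegree_prod_of_monic _ _ fun l _ ↦ monic_X_sub_C _]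
    simp only [natDegree_X_sub_C, Finset.sum_const, smul_eq_mul, mul_one]
    omega)
  have hvanish : ∀ l ∈ S, (w l : ℂ) * ∏ i ∈ S, (c l - c i) = 0 := fun l hl ↦ by
    rw [Finset.prod_eq_zero hl (sub_self _), mul_zero]
  simp only [eval_prod, eval_sub, eval_X, eval_C] at hsum
  rw [← Finset.add_sum_erase _ _ (Finset.mem_univ k), ← Finset.add_sum_erase _ _ hm,
    Finset.sum_eq_zero hvanish] at hsum
  rw [← Finset.mul_prod_erase _ _ hm, ← Finset.mul_prod_erase _ _ hk, ← hS,
    Finset.erase_right_comm, ← hS]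
  linear_combination (c k - c m) * hsum

theorem isResidueConfig_of_moments (hc : Function.Injective c) (hw : ∀ k, w k ≠ 0)
    (hmom : ∀ j, j + 1 < Fintype.card ι → ∑ k, (w k : ℂ) * c k ^ j = 0) :
    IsResidueConfig c w := by
  classical
  rcases isEmpty_or_nonempty ι with _ | ⟨⟨m⟩⟩
  · exact ⟨1, one_ne_zero, isEmptyElim⟩
  · refine ⟨(w m : ℂ) * ∏ l ∈ Finset.univ.erase m, (c m - c l), mul_ne_zero
      (by exact_mod_cast hw m) (Finset.prod_ne_zero_iff.mpr fun l hl ↦ sub_ne_zero.mpr fun heq ↦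
        Finset.ne_of_mem_erase hl (hc heq.symm)), fun k ↦ weight_mul_prod_eq_of_moments hmom k m⟩

end Residues

/-! ### The potential of a configuration -/

theorem strictMono_tanh : StrictMono Real.tanh := fun x y hxy ↦
  lt_of_not_ge fun h ↦ hxy.not_ge <| by
    simpa only [Real.artanh_tanh] using Real.strictMonoOn_artanh.monotoneOn
      ⟨Real.neg_one_lt_tanh y, Real.tanh_lt_one y⟩ ⟨Real.neg_one_lt_tanh x, Real.tanh_lt_one x⟩ h

theorem continuous_tanh : Continuous Real.tanh := by
  simp only [funext Real.tanh_eq_sinh_div_cosh]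
  exact Real.continuous_sinh.div Real.continuous_cosh fun x ↦ (Real.cosh_pos x).ne'

theorem tanh_half (r : ℝ) : Real.tanh (r / 2) = (Real.exp r - 1) / (Real.exp r + 1) := by
  have hsplit : Real.exp r = Real.exp (r / 2) * Real.exp (r / 2) := by
    rw [← Real.exp_add, add_halves]
  have := Real.exp_pos (r / 2)
  rw [Real.tanh_eq, Real.exp_neg, hsplit]
  field_simp

theorem eventually_cocompact_ne {ι : Type*} [Finite ι] (c : ι → ℂ) :
    ∀ᶠ x in cocompact ℂ, ∀ k, x ≠ c k := by
  filter_upwards [(finite_range c).isCompact.compl_mem_cocompact] with x hx k hk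
  exact hx ⟨k, hk.symm⟩

theorem eventually_nhds_ne {ι : Type*} [Finite ι] {c : ι → ℂ} {x : ℂ} (hx : ∀ k, x ≠ c k) :
    ∀ᶠ y in 𝓝 x, ∀ k, y ≠ c k :=
  eventually_all.mpr fun k ↦ eventually_ne_nhds (hx k)

section Potential

variable {ι : Type*} [Fintype ι]

/-- The product of `‖x - c k‖ ^ w k` over the positive weights. -/
noncomputable def posProd (c : ι → ℂ) (w : ι → ℝ) (x : ℂ) : ℝ := ∏ k, ‖x - c k‖ ^ max (w k) 0

/-- The harmonic function `∑ k, w k * log ‖x - c k‖`; the logarithm of `0` being `0`, its values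
at the points `c k` are meaningless. -/
noncomputable def logPotential (c : ι → ℂ) (w : ι → ℝ) (x : ℂ) : ℝ :=
  ∑ k, w k * Real.log ‖x - c k‖

/-- The continuous extension of `tanh (logPotential c w x / 2)` to the whole plane; it is `-1` at
the points of positive weight and `1` at those of negative weight. -/
noncomputable def potential (c : ι → ℂ) (w : ι → ℝ) (x : ℂ) : ℝ :=
  (posProd c w x - posProd c (-w) x) / (posProd c w x + posProd c (-w) x)

variable {c : ι → ℂ} {w : ι → ℝ} {L x : ℂ}

theorem posProd_nonneg : 0 ≤ posProd c w x :=
  Finset.prod_nonneg fun _ _ ↦ Real.rpow_nonneg (norm_nonneg _) _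

theorem posProd_pos (hx : ∀ k, x ≠ c k) : 0 < posProd c w x :=
  Finset.prod_pos fun k _ ↦ Real.rpow_pos_of_pos (norm_pos_iff.mpr (sub_ne_zero.mpr (hx k))) _

theorem posProd_eq_zero_iff : posProd c w x = 0 ↔ ∃ k, x = c k ∧ 0 < w k := by
  simp only [posProd, Finset.prod_eq_zero_iff, Finset.mem_univ, true_and,
    Real.rpow_eq_zero_iff_of_nonneg (norm_nonneg _), norm_eq_zero, sub_eq_zero, ne_eq,
    max_eq_right_iff, not_le]

theorem continuous_posProd : Continuous (posProd c w) :=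
  continuous_finsetProd _ fun k _ ↦
    (by fun_prop : Continuous fun x ↦ ‖x - c k‖).rpow_const fun _ ↦ Or.inr (le_max_right _ _)

theorem posProd_eq_exp_mul (hx : ∀ k, x ≠ c k) :
    posProd c w x = Real.exp (logPotential c w x) * posProd c (-w) x := by
  simp only [posProd, logPotential]
  rw [Real.exp_sum, ← Finset.prod_mul_distrib]
  refine Finset.prod_congr rfl fun k _ ↦ ?_
  have hpos : 0 < ‖x - c k‖ := norm_pos_iff.mpr (sub_ne_zero.mpr (hx k))
  have hsplit : w k + max (-w k) 0 = max (w k) 0 := by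
    rw [← max_add_add_left, add_neg_cancel, add_zero, max_comm]
  rw [mul_comm (w k), Real.exp_mul, Real.exp_log hpos, ← Real.rpow_add hpos, Pi.neg_apply, hsplit]

theorem potential_eq_tanh (hx : ∀ k, x ≠ c k) :
    potential c w x = Real.tanh (logPotential c w x / 2) := by
  have : 0 < posProd c (-w) x := posProd_pos hx
  have := Real.exp_pos (logPotential c w x)
  rw [tanh_half, potential, posProd_eq_exp_mul hx]
  field_simp

theorem potential_lt_potential_iff {y : ℂ} (hx : ∀ k, x ≠ c k) (hy : ∀ k, y ≠ c k) :
    potential c w x < potential c w y ↔ logPotential c w x < logPotential c w y := by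
  rw [potential_eq_tanh hx, potential_eq_tanh hy, strictMono_tanh.lt_iff_lt,
    div_lt_div_iff_of_pos_right two_pos]

theorem potential_neg : potential c (-w) = -potential c w := by
  ext x
  simp only [potential, neg_neg, Pi.neg_apply]
  rw [← neg_div, neg_sub, add_comm]

theorem posProd_add_posProd_neg_pos (hc : Function.Injective c) :
    0 < posProd c w x + posProd c (-w) x := by
  refine (add_nonneg posProd_nonneg posProd_nonneg).lt_of_ne' fun hsum ↦ ?_
  obtain ⟨hpos, hneg⟩ := (add_eq_zero_iff_of_nonneg posProd_nonneg posProd_nonneg).mp hsum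
  obtain ⟨k, rfl, hk⟩ := posProd_eq_zero_iff.mp hpos
  obtain ⟨l, hkl, hl⟩ := posProd_eq_zero_iff.mp hneg
  rw [← hc hkl, Pi.neg_apply] at hl
  linarith

theorem potential_of_pos (hc : Function.Injective c) {k : ι} (hk : 0 < w k) :
    potential c w (c k) = -1 := by
  have hpos := posProd_add_posProd_neg_pos (w := w) (x := c k) hc
  have hzero : posProd c w (c k) = 0 := posProd_eq_zero_iff.mpr ⟨k, rfl, hk⟩
  rw [hzero, zero_add] at hpos
  rw [potential, hzero, zero_sub, zero_add, neg_div, div_self hpos.ne']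

theorem potential_of_neg (hc : Function.Injective c) {k : ι} (hk : w k < 0) :
    potential c w (c k) = 1 := by
  have := potential_of_pos (w := -w) hc (neg_pos.mpr hk)
  rwa [potential_neg, Pi.neg_apply, neg_inj] at this

theorem potential_eq_neg_one (hc : Function.Injective c) (hw : ∀ k, w k ≠ 0)
    (h : potential c w x = -1) : ∃ k, x = c k ∧ 0 < w k := by
  by_cases! hx : ∀ k, x ≠ c k
  · rw [potential_eq_tanh hx] at h
    exact absurd h (Real.neg_one_lt_tanh _).ne'
  · obtain ⟨k, rfl⟩ := hx
    refine ⟨k, rfl, (lt_or_gt_of_ne (hw k)).resolve_left fun hk ↦ ?_⟩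
    norm_num [potential_of_neg hc hk] at h

theorem potential_eq_one (hc : Function.Injective c) (hw : ∀ k, w k ≠ 0)
    (h : potential c w x = 1) : ∃ k, x = c k ∧ w k < 0 := by
  simpa using potential_eq_neg_one (w := -w) hc (by simpa using hw) (by simp [potential_neg, h])

theorem continuous_potential (hc : Function.Injective c) : Continuous (potential c w) :=
  (continuous_posProd.sub continuous_posProd).div (continuous_posProd.add continuous_posProd)
    fun _ ↦ (posProd_add_posProd_neg_pos hc).ne'

theorem neg_one_le_potential (hc : Function.Injective c) : -1 ≤ potential c w x := by
  have : 0 ≤ posProd c w x := posProd_nonneg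
  rw [potential, le_div_iff₀ (posProd_add_posProd_neg_pos hc)]
  linarith

theorem potential_le_one (hc : Function.Injective c) : potential c w x ≤ 1 := by
  have := neg_one_le_potential (w := -w) (x := x) hc
  rw [potential_neg] at this
  exact neg_le_neg_iff.mp this

theorem logPotential_eq_sum_log_inv (hw : ∑ k, w k = 0) (hx : ∀ k, x ≠ c k) (hx0 : x ≠ 0) :
    logPotential c w x = ∑ k, w k * Real.log ‖1 - c k * x⁻¹‖ := by
  have hzero : ∑ k, w k * Real.log ‖x‖ = 0 := by rw [← Finset.sum_mul, hw, zero_mul]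
  rw [← sub_zero (logPotential c w x), ← hzero, logPotential, ← Finset.sum_sub_distrib]
  refine Finset.sum_congr rfl fun k _ ↦ ?_
  rw [← mul_sub, ← Real.log_div (norm_ne_zero_iff.mpr (sub_ne_zero.mpr (hx k)))
    (norm_ne_zero_iff.mpr hx0), ← norm_div, sub_div, div_self hx0, div_eq_mul_inv]

theorem tendsto_logPotential (hw : ∑ k, w k = 0) :
    Tendsto (logPotential c w) (cocompact ℂ) (𝓝 0) := by
  have hlim : Tendsto (fun x : ℂ ↦ ∑ k, w k * Real.log ‖1 - c k * x⁻¹‖) (cocompact ℂ)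
      (𝓝 (∑ k, w k * Real.log ‖1 - c k * 0‖)) := by
    rw [← Metric.cobounded_eq_cocompact]
    exact tendsto_finsetSum _ fun k _ ↦ Tendsto.const_mul _ <| Tendsto.log
      (tendsto_const_nhds.sub (tendsto_inv₀_cobounded.const_mul (c k))).norm (by simp)
  simp only [mul_zero, sub_zero, norm_one, Real.log_one, Finset.sum_const_zero] at hlim
  refine hlim.congr' ?_
  filter_upwards [eventually_cocompact_ne c,
    isCompact_singleton.compl_mem_cocompact] with x hx hx0
  exact (logPotential_eq_sum_log_inv hw hx hx0).symm

theorem tendsto_potential (hw : ∑ k, w k = 0) :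
    Tendsto (potential c w) (cocompact ℂ) (𝓝 0) := by
  have hlim : Tendsto (fun x ↦ Real.tanh (logPotential c w x / 2)) (cocompact ℂ) (𝓝 0) := by
    have := (continuous_tanh.tendsto _).comp ((tendsto_logPotential (c := c) hw).div_const 2)
    rwa [zero_div, Real.tanh_zero] at this
  refine hlim.congr' ?_
  filter_upwards [eventually_cocompact_ne c] with x hx using (potential_eq_tanh hx).symm

theorem exists_hasStrictDerivAt_re_eq_logPotential (c : ι → ℂ) (w : ι → ℝ)
    (hx : ∀ k, x ≠ c k) :
    ∃ F : ℂ → ℂ, HasStrictDerivAt F (∑ k, (w k : ℂ) / (x - c k)) x ∧ F x = 0 ∧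
      ∀ y, (∀ k, y ≠ c k) → (F y).re = logPotential c w y - logPotential c w x := by
  have hne : ∀ k, x - c k ≠ 0 := fun k ↦ sub_ne_zero.mpr (hx k)
  refine ⟨fun y ↦ ∑ k, (w k : ℂ) * Complex.log ((y - c k) / (x - c k)),
    HasStrictDerivAt.fun_sum fun k _ ↦ ?_, by simp [hne], fun y hy ↦ ?_⟩
  · have hlog := ((HasStrictDerivAt.div_const ((hasStrictDerivAt_id x).sub_const (c k))
      (x - c k)).clog (by simp [hne])).const_mul (w k : ℂ)
    simpa [hne, div_eq_mul_inv] using hlog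
  · simp only [Complex.re_sum, logPotential, ← Finset.sum_sub_distrib]
    refine Finset.sum_congr rfl fun k _ ↦ ?_
    rw [Complex.re_ofReal_mul, Complex.log_re, norm_div, Real.log_div
      (norm_ne_zero_iff.mpr (sub_ne_zero.mpr (hy k))) (norm_ne_zero_iff.mpr (hne k)), mul_sub]

theorem hasDerivAt_logPotential_comp {γ : ℝ → ℂ} {γ' : ℂ} {t : ℝ} (hγ : HasDerivAt γ γ' t)
    (hx : ∀ k, γ t ≠ c k) :
    HasDerivAt (fun s ↦ logPotential c w (γ s)) (γ' * ∑ k, (w k : ℂ) / (γ t - c k)).re t := by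
  obtain ⟨F, hF, -, hre⟩ := exists_hasStrictDerivAt_re_eq_logPotential c w hx
  have hderiv : HasDerivAt (fun s ↦ (F (γ s)).re) (γ' * ∑ k, (w k : ℂ) / (γ t - c k)).re t := by
    rw [mul_comm]
    exact Complex.reCLM.hasFDerivAt.comp_hasDerivAt t (hF.hasDerivAt.comp t hγ)
  refine (hderiv.add_const (logPotential c w (γ t))).congr_of_eventuallyEq ?_
  filter_upwards [hγ.continuousAt.eventually (eventually_nhds_ne hx)] with s hs
  rw [hre _ hs, sub_add_cancel]

/-- A chart in which the real part of `F` is a coordinate. -/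
theorem exists_isOpen_isPreconnected_re {F : ℂ → ℂ} {F' : ℂ} (hF : HasStrictDerivAt F F' x)
    (hF' : F' ≠ 0) (hFx : F x = 0) {U : Set ℂ} (hU : U ∈ 𝓝 x) :
    ∃ O ⊆ U, IsOpen O ∧ x ∈ O ∧ IsPreconnected (O ∩ {y | (F y).re < 0}) ∧
      IsPreconnected (O ∩ {y | 0 < (F y).re}) ∧ ∀ y ∈ O, (F y).re = 0 →
        y ∈ closure (O ∩ {y | (F y).re < 0}) ∧ y ∈ closure (O ∩ {y | 0 < (F y).re}) := by
  let e := HasStrictFDerivAt.toOpenPartialHomeomorph F (hF.hasStrictFDerivAt_equiv hF')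
  have hxe : x ∈ e.source := HasStrictFDerivAt.mem_toOpenPartialHomeomorph_source _
  have hx0 : (0 : ℂ) = e x := hFx.symm
  have hmem : e.target ∩ e.symm ⁻¹' U ∈ 𝓝 (0 : ℂ) := by
    rw [hx0]
    refine inter_mem (e.open_target.mem_nhds (e.map_source hxe))
      (e.continuousAt_symm (e.map_source hxe) ?_)
    rwa [e.left_inv hxe]
  obtain ⟨r, hr, hball⟩ := Metric.mem_nhds_iff.mp hmem
  have himage : ∀ H : Set ℂ, e.source ∩ e ⁻¹' Metric.ball 0 r ∩ F ⁻¹' H =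
      e.symm '' (Metric.ball 0 r ∩ H) := fun H ↦ by
    rw [e.symm_image_eq_source_inter_preimage fun z hz ↦ (hball hz.1).1, preimage_inter,
      inter_assoc]
    rfl
  have hconn : ∀ H : Set ℂ, Convex ℝ H →
      IsPreconnected (e.source ∩ e ⁻¹' Metric.ball 0 r ∩ F ⁻¹' H) := fun H hH ↦ by
    rw [himage]
    exact ((convex_ball _ _).inter hH).isPreconnected.image _
      (e.continuousOn_symm.mono fun z hz ↦ (hball hz.1).1)
  have hclosure : ∀ H : Set ℂ, ∀ y ∈ e.source ∩ e ⁻¹' Metric.ball 0 r, F y ∈ closure H →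
      y ∈ closure (e.source ∩ e ⁻¹' Metric.ball 0 r ∩ F ⁻¹' H) := fun H y hy hyH ↦ by
    rw [himage, ← e.left_inv hy.1]
    exact mem_closure_image (e.continuousAt_symm (hball hy.2).1)
      (Metric.isOpen_ball.inter_closure ⟨hy.2, hyH⟩)
  refine ⟨_, fun y hy ↦ ?_, e.isOpen_inter_preimage Metric.isOpen_ball, ⟨hxe, ?_⟩,
    hconn _ (convex_halfSpace_re_lt 0), hconn _ (convex_halfSpace_re_gt 0),
    fun y hy hy0 ↦ ⟨hclosure {z | z.re < 0} y hy ?_, hclosure {z | 0 < z.re} y hy ?_⟩⟩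
  · simpa [e.left_inv hy.1] using (hball hy.2).2
  · rw [mem_preimage, ← hx0]
    exact Metric.mem_ball_self hr
  · exact (Complex.closure_setOfPred_re_lt 0).symm ▸ hy0.le
  · exact (Complex.closure_setOfPred_lt_re 0).symm ▸ hy0.ge

theorem HasResidues.exists_isOpen_isPreconnected [Nonempty ι] (h : HasResidues c w L)
    (hx : ∀ k, x ≠ c k) {U : Set ℂ} (hU : U ∈ 𝓝 x) :
    ∃ O ⊆ U, IsOpen O ∧ x ∈ O ∧ IsPreconnected (O ∩ {y | potential c w y < potential c w x}) ∧
      IsPreconnected (O ∩ {y | potential c w x < potential c w y}) ∧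
      ∀ y ∈ O, potential c w y = potential c w x →
        y ∈ closure (O ∩ {y | potential c w y < potential c w x}) ∧
        y ∈ closure (O ∩ {y | potential c w x < potential c w y}) := by
  obtain ⟨F, hF, hFx, hre⟩ := exists_hasStrictDerivAt_re_eq_logPotential c w hx
  obtain ⟨O, hOU, hO, hxO, hlow, hhigh, hcl⟩ := exists_isOpen_isPreconnected_re hF
    (h.sum_weight_div_ne_zero hx) hFx (inter_mem hU (eventually_nhds_ne hx))
  have hlt : ∀ y ∈ O, ((F y).re < 0 ↔ potential c w y < potential c w x) := fun y hy ↦ by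
    rw [potential_lt_potential_iff (hOU hy).2 hx, hre y (hOU hy).2, sub_neg]
  have hgt : ∀ y ∈ O, (0 < (F y).re ↔ potential c w x < potential c w y) := fun y hy ↦ by
    rw [potential_lt_potential_iff hx (hOU hy).2, hre y (hOU hy).2, sub_pos]
  have hlow_eq : O ∩ {y | (F y).re < 0} = O ∩ {y | potential c w y < potential c w x} :=
    ext fun y ↦ and_congr_right (hlt y)
  have hhigh_eq : O ∩ {y | 0 < (F y).re} = O ∩ {y | potential c w x < potential c w y} :=
    ext fun y ↦ and_congr_right (hgt y)
  rw [hlow_eq] at hlow hcl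
  rw [hhigh_eq] at hhigh hcl
  refine ⟨O, fun y hy ↦ (hOU hy).1, hO, hxO, hlow, hhigh, fun y hy hyx ↦ hcl y hy ?_⟩
  exact le_antisymm (not_lt.mp ((hgt y hy).not.mpr hyx.not_gt))
    (not_lt.mp ((hlt y hy).not.mpr hyx.not_lt))

theorem HasResidues.isRegularPotential [Nontrivial ι] (h : HasResidues c w L) :
    IsRegularPotential (potential c w) where
  continuous := continuous_potential h.injective
  neg_one_le _ := neg_one_le_potential h.injective
  le_one _ := potential_le_one h.injective
  tendsto_zero := tendsto_potential h.sum_weight_eq_zero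
  finite_eq_neg_one := (finite_range c).subset fun _ hx ↦
    let ⟨k, hk, _⟩ := potential_eq_neg_one h.injective h.weight_ne_zero hx
    ⟨k, hk.symm⟩
  finite_eq_one := (finite_range c).subset fun _ hx ↦
    let ⟨k, hk, _⟩ := potential_eq_one h.injective h.weight_ne_zero hx
    ⟨k, hk.symm⟩
  regular x hlow hhigh _ hU := by
    refine h.exists_isOpen_isPreconnected (fun k hk ↦ ?_) hU
    subst hk
    rcases lt_or_gt_of_ne (h.weight_ne_zero k) with hk | hk
    · exact hhigh.ne (potential_of_neg h.injective hk)
    · exact hlow.ne' (potential_of_pos h.injective hk)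

end Potential

/-! ### The graph of touching cells -/

theorem eq_of_reachable {V α : Type*} {G : SimpleGraph V} {γ : V → α} {k l : V}
    (h : ∀ k l, G.Adj k l → γ k = γ l) (hr : G.Reachable k l) : γ k = γ l := by
  obtain ⟨p⟩ := hr
  induction p with
  | nil => rfl
  | cons hadj _ ih => exact (h _ _ hadj).trans ih

section Paths

variable {E : Type*} [TopologicalSpace E] {φ : E → ℝ} {γ : ℝ → E} {y z : E} {r s t : ℝ}

theorem mem_closure_cell_of_continuousOn {A : Set ℝ} (hA : IsPreconnected A)
    (hγ : ContinuousOn γ (insert t A)) (ht : t ∈ closure A) (hs : s ∈ A) (hy : γ s ∈ cell φ r y)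
    (hlt : ∀ x ∈ A, φ (γ x) < r) : γ t ∈ closure (cell φ r y) := by
  have hsub : γ '' A ⊆ cell φ r y := by
    rw [cell_eq_of_mem hy]
    exact subset_cell (hA.image _ (hγ.mono (subset_insert _ _))) (mem_image_of_mem _ hs)
      (forall_mem_image.mpr hlt)
  exact closure_mono hsub
    (((hγ t (mem_insert _ _)).mono (subset_insert _ _)).mem_closure_image ht)

theorem cellsTouch_of_strictMonoOn (hst : s < t) (hφ : Continuous φ)
    (hγ : ContinuousOn γ (Icc s t)) (hmono : StrictMonoOn (φ ∘ γ) (Icc s t))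
    (hy : γ s ∈ cell φ 0 y) (hz : γ t ∈ cell (-φ) 0 z) : CellsTouch φ y z := by
  obtain ⟨u, hu, hu0 : φ (γ u) = 0⟩ := intermediate_value_Ioo hst.le (hφ.comp_continuousOn hγ)
    ⟨lt_of_mem_cell (φ := φ) hy, pos_of_mem_cell_neg (φ := φ) hz⟩
  have huI : u ∈ Icc s t := Ioo_subset_Icc_self hu
  refine ⟨γ u, hu0, ?_, ?_⟩
  · have hsub : Ico s u ⊆ Icc s t := fun x hx ↦ ⟨hx.1, hx.2.le.trans hu.2.le⟩
    refine mem_closure_cell_of_continuousOn isPreconnected_Ico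
      (hγ.mono (insert_subset huI hsub)) ?_ (left_mem_Ico.mpr hu.1) hy fun x hx ↦ ?_
    · rw [closure_Ico hu.1.ne]
      exact right_mem_Icc.mpr hu.1.le
    · exact (hmono (hsub hx) huI hx.2).trans_eq hu0
  · have hsub : Ioc u t ⊆ Icc s t := fun x hx ↦ ⟨hu.1.le.trans hx.1.le, hx.2⟩
    refine mem_closure_cell_of_continuousOn isPreconnected_Ioc
      (hγ.mono (insert_subset huI hsub)) ?_ (right_mem_Ioc.mpr hu.2) hz fun x hx ↦ ?_
    · rw [closure_Ioc hu.2.ne]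
      exact left_mem_Icc.mpr hu.2.le
    · exact neg_lt_zero.mpr (hu0.symm.trans_lt (hmono huI (hsub hx) hx.1))

theorem image_cell_comp {F : Type*} [TopologicalSpace F] (e : F ≃ₜ E) {y : F}
    (hy : φ (e y) < r) : e '' cell (φ ∘ e) r y = cell φ r (e y) := by
  rw [cell, cell, e.image_connectedComponentIn (s := {x | (φ ∘ e) x < r}) hy]
  congr 1
  exact e.image_preimage {x | φ x < r}

theorem CellsTouch.of_comp {F : Type*} [TopologicalSpace F] (e : F ≃ₜ E) {y z : F}
    (h : CellsTouch (φ ∘ e) y z) (hy : φ (e y) < 0) (hz : 0 < φ (e z)) :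
    CellsTouch φ (e y) (e z) := by
  obtain ⟨x, hx, hxy, hxz⟩ := h
  refine ⟨e x, hx, ?_, ?_⟩
  · rw [← image_cell_comp e hy, ← e.image_closure]
    exact mem_image_of_mem e hxy
  · rw [← image_cell_comp e (φ := -φ) (neg_lt_zero.mpr hz), ← e.image_closure]
    exact mem_image_of_mem e hxz

end Paths

section TouchGraph

variable {ι : Type*} [Fintype ι]

/-- The graph on the points of a configuration in which a point of positive weight and a point of
negative weight are adjacent when the cells of the potential around them touch along its zero
level. -/
def touchGraph (c : ι → ℂ) (w : ι → ℝ) : SimpleGraph ι where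
  Adj k l := (0 < w k ∧ w l < 0 ∧ CellsTouch (potential c w) (c k) (c l)) ∨
    (0 < w l ∧ w k < 0 ∧ CellsTouch (potential c w) (c l) (c k))
  symm := ⟨fun _ _ ↦ Or.symm⟩
  loopless := ⟨fun _ h ↦ h.elim (fun h ↦ h.1.not_gt h.2.1) fun h ↦ h.1.not_gt h.2.1⟩

variable {c : ι → ℂ} {w : ι → ℝ} {L : ℂ}

theorem touchGraph_neg : touchGraph c (-w) = touchGraph c w := by
  have hswap : ∀ k l, CellsTouch (potential c (-w)) (c k) (c l) ↔
      CellsTouch (potential c w) (c l) (c k) := fun k l ↦ by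
    rw [potential_neg]
    exact ⟨fun h ↦ neg_neg (potential c w) ▸ h.neg, CellsTouch.neg⟩
  ext k l
  simp only [touchGraph, Pi.neg_apply, hswap, Left.neg_pos_iff, Left.neg_neg_iff]
  tauto

namespace HasResidues

theorem potential_eq_neg_one_or_one (h : HasResidues c w L) (k : ι) :
    potential c w (c k) = -1 ∨ potential c w (c k) = 1 :=
  (h.weight_ne_zero k).symm.lt_or_gt.imp (potential_of_pos h.injective)
    (potential_of_neg h.injective)

theorem connected_touchGraph [Nontrivial ι] (h : HasResidues c w L) :
    (touchGraph c w).Connected := by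
  rw [SimpleGraph.connected_iff_exists_forall_reachable]
  obtain ⟨m⟩ : Nonempty ι := inferInstance
  refine ⟨m, fun k ↦ ?_⟩
  have hstep : ∀ y z, potential c w y = -1 → potential c w z = 1 →
      CellsTouch (potential c w) y z →
      ((∃ k, c k = y ∧ (touchGraph c w).Reachable m k) ↔
        ∃ k, c k = z ∧ (touchGraph c w).Reachable m k) := by
    intro y z hy hz hyz
    obtain ⟨k, rfl, hk⟩ := potential_eq_neg_one h.injective h.weight_ne_zero hy
    obtain ⟨l, rfl, hl⟩ := potential_eq_one h.injective h.weight_ne_zero hz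
    have hadj : (touchGraph c w).Adj k l := Or.inl ⟨hk, hl, hyz⟩
    simp only [h.injective.eq_iff, exists_eq_left]
    exact ⟨fun hr ↦ hr.trans hadj.reachable, fun hr ↦ hr.trans hadj.symm.reachable⟩
  obtain ⟨l, hl, hr⟩ := h.isRegularPotential.forall_pole_of_cellsTouch_iff hstep
    ⟨c m, h.potential_eq_neg_one_or_one m, m, rfl, .rfl⟩ (h.potential_eq_neg_one_or_one k)
  rwa [h.injective hl] at hr

theorem isBridge_of_cellsTouch [Nontrivial ι] (h : HasResidues c w L) {a b : ι} (ha : 0 < w a)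
    (hb : w b < 0) (hab : CellsTouch (potential c w) (c a) (c b)) :
    (touchGraph c w).IsBridge s(a, b) := by
  rw [SimpleGraph.isBridge_iff]
  intro hr
  obtain ⟨γ, hne, hγ⟩ := h.isRegularPotential.exists_separating_function
    (potential_of_pos h.injective ha) (potential_of_neg h.injective hb) hab
  refine hne (eq_of_reachable (γ := γ ∘ c) (fun k l hkl ↦ ?_) hr)
  rw [SimpleGraph.deleteEdges_adj, mem_singleton_iff, Sym2.eq_iff, not_or] at hkl
  obtain ⟨⟨hk, hl, hkl⟩ | ⟨hl, hk, hkl⟩, hne₁, hne₂⟩ := hkl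
  · exact hγ _ _ (potential_of_pos h.injective hk) (potential_of_neg h.injective hl) hkl
      fun heq ↦ hne₁ ⟨h.injective heq.1, h.injective heq.2⟩
  · exact (hγ _ _ (potential_of_pos h.injective hl) (potential_of_neg h.injective hk) hkl
      fun heq ↦ hne₂ ⟨h.injective heq.2, h.injective heq.1⟩).symm

theorem isTree_touchGraph [Nontrivial ι] (h : HasResidues c w L) : (touchGraph c w).IsTree := by
  refine ⟨h.connected_touchGraph, SimpleGraph.isAcyclic_iff_forall_adj_isBridge.mpr ?_⟩
  rintro a b (⟨ha, hb, hab⟩ | ⟨hb, ha, hab⟩)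
  · exact h.isBridge_of_cellsTouch ha hb hab
  · exact Sym2.eq_swap ▸ h.isBridge_of_cellsTouch hb ha hab

theorem eq_touchGraph_of_le [Nontrivial ι] (h : HasResidues c w L) {T : SimpleGraph ι}
    (hT : T.Connected) (hle : T ≤ touchGraph c w) : T = touchGraph c w :=
  (SimpleGraph.isTree_iff_minimal_connected.mp h.isTree_touchGraph).eq_of_le hT hle

end HasResidues

theorem posProd_affine (a b x : ℂ) :
    posProd (fun k ↦ a * c k + b) w (a * x + b) = (∏ k, ‖a‖ ^ max (w k) 0) * posProd c w x := by
  rw [posProd, posProd, ← Finset.prod_mul_distrib]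
  refine Finset.prod_congr rfl fun k _ ↦ ?_
  rw [← Real.mul_rpow (norm_nonneg _) (norm_nonneg _), ← norm_mul]
  congr 2
  ring

theorem potential_affine (hw : ∑ k, w k = 0) {a : ℂ} (ha : a ≠ 0) (b x : ℂ) :
    potential (fun k ↦ a * c k + b) w (a * x + b) = potential c w x := by
  have hnorm : 0 < ‖a‖ := norm_pos_iff.mpr ha
  have hsum : ∑ k, max (w k) 0 = ∑ k, max ((-w) k) 0 := by
    simp only [← sub_eq_zero, ← Finset.sum_sub_distrib, Pi.neg_apply,
      max_zero_sub_max_neg_zero_eq_self, hw]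
  rw [potential, potential, posProd_affine, posProd_affine, ← Real.rpow_sum_of_pos hnorm,
    ← Real.rpow_sum_of_pos hnorm, hsum, ← mul_sub, ← mul_add,
    mul_div_mul_left _ _ (Real.rpow_pos_of_pos hnorm _).ne']

theorem HasResidues.affine (h : HasResidues c w L) {a : ℂ} (ha : a ≠ 0) (b : ℂ) :
    HasResidues (fun k ↦ a * c k + b) w (a ^ (Fintype.card ι - 1) * L) := by
  classical
  refine ⟨mul_ne_zero (pow_ne_zero _ ha) h.ne_zero, fun k ↦ ?_⟩
  simp only [← h.weight_mul_prod k, add_sub_add_right_eq_sub, ← mul_sub, Finset.prod_mul_distrib,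
    Finset.prod_const, Finset.card_erase_of_mem (Finset.mem_univ k), Finset.card_univ]
  ring

theorem HasResidues.touchGraph_affine [Nontrivial ι] (h : HasResidues c w L) {a : ℂ} (ha : a ≠ 0)
    (b : ℂ) : touchGraph (fun k ↦ a * c k + b) w = touchGraph c w := by
  have hpot := potential_affine (c := c) h.sum_weight_eq_zero ha b
  let e : ℂ ≃ₜ ℂ := (Homeomorph.mulLeft₀ a ha).trans (Homeomorph.addRight b)
  have hcomp : potential (fun k ↦ a * c k + b) w ∘ e = potential c w := funext hpot
  have htouch : ∀ k l, 0 < w k → w l < 0 → CellsTouch (potential c w) (c k) (c l) →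
      CellsTouch (potential (fun k ↦ a * c k + b) w) (a * c k + b) (a * c l + b) :=
    fun k l hk hl hkl ↦ CellsTouch.of_comp e (hcomp ▸ hkl)
      (((hpot _).trans (potential_of_pos h.injective hk)).trans_lt (by norm_num))
      (one_pos.trans_eq ((hpot _).trans (potential_of_neg h.injective hl)).symm)
  refine ((h.affine ha b).eq_touchGraph_of_le h.connected_touchGraph ?_).symm
  rintro k l (⟨hk, hl, hkl⟩ | ⟨hl, hk, hkl⟩)
  · exact Or.inl ⟨hk, hl, htouch k l hk hl hkl⟩
  · exact Or.inr ⟨hl, hk, htouch l k hl hk hkl⟩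

end TouchGraph

/-! ### Limits of configurations -/

theorem tendsto_sub_cobounded {β E : Type*} [SeminormedAddCommGroup E]
    {l : Filter β} {f g : β → E} {x : E} (hf : Tendsto f l (𝓝 x))
    (hg : Tendsto g l (Bornology.cobounded E)) :
    Tendsto (fun n ↦ f n - g n) l (Bornology.cobounded E) := by
  rw [← tendsto_norm_atTop_iff_cobounded] at hg ⊢
  refine tendsto_atTop_mono (fun n ↦ ?_) (hg.atTop_add hf.norm.neg)
  rw [norm_sub_rev]
  exact (sub_eq_add_neg _ _).symm.trans_le (norm_sub_norm_le _ _)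

theorem eventually_forall_mem_of_isCompact {α β : Type*} [TopologicalSpace α] {l : Filter β}
    {K : Set α} (hK : IsCompact K) {P : β → α → Prop}
    (h : ∀ x ∈ K, ∀ᶠ p : β × α in l ×ˢ 𝓝 x, P p.1 p.2) : ∀ᶠ n in l, ∀ x ∈ K, P n x := by
  obtain ⟨s, hs, t, ht, hst⟩ := mem_prod_iff.mp
    (hK.mem_prod_nhdsSet_of_forall (l := l) (s := {p : β × α | P p.1 p.2}) h)
  filter_upwards [hs] with n hn x hx
  exact hst (mk_mem_prod hn (subset_of_mem_nhdsSet ht hx))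

theorem exists_mem_norm_eq {S : Set ℂ} (hS : IsPreconnected S) (hb : ¬ Bornology.IsBounded S)
    {x : ℂ} (hx : x ∈ S) {r : ℝ} (hr : ‖x‖ < r) : ∃ y ∈ S, ‖y‖ = r := by
  obtain ⟨y, hy, hfr⟩ := exists_mem_frontier_of_isPreconnected hS (O := Metric.ball 0 r)
    Metric.isOpen_ball ⟨x, hx, by simpa using hr⟩ fun h ↦ hb (Metric.isBounded_ball.subset h)
  exact ⟨y, hy, by simpa using Metric.frontier_ball_subset_sphere hfr⟩

section FarPart

variable {ι κ : Type*} [Fintype ι] [Fintype κ] {e : κ → ι} {u : ι → ℂ} {w : ι → ℝ}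

open scoped Classical in
/-- The indices outside the range of `e`. -/
noncomputable def farIndices (e : κ → ι) : Finset ι := (Finset.univ.image e)ᶜ

theorem mem_farIndices {i : ι} : i ∈ farIndices e ↔ i ∉ range e := by simp [farIndices]

@[to_additive]
theorem prod_eq_prod_comp_mul_prod_farIndices {M : Type*} [CommMonoid M]
    (he : Function.Injective e) (f : ι → M) :
    ∏ i, f i = (∏ k, f (e k)) * ∏ i ∈ farIndices e, f i := by
  classical
  rw [farIndices, ← Finset.prod_mul_prod_compl (Finset.univ.image e), Finset.prod_image he.injOn]

/-- The contribution to `posProd` of the points away from the range of `e`, seen from the origin. -/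
noncomputable def farFactor (e : κ → ι) (u : ι → ℂ) (w : ι → ℝ) : ℝ :=
  ∏ i ∈ farIndices e, ‖u i‖ ^ max (w i) 0

/-- The quotient of `posProd` by `farFactor`, which has a limit when the points away from the range
of `e` go to infinity. -/
noncomputable def nearFactor (e : κ → ι) (u : ι → ℂ) (w : ι → ℝ) (x : ℂ) : ℝ :=
  posProd (u ∘ e) (w ∘ e) x * ∏ i ∈ farIndices e, ‖1 - x / u i‖ ^ max (w i) 0

theorem posProd_eq_farFactor_mul_nearFactor (he : Function.Injective e)
    (hu : ∀ i ∈ farIndices e, u i ≠ 0) (x : ℂ) :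
    posProd u w x = farFactor e u w * nearFactor e u w x := by
  rw [posProd, prod_eq_prod_comp_mul_prod_farIndices he, nearFactor, farFactor, posProd,
    mul_left_comm, ← Finset.prod_mul_distrib]
  congr 1
  refine Finset.prod_congr rfl fun i hi ↦ ?_
  rw [← Real.mul_rpow (norm_nonneg _) (norm_nonneg _), ← norm_mul, norm_sub_rev, mul_one_sub,
    mul_div_cancel₀ _ (hu i hi)]

theorem farFactor_pos (hu : ∀ i ∈ farIndices e, u i ≠ 0) : 0 < farFactor e u w :=
  Finset.prod_pos fun i hi ↦ Real.rpow_pos_of_pos (norm_pos_iff.mpr (hu i hi)) _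

theorem nearFactor_nonneg {x : ℂ} : 0 ≤ nearFactor e u w x :=
  mul_nonneg posProd_nonneg (Finset.prod_nonneg fun _ _ ↦ Real.rpow_nonneg (norm_nonneg _) _)

end FarPart

section Configurations

variable {ι : Type*} [Fintype ι] {c : ι → ℂ} {w : ι → ℝ} {L : ℂ}

theorem potential_neg_iff_posProd_lt (hc : Function.Injective c) {x : ℂ} :
    potential c w x < 0 ↔ posProd c w x < posProd c (-w) x := by
  rw [potential, div_lt_iff₀ (posProd_add_posProd_neg_pos hc), zero_mul, sub_neg]

theorem eventually_posProd_neg_lt (hc : Function.Injective c) (hw : ∑ k, w k = 0) {δ : ℝ}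
    (hδ : 1 < δ) : ∀ᶠ x in cocompact ℂ, posProd c (-w) x < δ * posProd c w x := by
  have hε : 0 < (δ - 1) / (δ + 1) := div_pos (by linarith) (by linarith)
  filter_upwards [(tendsto_potential (c := c) hw).eventually (lt_mem_nhds (neg_lt_zero.mpr hε))]
    with x hx
  rw [potential, ← neg_div, div_lt_div_iff₀ (by linarith) (posProd_add_posProd_neg_pos hc)] at hx
  linarith

theorem HasResidues.exists_weight_pos [Nontrivial ι] (h : HasResidues c w L) : ∃ k, 0 < w k := by
  by_contra! hle
  have := Finset.sum_lt_sum_of_nonempty Finset.univ_nonempty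
    fun k _ ↦ (hle k).lt_of_ne (h.weight_ne_zero k)
  simp [h.sum_weight_eq_zero] at this

theorem HasResidues.ne_of_potential_eq_zero (h : HasResidues c w L) {x : ℂ}
    (hx : potential c w x = 0) (k : ι) : x ≠ c k := by
  rintro rfl
  rcases h.potential_eq_neg_one_or_one k with hk | hk <;> rw [hk] at hx <;> norm_num at hx

theorem strictMonoOn_potential_line {x v : ℂ} {s t : ℝ}
    (hne : ∀ r ∈ Icc s t, ∀ k, x + r * v ≠ c k)
    (hpos : ∀ r ∈ Icc s t, 0 < (v * ∑ k, (w k : ℂ) / (x + r * v - c k)).re) :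
    StrictMonoOn (potential c w ∘ fun r : ℝ ↦ x + r * v) (Icc s t) := by
  have hderiv : ∀ r ∈ Icc s t, HasDerivAt (fun r : ℝ ↦ logPotential c w (x + r * v))
      (v * ∑ k, (w k : ℂ) / (x + r * v - c k)).re r := fun r hr ↦ by
    refine hasDerivAt_logPotential_comp (γ := fun r : ℝ ↦ x + r * v) ?_ (hne r hr)
    simpa using ((Complex.ofRealCLM.hasDerivAt (x := r)).mul_const v).const_add x
  have hmono : StrictMonoOn (fun r : ℝ ↦ logPotential c w (x + r * v)) (Icc s t) := by
    refine strictMonoOn_of_deriv_pos (convex_Icc _ _)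
      (fun r hr ↦ (hderiv r hr).continuousAt.continuousWithinAt) fun r hr ↦ ?_
    rw [(hderiv r (interior_subset hr)).deriv]
    exact hpos r (interior_subset hr)
  exact fun r hr r' hr' hlt ↦
    (potential_lt_potential_iff (hne r hr) (hne r' hr')).mpr (hmono hr hr' hlt)

end Configurations

section Limits

variable {β ι κ : Type*} [Fintype ι] [Fintype κ]

/-- Along the filter `l`, the configurations `(u n, w n)` converge to a configuration supported on
the indices in the range of `e`, with points `c` and weights `v ∘ e`, while the other points go to
infinity. -/
structure ConvergesTo (l : Filter β) (u : β → ι → ℂ) (w : β → ι → ℝ) (e : κ → ι) (c : κ → ℂ)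
    (v : ι → ℝ) : Prop where
  injective : Function.Injective e
  tendsto : ∀ k, Tendsto (fun n ↦ u n (e k)) l (𝓝 (c k))
  tendsto_cobounded : ∀ i, i ∉ range e → Tendsto (fun n ↦ u n i) l (Bornology.cobounded ℂ)
  tendsto_weight : ∀ i, Tendsto (fun n ↦ w n i) l (𝓝 (v i))
  isResidueConfig : ∀ᶠ n in l, IsResidueConfig (u n) (w n)
  isResidueConfig_limit : IsResidueConfig c (v ∘ e)

theorem IsResidueConfig.convergesTo_self {c : ι → ℂ} {w : ι → ℝ} (h : IsResidueConfig c w)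
    (l : Filter β) : ConvergesTo l (fun _ ↦ c) (fun _ ↦ w) id c w where
  injective := Function.injective_id
  tendsto _ := tendsto_const_nhds
  tendsto_cobounded i hi := absurd (mem_range_self (f := id) i) hi
  tendsto_weight _ := tendsto_const_nhds
  isResidueConfig := .of_forall fun _ ↦ h
  isResidueConfig_limit := h

namespace ConvergesTo

variable {l : Filter β} {u : β → ι → ℂ} {w : β → ι → ℝ} {e : κ → ι} {c : κ → ℂ} {v : ι → ℝ} {x : ℂ}

theorem neg (h : ConvergesTo l u w e c v) : ConvergesTo l u (fun n ↦ -w n) e c (-v) where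
  injective := h.injective
  tendsto := h.tendsto
  tendsto_cobounded := h.tendsto_cobounded
  tendsto_weight i := (h.tendsto_weight i).neg
  isResidueConfig := h.isResidueConfig.mono fun _ ↦ IsResidueConfig.neg
  isResidueConfig_limit := h.isResidueConfig_limit.neg

theorem eventually_far_ne_zero (h : ConvergesTo l u w e c v) :
    ∀ᶠ n in l, ∀ i ∈ farIndices e, u n i ≠ 0 :=
  (Finset.eventually_all _).mpr fun i hi ↦
    (h.tendsto_cobounded i (mem_farIndices.mp hi)).eventually_ne_cobounded 0

theorem tendsto_posProd_comp (h : ConvergesTo l u w e c v) (x : ℂ) :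
    Tendsto (fun p : β × ℂ ↦ posProd (u p.1 ∘ e) (w p.1 ∘ e) p.2) (l ×ˢ 𝓝 x)
      (𝓝 (posProd c (v ∘ e) x)) := by
  refine tendsto_finsetProd _ fun k _ ↦ ?_
  have hweight := (h.tendsto_weight (e k)).comp (tendsto_fst (g := 𝓝 x))
  rcases (h.isResidueConfig_limit.weight_ne_zero k).lt_or_gt with hk | hk
  · simp only [max_eq_right hk.le, Real.rpow_zero]
    refine tendsto_const_nhds.congr' ?_
    filter_upwards [hweight.eventually (gt_mem_nhds hk)] with p hp
    simp only [Function.comp_apply] at hp ⊢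
    rw [max_eq_right hp.le, Real.rpow_zero]
  · exact (tendsto_snd.sub ((h.tendsto k).comp tendsto_fst)).norm.rpow
      (hweight.max tendsto_const_nhds) (Or.inr (lt_max_of_lt_left hk))

theorem tendsto_nearFactor (h : ConvergesTo l u w e c v) (x : ℂ) :
    Tendsto (fun p : β × ℂ ↦ nearFactor e (u p.1) (w p.1) p.2) (l ×ˢ 𝓝 x)
      (𝓝 (posProd c (v ∘ e) x)) := by
  have hone : ∏ i ∈ farIndices e, ‖1 - x * 0‖ ^ max (v i) 0 = 1 := by simp
  rw [← mul_one (posProd c (v ∘ e) x), ← hone]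
  refine (h.tendsto_posProd_comp x).mul (tendsto_finsetProd _ fun i hi ↦ ?_)
  have hinv : Tendsto (fun p : β × ℂ ↦ (u p.1 i)⁻¹) (l ×ˢ 𝓝 x) (𝓝 0) :=
    tendsto_inv₀_cobounded.comp
      ((h.tendsto_cobounded i (mem_farIndices.mp hi)).comp tendsto_fst)
  simp only [div_eq_mul_inv]
  exact (tendsto_const_nhds.sub (tendsto_snd.mul hinv)).norm.rpow
    (((h.tendsto_weight i).comp tendsto_fst).max tendsto_const_nhds) (Or.inl (by simp))

/-- The cell around a point of positive weight is unbounded, so it meets every large circle; there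
the limit potential is almost zero, so a negative value forces a bound on the far factors. -/
theorem eventually_farFactor_lt [Nontrivial ι] [Nontrivial κ] (h : ConvergesTo l u w e c v)
    {δ : ℝ} (hδ : 1 < δ) : ∀ᶠ n in l, farFactor e (u n) (w n) < δ * farFactor e (u n) (-w n) := by
  obtain ⟨L, hL⟩ := h.isResidueConfig_limit
  obtain ⟨k, hk⟩ := hL.exists_weight_pos
  have hfar := eventually_posProd_neg_lt hL.injective hL.sum_weight_eq_zero hδ
  rw [← Metric.cobounded_eq_cocompact, ← comap_norm_atTop, eventually_comap] at hfar
  obtain ⟨r, hfar, hr⟩ := (hfar.and (eventually_gt_atTop ‖c k‖)).exists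
  have hcircle : ∀ᶠ n in l, ∀ x ∈ Metric.sphere (0 : ℂ) r,
      nearFactor e (u n) (-w n) x < δ * nearFactor e (u n) (w n) x :=
    eventually_forall_mem_of_isCompact (isCompact_sphere _ _) fun x hx ↦
      (h.neg.tendsto_nearFactor x).eventually_lt ((h.tendsto_nearFactor x).const_mul δ)
        (hfar x (by simpa using hx))
  filter_upwards [hcircle, (h.tendsto k).norm.eventually (gt_mem_nhds hr),
    (h.tendsto_weight (e k)).eventually (lt_mem_nhds hk), h.isResidueConfig,
    h.eventually_far_ne_zero] with n hcircle hnorm hpos ⟨_, hres⟩ hne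
  have hpole := potential_of_pos hres.injective hpos
  obtain ⟨y, hy, hyr⟩ := exists_mem_norm_eq isPreconnected_cell
    (hres.isRegularPotential.not_isBounded_cell_zero hpole)
    (mem_cell_self (by rw [hpole]; norm_num)) hnorm
  have hlt := (potential_neg_iff_posProd_lt hres.injective).mp (lt_of_mem_cell hy)
  rw [posProd_eq_farFactor_mul_nearFactor h.injective hne,
    posProd_eq_farFactor_mul_nearFactor h.injective hne] at hlt
  by_contra! hle
  have hfactor := mul_lt_mul_of_pos_left (hcircle y (by simpa using hyr))
    (farFactor_pos (w := -w n) hne)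
  have hnear := mul_le_mul_of_nonneg_right hle
    (nearFactor_nonneg (e := e) (u := u n) (w := w n) (x := y))
  linarith

theorem tendsto_farFactor_div [Nontrivial ι] [Nontrivial κ] (h : ConvergesTo l u w e c v) :
    Tendsto (fun n ↦ farFactor e (u n) (w n) / farFactor e (u n) (-w n)) l (𝓝 1) := by
  refine tendsto_order.mpr ⟨fun a ha ↦ ?_, fun a ha ↦ ?_⟩
  · rcases le_or_gt a 0 with ha0 | ha0
    · filter_upwards [h.eventually_far_ne_zero] with n hn
      exact ha0.trans_lt (div_pos (farFactor_pos (e := e) hn) (farFactor_pos (e := e) hn))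
    · filter_upwards [h.eventually_far_ne_zero,
        h.neg.eventually_farFactor_lt ((one_lt_inv₀ ha0).mpr ha)] with n hn hlt
      rwa [neg_neg, inv_mul_eq_div, lt_div_iff₀ ha0, mul_comm,
        ← lt_div_iff₀ (farFactor_pos (e := e) hn)] at hlt
  · filter_upwards [h.eventually_far_ne_zero, h.eventually_farFactor_lt ha] with n hn hlt
    rwa [div_lt_iff₀ (farFactor_pos (e := e) hn)]

theorem tendsto_potential [Nontrivial ι] [Nontrivial κ] (h : ConvergesTo l u w e c v) (x : ℂ) :
    Tendsto (fun p : β × ℂ ↦ potential (u p.1) (w p.1) p.2) (l ×ˢ 𝓝 x)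
      (𝓝 (potential c (v ∘ e) x)) := by
  have hpos := (h.tendsto_farFactor_div.comp (tendsto_fst (g := 𝓝 x))).mul (h.tendsto_nearFactor x)
  rw [one_mul] at hpos
  have hneg := h.neg.tendsto_nearFactor x
  refine ((hpos.sub hneg).div (hpos.add hneg) (posProd_add_posProd_neg_pos
    h.isResidueConfig_limit.injective).ne').congr' ?_
  filter_upwards [tendsto_fst.eventually h.eventually_far_ne_zero] with p hp
  have hfar := (farFactor_pos (w := -w p.1) hp).ne'
  simp only [potential, posProd_eq_farFactor_mul_nearFactor h.injective hp, Function.comp_apply,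
    Pi.div_apply]
  rw [← mul_div_mul_left _ _ hfar]
  congr 1 <;> field_simp

theorem eventually_mem_cell [Nontrivial ι] [Nontrivial κ] (h : ConvergesTo l u w e c v) {k : κ}
    (hx : x ∈ cell (potential c (v ∘ e)) 0 (c k)) :
    ∀ᶠ n in l, x ∈ cell (potential (u n) (w n)) 0 (u n (e k)) := by
  have hcont : Continuous (potential c (v ∘ e)) :=
    continuous_potential h.isResidueConfig_limit.injective
  have hk := base_lt_of_mem_cell hx
  obtain ⟨γ, hγ⟩ := (((isOpen_cell hcont).isConnected_iff_isPathConnected.mp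
    ⟨⟨x, hx⟩, isPreconnected_cell⟩).joinedIn _ (mem_cell_self hk) _ hx)
  obtain ⟨ρ, hρ, hball⟩ := Metric.nhds_basis_closedBall.mem_iff.mp
    ((isOpen_lt hcont continuous_const).mem_nhds hk)
  have hcompact : IsCompact (range γ ∪ Metric.closedBall (c k) ρ) :=
    (isCompact_range γ.continuous).union (isCompact_closedBall _ _)
  have hconn : IsPreconnected (range γ ∪ Metric.closedBall (c k) ρ) :=
    (isPreconnected_range γ.continuous).union (c k) ⟨0, γ.source⟩
      (Metric.mem_closedBall_self hρ.le) (convex_closedBall _ _).isPreconnected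
  have hlt : ∀ y ∈ range γ ∪ Metric.closedBall (c k) ρ, potential c (v ∘ e) y < 0 := by
    rintro y (⟨t, rfl⟩ | hy)
    · exact lt_of_mem_cell (hγ t)
    · exact hball hy
  have hneg : ∀ᶠ n in l, ∀ y ∈ range γ ∪ Metric.closedBall (c k) ρ,
      potential (u n) (w n) y < 0 :=
    eventually_forall_mem_of_isCompact hcompact fun y hy ↦
      (h.tendsto_potential y).eventually (gt_mem_nhds (hlt y hy))
  filter_upwards [hneg, (h.tendsto k).eventually (Metric.closedBall_mem_nhds _ hρ)]
    with n hneg hnear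
  exact subset_cell hconn (Or.inr hnear) hneg (Or.inl ⟨1, γ.target⟩)

theorem eventually_ne (h : ConvergesTo l u w e c v) (hx : ∀ k, x ≠ c k) :
    ∀ᶠ p : β × ℂ in l ×ˢ 𝓝 x, ∀ i, p.2 ≠ u p.1 i := by
  refine eventually_all.mpr fun i ↦ ?_
  by_cases hi : i ∈ range e
  · obtain ⟨k, rfl⟩ := hi
    exact ((tendsto_snd.sub ((h.tendsto k).comp tendsto_fst)).eventually_ne
      (sub_ne_zero.mpr (hx k))).mono fun p ↦ sub_ne_zero.mp
  · have hfar := (h.tendsto_cobounded i hi).comp (tendsto_fst (g := 𝓝 x))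
    exact ((tendsto_sub_cobounded tendsto_snd hfar).eventually_ne_cobounded 0).mono
      fun p ↦ sub_ne_zero.mp

theorem tendsto_sum_weight_div (h : ConvergesTo l u w e c v) (hx : ∀ k, x ≠ c k) :
    Tendsto (fun p : β × ℂ ↦ ∑ i, (w p.1 i : ℂ) / (p.2 - u p.1 i)) (l ×ˢ 𝓝 x)
      (𝓝 (∑ k, (v (e k) : ℂ) / (x - c k))) := by
  have hweight : ∀ i, Tendsto (fun p : β × ℂ ↦ (w p.1 i : ℂ)) (l ×ˢ 𝓝 x) (𝓝 (v i)) := fun i ↦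
    (Complex.continuous_ofReal.tendsto _).comp ((h.tendsto_weight i).comp tendsto_fst)
  simp only [sum_eq_sum_comp_add_sum_farIndices h.injective]
  rw [← add_zero (∑ k, (v (e k) : ℂ) / (x - c k))]
  refine .add (tendsto_finsetSum _ fun k _ ↦ (hweight (e k)).div
    (tendsto_snd.sub ((h.tendsto k).comp tendsto_fst)) (sub_ne_zero.mpr (hx k))) ?_
  rw [← Finset.sum_const_zero (s := farIndices e)]
  refine tendsto_finsetSum _ fun i hi ↦ ?_
  simp only [div_eq_mul_inv]
  rw [← mul_zero (v i : ℂ)]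
  exact (hweight i).mul (tendsto_inv₀_cobounded.comp
    (tendsto_sub_cobounded tendsto_snd
      ((h.tendsto_cobounded i (mem_farIndices.mp hi)).comp tendsto_fst)))

theorem eventually_strictMonoOn_line (h : ConvergesTo l u w e c v) (hx : ∀ k, x ≠ c k) {d : ℂ}
    (hd : 0 < (d * ∑ k, (v (e k) : ℂ) / (x - c k)).re) :
    ∀ᶠ p : ℝ × β in 𝓝[>] 0 ×ˢ l, StrictMonoOn
      (potential (u p.2) (w p.2) ∘ fun t : ℝ ↦ x + t * d) (Icc (-p.1) p.1) := by
  have hpos : ∀ᶠ p : β × ℂ in l ×ˢ 𝓝 x, 0 < (d * ∑ i, (w p.1 i : ℂ) / (p.2 - u p.1 i)).re :=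
    ((Complex.continuous_re.tendsto _).comp
      ((h.tendsto_sum_weight_div hx).const_mul d)).eventually (lt_mem_nhds hd)
  obtain ⟨A, hA, N, hN, hAN⟩ := mem_prod_iff.mp (hpos.and (h.eventually_ne hx))
  have hline : Tendsto (fun t : ℝ ↦ x + t * d) (𝓝 0) (𝓝 x) := by
    have hcont : Continuous fun t : ℝ ↦ x + t * d := by fun_prop
    simpa using hcont.tendsto 0
  have hshrink : Tendsto (fun ε : ℝ ↦ Icc (-ε) ε) (𝓝[>] 0) (𝓝 0).smallSets :=
    Tendsto.Icc (by simpa using (continuous_neg.tendsto (0 : ℝ)).mono_left nhdsWithin_le_nhds)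
      (tendsto_id.mono_left nhdsWithin_le_nhds)
  filter_upwards [prod_mem_prod
    (hshrink.eventually (eventually_smallSets_forall.mpr (hline.eventually hN))) hA] with p hp
  exact strictMonoOn_potential_line (fun t ht ↦ (hAN (mk_mem_prod hp.2 (hp.1 t ht))).2)
    fun t ht ↦ (hAN (mk_mem_prod hp.2 (hp.1 t ht))).1

theorem eventually_cellsTouch [Nontrivial ι] [Nontrivial κ] (h : ConvergesTo l u w e c v) {a b : κ}
    (hab : CellsTouch (potential c (v ∘ e)) (c a) (c b)) :
    ∀ᶠ n in l, CellsTouch (potential (u n) (w n)) (u n (e a)) (u n (e b)) := by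
  obtain ⟨L, hL⟩ := h.isResidueConfig_limit
  have hreg := hL.isRegularPotential
  obtain ⟨x, hx, hxa, hxb⟩ := hab
  have hne := hL.ne_of_potential_eq_zero hx
  obtain ⟨U, hU, hxU, hUa, -⟩ :=
    hreg.exists_nhd_subset_closure_cell (by norm_num) (by norm_num) hx hxa
  obtain ⟨V, hV, hxV, hVb, -⟩ :=
    hreg.neg.exists_nhd_subset_closure_cell (by norm_num) (by norm_num) (by simp [hx]) hxb
  set d := (∑ k, ((v ∘ e) k : ℂ) / (x - c k))⁻¹ with hdef
  have hd : 0 < (d * ∑ k, ((v ∘ e) k : ℂ) / (x - c k)).re := by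
    rw [hdef, inv_mul_cancel₀ (hL.sum_weight_div_ne_zero hne)]
    norm_num
  have hlimit := ((IsResidueConfig.convergesTo_self ⟨L, hL⟩ (pure ())).eventually_strictMonoOn_line
    hne hd).curry
  have hline : Continuous fun t : ℝ ↦ x + t * d := by fun_prop
  have hnear : ∀ᶠ ε : ℝ in 𝓝[>] 0, x + (-ε : ℝ) * d ∈ U ∧ x + ε * d ∈ V :=
    nhdsWithin_le_nhds (((hline.comp continuous_neg).continuousAt.eventually_mem
      (hU.mem_nhds (by simpa using hxU))).and
      (hline.continuousAt.eventually_mem (hV.mem_nhds (by simpa using hxV))))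
  obtain ⟨ε, hmono, hlimit, ⟨hεU, hεV⟩, hε : 0 < ε⟩ :=
    ((h.eventually_strictMonoOn_line hne hd).curry.and
      (hlimit.and (hnear.and self_mem_nhdsWithin))).exists
  rw [eventually_pure] at hlimit
  have hzero : (0 : ℝ) ∈ Icc (-ε) ε := ⟨by linarith, hε.le⟩
  have hleft := hlimit (left_mem_Icc.mpr (by linarith)) hzero (by linarith)
  have hright := hlimit hzero (right_mem_Icc.mpr (by linarith)) hε
  simp only [Function.comp_apply, Complex.ofReal_zero, zero_mul, add_zero, hx] at hleft hright
  have hpos := h.neg.eventually_mem_cell (k := b) (x := x + ε * d) (by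
    rw [Pi.neg_comp, potential_neg]
    exact hVb _ hεV (neg_lt_zero.mpr hright))
  filter_upwards [h.eventually_mem_cell (hUa _ hεU hleft), hpos, hmono, h.isResidueConfig]
    with n hna hnb hmono hres
  exact cellsTouch_of_strictMonoOn (by linarith) (continuous_potential hres.injective)
    hline.continuousOn hmono hna (potential_neg (w := w n) ▸ hnb)

theorem eventually_adj_touchGraph [Nontrivial ι] [Nontrivial κ] (h : ConvergesTo l u w e c v) :
    ∀ᶠ n in l, ∀ a b, (touchGraph c (v ∘ e)).Adj a b →
      (touchGraph (u n) (w n)).Adj (e a) (e b) := by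
  have htouch : ∀ a b, 0 < v (e a) → v (e b) < 0 →
      CellsTouch (potential c (v ∘ e)) (c a) (c b) → ∀ᶠ n in l, 0 < w n (e a) ∧
        w n (e b) < 0 ∧ CellsTouch (potential (u n) (w n)) (u n (e a)) (u n (e b)) :=
    fun a b ha hb hab ↦ ((h.tendsto_weight (e a)).eventually (lt_mem_nhds ha)).and
      (((h.tendsto_weight (e b)).eventually (gt_mem_nhds hb)).and (h.eventually_cellsTouch hab))
  refine eventually_all.mpr fun a ↦ eventually_all.mpr fun b ↦ eventually_imp_distrib_left.mpr ?_
  rintro (⟨ha, hb, hab⟩ | ⟨hb, ha, hab⟩)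
  · exact (htouch a b ha hb hab).mono fun _ ↦ Or.inl
  · exact (htouch b a hb ha hab).mono fun _ ↦ Or.inr

end ConvergesTo

end Limits

/-! ### Moving the weights -/

theorem eventually_injective {ι E : Type*} [Finite ι] [TopologicalSpace E] [T2Space E] {c : ι → E}
    (hc : Function.Injective c) : ∀ᶠ c' in 𝓝 c, Function.Injective c' := by
  have hne : ∀ᶠ c' in 𝓝 c, ∀ k l, k ≠ l → c' k ≠ c' l :=
    eventually_all.mpr fun k ↦ eventually_all.mpr fun l ↦ eventually_imp_distrib_left.mpr fun hkl ↦
      ((continuous_apply k).continuousAt.ne_iff_eventually_ne (continuous_apply l).continuousAt).mp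
        (hc.ne hkl)
  filter_upwards [hne] with c' h k l
  exact not_imp_not.mp (h k l)

section Moments

variable {ι : Type*} [Fintype ι]

open scoped Classical in
theorem sum_pow_mul_coeff_lagrange_basis {c : ι → ℂ} (hc : Function.Injective c) {m : ℕ}
    (hm : m < Fintype.card ι) (i : ℕ) :
    ∑ k, c k ^ m * (Lagrange.basis Finset.univ c k).coeff i = if i = m then 1 else 0 := by
  have hinterp := Lagrange.eq_interpolate (s := Finset.univ) (f := (X ^ m : ℂ[X])) hc.injOn
    (by rw [degree_X_pow, Finset.card_univ]; exact_mod_cast hm)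
  have hcoeff := congrArg (coeff · i) hinterp.symm
  simpa only [Lagrange.interpolate_apply, finsetSum_coeff, coeff_C_mul, coeff_X_pow, eval_pow,
    eval_X] using hcoeff

theorem exists_sum_pow_mul_eq {c : ι → ℂ} (hc : Function.Injective c) {M : ℕ}
    (hM : M ≤ Fintype.card ι) (z : Fin M → ℂ) :
    ∃ x : ι → ℂ, ∀ j : Fin M, ∑ k, c k ^ (j : ℕ) * x k = z j := by
  classical
  refine ⟨fun k ↦ ∑ i, z i * (Lagrange.basis Finset.univ c k).coeff i, fun j ↦ ?_⟩
  calc ∑ k, c k ^ (j : ℕ) * ∑ i, z i * (Lagrange.basis Finset.univ c k).coeff i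
      = ∑ i, z i * ∑ k, c k ^ (j : ℕ) * (Lagrange.basis Finset.univ c k).coeff i := by
        simp only [Finset.mul_sum]
        rw [Finset.sum_comm]
        exact Finset.sum_congr rfl fun i _ ↦ Finset.sum_congr rfl fun k _ ↦ mul_left_comm _ _ _
    _ = z j := by
        simp [sum_pow_mul_coeff_lagrange_basis hc (j.2.trans_le hM), Fin.val_inj]

/-- The first `M` moments `∑ k, w k * c k ^ j`, `1 ≤ j ≤ M`, of the weights `w` at the points `c`,
recorded together with `w`. -/
noncomputable def moments (M : ℕ) (p : (ι → ℂ) × (ι → ℂ)) : (Fin M → ℂ) × (ι → ℂ) :=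
  (fun j ↦ ∑ k, p.2 k * p.1 k ^ ((j : ℕ) + 1), p.2)

/-- The derivative of `moments` at `p`. -/
noncomputable def momentsDeriv (M : ℕ) (p : (ι → ℂ) × (ι → ℂ)) :
    (ι → ℂ) × (ι → ℂ) →L[ℂ] (Fin M → ℂ) × (ι → ℂ) :=
  (ContinuousLinearMap.pi fun j : Fin M ↦ ∑ k,
    ((p.2 k * ((j + 1 : ℂ) * p.1 k ^ (j : ℕ))) •
        (ContinuousLinearMap.proj k).comp (ContinuousLinearMap.fst ℂ (ι → ℂ) (ι → ℂ)) +
      p.1 k ^ ((j : ℕ) + 1) •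
        (ContinuousLinearMap.proj k).comp (ContinuousLinearMap.snd ℂ (ι → ℂ) (ι → ℂ)))).prod
    (ContinuousLinearMap.snd ℂ (ι → ℂ) (ι → ℂ))

theorem momentsDeriv_apply_fst {M : ℕ} (p v : (ι → ℂ) × (ι → ℂ)) (j : Fin M) :
    (momentsDeriv M p v).1 j = ∑ k, (p.2 k * ((j + 1) * p.1 k ^ (j : ℕ)) * v.1 k +
      p.1 k ^ ((j : ℕ) + 1) * v.2 k) := by
  simp [momentsDeriv]

theorem hasStrictFDerivAt_moments (M : ℕ) (p : (ι → ℂ) × (ι → ℂ)) :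
    HasStrictFDerivAt (moments M) (momentsDeriv M p) p := by
  refine HasStrictFDerivAt.prodMk (hasStrictFDerivAt_pi.mpr fun j ↦
    HasStrictFDerivAt.fun_sum fun k _ ↦ ?_) hasStrictFDerivAt_snd
  have hpoint := ((ContinuousLinearMap.proj k).comp
    (ContinuousLinearMap.fst ℂ (ι → ℂ) (ι → ℂ))).hasStrictFDerivAt (x := p)
  have hweight := ((ContinuousLinearMap.proj k).comp
    (ContinuousLinearMap.snd ℂ (ι → ℂ) (ι → ℂ))).hasStrictFDerivAt (x := p)
  refine (hweight.mul (hpoint.pow ((j : ℕ) + 1))).congr_fderiv (ContinuousLinearMap.ext fun v ↦ ?_)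
  simp [mul_assoc]

theorem range_momentsDeriv {M : ℕ} (hM : M ≤ Fintype.card ι) {c w : ι → ℂ}
    (hc : Function.Injective c) (hw : ∀ k, w k ≠ 0) : (momentsDeriv M (c, w)).range = ⊤ := by
  refine LinearMap.range_eq_top.mpr fun ⟨y, η⟩ ↦ ?_
  obtain ⟨x, hx⟩ := exists_sum_pow_mul_eq hc hM
    fun j ↦ (y j - ∑ k, c k ^ ((j : ℕ) + 1) * η k) / (j + 1 : ℂ)
  refine ⟨(fun k ↦ x k / w k, η), Prod.ext (funext fun j ↦ ?_) rfl⟩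
  have hxj := hx j
  rw [eq_div_iff (Nat.cast_add_one_ne_zero (j : ℕ)), Finset.sum_mul] at hxj
  rw [ContinuousLinearMap.coe_coe, momentsDeriv_apply_fst, Finset.sum_add_distrib,
    ← eq_sub_iff_add_eq, ← hxj]
  refine Finset.sum_congr rfl fun k _ ↦ ?_
  have := hw k
  field_simp

theorem map_moments_nhds {M : ℕ} (hM : M ≤ Fintype.card ι) {c w : ι → ℂ}
    (hc : Function.Injective c) (hw : ∀ k, w k ≠ 0) :
    map (moments M) (𝓝 (c, w)) = 𝓝 (moments M (c, w)) :=
  (hasStrictFDerivAt_moments M (c, w)).map_nhds_eq_of_surj (range_momentsDeriv hM hc hw)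


theorem eventually_exists_moments_eq {M : ℕ} (hM : M ≤ Fintype.card ι) {c w : ι → ℂ}
    (hc : Function.Injective c) (hw : ∀ k, w k ≠ 0) {N : Set (ι → ℂ)} (hN : N ∈ 𝓝 c) :
    ∀ᶠ q in 𝓝 (moments M (c, w)), ∃ c' ∈ N, Function.Injective c' ∧ moments M (c', q.2) = q := by
  rw [← map_moments_nhds hM hc hw]
  filter_upwards [image_mem_map (m := moments M)
    (prod_mem_nhds (inter_mem hN (eventually_injective hc)) (univ_mem (f := 𝓝 w)))]
  rintro _ ⟨⟨c', w'⟩, ⟨⟨hc'N, hc'⟩, -⟩, rfl⟩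
  exact ⟨c', hc'N, hc', rfl⟩

end Moments

section Deformation

variable {ι : Type*} [Fintype ι] {c : ι → ℂ} {w : ι → ℝ}

theorem IsResidueConfig.eventually_touchGraph_le [Nontrivial ι] (h : IsResidueConfig c w) :
    ∀ᶠ p in 𝓝 (c, w), IsResidueConfig p.1 p.2 → touchGraph c w ≤ touchGraph p.1 p.2 := by
  have hconv : ConvergesTo (𝓝 (c, w) ⊓ 𝓟 {p | IsResidueConfig p.1 p.2}) Prod.fst Prod.snd id c w :=
    { injective := Function.injective_id
      tendsto k := (((continuous_apply k).comp continuous_fst).tendsto (c, w)).mono_left inf_le_left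
      tendsto_cobounded i hi := absurd (mem_range_self (f := id) i) hi
      tendsto_weight k :=
        (((continuous_apply k).comp continuous_snd).tendsto (c, w)).mono_left inf_le_left
      isResidueConfig := mem_inf_of_right (mem_principal_self _)
      isResidueConfig_limit := h }
  exact eventually_inf_principal.mp hconv.eventually_adj_touchGraph

theorem HasResidues.eventually_exists_isResidueConfig {L : ℂ} (h : HasResidues c w L)
    {N : Set (ι → ℂ)} (hN : N ∈ 𝓝 c) :
    ∀ᶠ w' in 𝓝 w, ∑ k, w' k = 0 → ∃ c' ∈ N, IsResidueConfig c' w' := by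
  have hlift := eventually_exists_moments_eq (Nat.sub_le (Fintype.card ι) 1) h.injective
    (fun k ↦ Complex.ofReal_ne_zero.mpr (h.weight_ne_zero k)) hN
  have hcont : Continuous fun w' : ι → ℝ ↦
      ((moments (Fintype.card ι - 1) (c, fun k ↦ (w k : ℂ))).1, fun k ↦ (w' k : ℂ)) := by
    fun_prop
  have hne : ∀ᶠ w' in 𝓝 w, ∀ k, w' k ≠ 0 := eventually_all.mpr fun k ↦
    (continuous_apply k).continuousAt.eventually_ne (h.weight_ne_zero k)
  filter_upwards [(hcont.tendsto w).eventually hlift, hne] with w' ⟨c', hc'N, hc', heq⟩ hw' hsum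
  refine ⟨c', hc'N, isResidueConfig_of_moments hc' hw' fun j hj ↦ ?_⟩
  rcases j with _ | j
  · simpa using congrArg Complex.ofReal hsum
  · exact (congrFun (congrArg Prod.fst heq) ⟨j, by omega⟩).trans (h.sum_weight_mul_pow hj)

theorem IsResidueConfig.eventually_exists_touchGraph_le [Nontrivial ι] (h : IsResidueConfig c w) :
    ∀ᶠ w' in 𝓝 w, ∑ k, w' k = 0 →
      ∃ c', IsResidueConfig c' w' ∧ touchGraph c w ≤ touchGraph c' w' := by
  obtain ⟨L, hL⟩ := id h
  obtain ⟨N, hN, V, hV, hNV⟩ := mem_nhds_prod_iff.mp h.eventually_touchGraph_le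
  filter_upwards [hL.eventually_exists_isResidueConfig hN, hV] with w' hw' hw'V hsum
  obtain ⟨c', hc'N, hc'⟩ := hw' hsum
  exact ⟨c', hc', hNV (mk_mem_prod hc'N hw'V) hc'⟩

end Deformation

/-! ### Degenerating configurations -/

section Ultrafilter

theorem exists_tendsto_nhds_or_tendsto_cobounded {β E : Type*} [PseudoMetricSpace E] [ProperSpace E]
    (U : Ultrafilter β) (f : β → E) :
    (∃ z, Tendsto f U (𝓝 z)) ∨ Tendsto f U (Bornology.cobounded E) := by
  refine or_iff_not_imp_right.mpr fun hf ↦ ?_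
  simp only [tendsto_def, not_forall] at hf
  obtain ⟨s, hs, hfs⟩ := hf
  have hbdd : Bornology.IsBounded sᶜ := by rwa [Bornology.isBounded_compl_iff]
  obtain ⟨z, -, hz⟩ := hbdd.isCompact_closure.ultrafilter_le_nhds (U.map f)
    (le_principal_iff.mpr (mem_of_superset (Ultrafilter.compl_mem_iff_notMem.mpr hfs)
      (subset_closure (s := sᶜ))))
  exact ⟨z, hz⟩

theorem exists_eventually_norm_sub_le {β ι E : Type*} [Finite ι] [Nontrivial ι]
    [SeminormedAddGroup E] (U : Ultrafilter β) (c : β → ι → E) (k : ι) :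
    ∃ m ≠ k, ∀ᶠ n in U, ∀ i ≠ k, ‖c n m - c n k‖ ≤ ‖c n i - c n k‖ := by
  have : Nonempty {m // m ≠ k} := let ⟨m, hm⟩ := exists_ne k; ⟨m, hm⟩
  have hmin : ∀ᶠ n in U, ∃ m : {m // m ≠ k}, ∀ i ≠ k, ‖c n m - c n k‖ ≤ ‖c n i - c n k‖ :=
    .of_forall fun n ↦
      let ⟨m, hm⟩ := Finite.exists_min fun m : {m // m ≠ k} ↦ ‖c n m - c n k‖
      ⟨m, fun i hi ↦ hm ⟨i, hi⟩⟩
  obtain ⟨m, hm⟩ := Ultrafilter.eventually_exists_iff.mp hmin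
  exact ⟨m, m.2, hm⟩

end Ultrafilter

section NearFactors

variable {β ι κ : Type*} [Fintype ι] [Fintype κ] {l : Filter β} {u : β → ι → ℂ} {w : β → ι → ℝ}
  {e : κ → ι} {c : κ → ℂ} {v : ι → ℝ}

open scoped Classical in
theorem prod_erase_sub_eq (he : Function.Injective e) (u : ι → ℂ) (k : κ) :
    ∏ i ∈ Finset.univ.erase (e k), (u (e k) - u i) =
      (∏ j ∈ Finset.univ.erase k, (u (e k) - u (e j))) * ∏ i ∈ farIndices e, (u (e k) - u i) := by
  simp only [← Finset.filter_ne', Finset.prod_filter]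
  rw [prod_eq_prod_comp_mul_prod_farIndices he]
  congr 1
  · simp only [ne_eq, he.eq_iff]
  · refine Finset.prod_congr rfl fun i hi ↦ if_pos ?_
    rintro rfl
    exact mem_farIndices.mp hi (mem_range_self k)

open scoped Classical in
theorem tendsto_weight_mul_prod_div (he : Function.Injective e)
    (hu : ∀ k, Tendsto (fun n ↦ u n (e k)) l (𝓝 (c k)))
    (hfar : ∀ i, i ∉ range e → Tendsto (fun n ↦ u n i) l (Bornology.cobounded ℂ))
    (hw : ∀ i, Tendsto (fun n ↦ w n i) l (𝓝 (v i))) (k : κ) :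
    Tendsto (fun n ↦ (w n (e k) * ∏ i ∈ Finset.univ.erase (e k), (u n (e k) - u n i)) /
        ∏ i ∈ farIndices e, -u n i) l
      (𝓝 (v (e k) * ∏ j ∈ Finset.univ.erase k, (c k - c j))) := by
  have hratio : Tendsto (fun n ↦ ∏ i ∈ farIndices e, (1 - u n (e k) * (u n i)⁻¹)) l (𝓝 1) := by
    rw [← Finset.prod_const_one (s := farIndices e)]
    refine tendsto_finsetProd _ fun i hi ↦ ?_
    simpa using ((hu k).mul (tendsto_inv₀_cobounded.comp
      (hfar i (mem_farIndices.mp hi)))).const_sub 1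
  have hnear : Tendsto (fun n ↦ (w n (e k) : ℂ) *
      ∏ j ∈ Finset.univ.erase k, (u n (e k) - u n (e j))) l
      (𝓝 (v (e k) * ∏ j ∈ Finset.univ.erase k, (c k - c j))) :=
    ((Complex.continuous_ofReal.tendsto _).comp (hw (e k))).mul
      (tendsto_finsetProd _ fun j _ ↦ (hu k).sub (hu j))
  have hne : ∀ᶠ n in l, ∀ i ∈ farIndices e, u n i ≠ 0 :=
    (Finset.eventually_all _).mpr fun i hi ↦
      (hfar i (mem_farIndices.mp hi)).eventually_ne_cobounded 0
  rw [← mul_one (_ * ∏ j ∈ _, _)]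
  refine (hnear.mul hratio).congr' ?_
  filter_upwards [hne] with n hn
  rw [prod_erase_sub_eq he, ← mul_assoc, mul_div_assoc, ← Finset.prod_div_distrib]
  congr 1
  refine Finset.prod_congr rfl fun i hi ↦ ?_
  have := hn i hi
  field_simp
  ring

/-- Only one limit point has to be assumed isolated: the products `w k * ∏ (c k - c j)` are all
equal before the limit, and in the limit the one at `k₀` does not vanish. -/
theorem convergesTo_of_forall_ne [NeBot l] (he : Function.Injective e)
    (hu : ∀ k, Tendsto (fun n ↦ u n (e k)) l (𝓝 (c k)))
    (hfar : ∀ i, i ∉ range e → Tendsto (fun n ↦ u n i) l (Bornology.cobounded ℂ))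
    (hw : ∀ i, Tendsto (fun n ↦ w n i) l (𝓝 (v i)))
    (hconf : ∀ᶠ n in l, IsResidueConfig (u n) (w n)) {k₀ : κ} (hk₀ : ∀ k ≠ k₀, c k ≠ c k₀)
    (hv : v (e k₀) ≠ 0) : ConvergesTo l u w e c v := by
  classical
  refine ⟨he, hu, hfar, hw, hconf, v (e k₀) * ∏ j ∈ Finset.univ.erase k₀, (c k₀ - c j), ?_, ?_⟩
  · exact mul_ne_zero (Complex.ofReal_ne_zero.mpr hv) (Finset.prod_ne_zero_iff.mpr fun j hj ↦
      sub_ne_zero.mpr (hk₀ j (Finset.ne_of_mem_erase hj)).symm)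
  · intro k
    have hlim := tendsto_weight_mul_prod_div he hu hfar hw
    refine tendsto_nhds_unique ((hlim k).congr' ?_) (hlim k₀)
    filter_upwards [hconf] with n ⟨L, hL⟩
    rw [hL.weight_mul_prod, hL.weight_mul_prod]

theorem ConvergesTo.exists_id_of_surjective [NeBot l] [Nonempty ι] (h : ConvergesTo l u w e c v)
    (he : Function.Surjective e) : ∃ c', ConvergesTo l u w id c' v := by
  obtain ⟨s, hs⟩ := he.hasRightInverse
  obtain ⟨i⟩ := ‹Nonempty ι›
  refine ⟨c ∘ s, convergesTo_of_forall_ne Function.injective_id (fun i ↦ ?_)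
    (fun i hi ↦ absurd (mem_range_self (f := id) i) hi) h.tendsto_weight h.isResidueConfig
    (k₀ := i) (fun j hj heq ↦ hj (hs.injective (h.isResidueConfig_limit.injective heq))) ?_⟩
  · simpa only [id, Function.comp_apply, hs i] using h.tendsto (s i)
  · simpa only [id, Function.comp_apply, hs i] using h.isResidueConfig_limit.weight_ne_zero (s i)

end NearFactors

section Bubbles

variable {β ι : Type*} {l : Filter β} {c : β → ι → ℂ} {D D' : β → ℂ} {B B' : Finset ι}

/-- A maximal cluster `B` of the points `c n`, all of whose mutual distances are of exact order
`D n` along `l`. -/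
structure IsBubble (l : Filter β) (c : β → ι → ℂ) (D : β → ℂ) (B : Finset ι) : Prop where
  nontrivial : B.Nontrivial
  mem_iff : ∀ i ∈ B, ∀ j, j ∈ B ↔ (fun n ↦ c n j - c n i) =O[l] D
  isBigO : ∀ i ∈ B, ∀ j ≠ i, D =O[l] fun n ↦ c n j - c n i

theorem IsBubble.isBigO_of_mem (h : IsBubble l c D B) (h' : IsBubble l c D' B') {i : ι}
    (hi : i ∈ B) (hi' : i ∈ B') : D' =O[l] D :=
  let ⟨j, hj, hji⟩ := h.nontrivial.exists_ne i
  (h'.isBigO i hi' j hji).trans ((h.mem_iff i hi j).mp hj)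

theorem IsBubble.eq_of_mem (h : IsBubble l c D B) (h' : IsBubble l c D' B') {i : ι} (hi : i ∈ B)
    (hi' : i ∈ B') : B = B' := by
  ext j
  rw [h.mem_iff i hi, h'.mem_iff i hi']
  exact ⟨fun hj ↦ hj.trans (h'.isBigO_of_mem h hi' hi),
    fun hj ↦ hj.trans (h.isBigO_of_mem h' hi hi')⟩

variable [Fintype ι] {w : β → ι → ℝ} {v : ι → ℝ}

theorem ConvergesTo.isBubble [NeBot l] {b : β → ℂ} {z : B → ℂ}
    (h : ConvergesTo l (fun n i ↦ (D n)⁻¹ * c n i + b n) w Subtype.val z v)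
    (hD : ∀ᶠ n in l, D n ≠ 0) (hB : B.Nontrivial) : IsBubble l c D B := by
  have hne : ∀ i j, i ≠ j → ∀ᶠ n in l, c n i - c n j ≠ 0 := fun i j hij ↦
    h.isResidueConfig.mono fun n hn h0 ↦ hij (hn.injective (by simp [sub_eq_zero.mp h0]))
  have hnear : ∀ i j : B, Tendsto (fun n ↦ (c n j - c n i) / D n) l (𝓝 (z j - z i)) := fun i j ↦
    ((h.tendsto j).sub (h.tendsto i)).congr fun n ↦ by ring
  have hfar : ∀ i : B, ∀ j ∉ B,
      Tendsto (fun n ↦ (c n j - c n i) / D n) l (Bornology.cobounded ℂ) := fun i j hj ↦ by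
    have hsub := tendsto_sub_cobounded (h.tendsto i) (h.tendsto_cobounded j (by simpa using hj))
    exact (tendsto_neg_cobounded.comp hsub).congr fun n ↦ by simp only [Function.comp_apply]; ring
  refine ⟨hB, fun i hi j ↦ ⟨fun hj ↦ ?_, fun hj ↦ ?_⟩, fun i hi j hji ↦ ?_⟩
  · exact isBigO_of_div_tendsto_nhds (hD.mono fun n hn h0 ↦ absurd h0 hn) _ (hnear ⟨i, hi⟩ ⟨j, hj⟩)
  · by_contra hjB
    refine not_isBoundedUnder_of_tendsto_atTop
      (tendsto_norm_cobounded_atTop.comp (hfar ⟨i, hi⟩ j hjB)) ?_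
    simpa only [Function.comp_def, norm_div] using (isBigO_iff_isBoundedUnder_le_div hD).mp hj
  · have hdiv : ∀ᶠ n in l, c n j - c n i = 0 → D n = 0 :=
      (hne j i hji).mono fun n hn h0 ↦ absurd h0 hn
    by_cases hj : j ∈ B
    · exact isBigO_of_div_tendsto_nhds hdiv _ (((hnear ⟨i, hi⟩ ⟨j, hj⟩).inv₀ (sub_ne_zero.mpr
        (h.isResidueConfig_limit.injective.ne (by simpa using hji)))).congr fun n ↦ inv_div _ _)
    · exact isBigO_of_div_tendsto_nhds hdiv 0
        ((tendsto_inv₀_cobounded.comp (hfar ⟨i, hi⟩ j hj)).congr fun n ↦ inv_div _ _)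

/-- Rescale so that `k` sits at the origin and its nearest neighbour at `1`: the points that stay
bounded form the limit, in which `k` is isolated. -/
theorem exists_convergesTo_rescaled [Nontrivial ι] (U : Ultrafilter β)
    (hw : ∀ i, Tendsto (fun n ↦ w n i) U (𝓝 (v i))) (hv : ∀ i, v i ≠ 0)
    (hconf : ∀ᶠ n in U, IsResidueConfig (c n) (w n)) (k : ι) :
    ∃ (D b : β → ℂ) (B : Finset ι) (z : B → ℂ), (∀ᶠ n in U, D n ≠ 0) ∧ k ∈ B ∧ B.Nontrivial ∧
      ConvergesTo U (fun n i ↦ (D n)⁻¹ * c n i + b n) w Subtype.val z v := by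
  classical
  obtain ⟨m, hmk, hm⟩ := exists_eventually_norm_sub_le U c k
  set D : β → ℂ := fun n ↦ c n m - c n k
  set u : β → ι → ℂ := fun n i ↦ (D n)⁻¹ * c n i + -(D n)⁻¹ * c n k
  have hD : ∀ᶠ n in U, D n ≠ 0 :=
    hconf.mono fun n hn ↦ sub_ne_zero.mpr (hn.injective.ne hmk)
  have hu : ∀ n i, u n i = (c n i - c n k) / D n := fun n i ↦ by simp only [u]; ring
  have hge : ∀ i ≠ k, ∀ᶠ n in U, 1 ≤ ‖u n i‖ := fun i hi ↦ by
    filter_upwards [hm, hD] with n hmn hDn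
    rw [hu, norm_div, one_le_div (norm_pos_iff.mpr hDn)]
    exact hmn i hi
  have huk : Tendsto (fun n ↦ u n k) U (𝓝 0) := by simp [hu]
  have hum : Tendsto (fun n ↦ u n m) U (𝓝 1) :=
    tendsto_const_nhds.congr' (hD.mono fun n hn ↦ ((hu n m).trans (div_self hn)).symm)
  let B : Finset ι := {i | ∃ z, Tendsto (fun n ↦ u n i) U (𝓝 z)}
  have hB : ∀ i : B, ∃ z, Tendsto (fun n ↦ u n i) U (𝓝 z) := fun i ↦ (Finset.mem_filter.mp i.2).2
  choose z hz using hB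
  have hk : k ∈ B := by simpa [B] using ⟨0, huk⟩
  have hmB : m ∈ B := by simpa [B] using ⟨1, hum⟩
  refine ⟨D, _, B, z, hD, hk, ⟨k, hk, m, hmB, hmk.symm⟩,
    convergesTo_of_forall_ne Subtype.val_injective hz (fun i hi ↦ ?_) hw ?_
      (k₀ := ⟨k, hk⟩) (fun i hi heq ↦ ?_) (hv k)⟩
  · exact (exists_tendsto_nhds_or_tendsto_cobounded U _).resolve_left
      fun h ↦ hi ⟨⟨i, Finset.mem_filter_univ i |>.mpr h⟩, rfl⟩
  · filter_upwards [hconf, hD] with n ⟨L, hL⟩ hn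
    exact ⟨_, hL.affine (inv_ne_zero hn) _⟩
  · rw [tendsto_nhds_unique (hz ⟨k, hk⟩) huk] at heq
    have hle := ge_of_tendsto (hz i).norm (hge i fun h ↦ hi (Subtype.ext h))
    rw [heq, norm_zero] at hle
    exact absurd hle (by norm_num)

end Bubbles

section Realizable

variable {ι : Type*} [Fintype ι]

/-- Some configuration with weights `w` has a touching graph containing `T`. -/
def IsRealizable (T : SimpleGraph ι) (w : ι → ℝ) : Prop :=
  ∃ c, IsResidueConfig c w ∧ T ≤ touchGraph c w

variable {β κ : Type*} [Fintype κ] {T : SimpleGraph ι} {w : β → ι → ℝ} {v : ι → ℝ} {c : β → ι → ℂ}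
  {e : κ → ι} {z : κ → ℂ} {l : Filter β}

theorem ConvergesTo.connected_comap [NeBot l] [Nontrivial ι] [Nontrivial κ]
    (h : ConvergesTo l c w e z v) (hT : ∀ᶠ n in l, T = touchGraph (c n) (w n)) :
    (T.comap e).Connected := by
  obtain ⟨n, hn, rfl⟩ := (h.eventually_adj_touchGraph.and hT).exists
  obtain ⟨L, hL⟩ := h.isResidueConfig_limit
  exact hL.connected_touchGraph.mono fun a b ↦ hn a b

theorem ConvergesTo.isRealizable_of_surjective [NeBot l] [Nontrivial ι]
    (h : ConvergesTo l c w e z v) (he : Function.Surjective e)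
    (hT : ∀ᶠ n in l, T = touchGraph (c n) (w n)) : IsRealizable T v := by
  obtain ⟨z', hz'⟩ := h.exists_id_of_surjective he
  obtain ⟨n, hle, ⟨L, hL⟩, rfl⟩ :=
    (hz'.eventually_adj_touchGraph.and (hz'.isResidueConfig.and hT)).exists
  obtain ⟨L', hL'⟩ := id hz'.isResidueConfig_limit
  exact ⟨z', hz'.isResidueConfig_limit, (hL.eq_touchGraph_of_le hL'.connected_touchGraph hle).ge⟩

theorem exists_isBubble [Nontrivial ι] (U : Ultrafilter β)
    (hw : ∀ i, Tendsto (fun n ↦ w n i) U (𝓝 (v i))) (hv : ∀ i, v i ≠ 0)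
    (hc : ∀ᶠ n in U, IsResidueConfig (c n) (w n) ∧ T = touchGraph (c n) (w n)) (k : ι) :
    ∃ D B, k ∈ B ∧ IsBubble U c D B ∧ ∑ i ∈ B, v i = 0 ∧
      (T.comap (Subtype.val : B → ι)).Connected ∧ (B = Finset.univ → IsRealizable T v) := by
  obtain ⟨D, b, B, z, hD, hk, hB, hconv⟩ :=
    exists_convergesTo_rescaled U hw hv (hc.mono fun n hn ↦ hn.1) k
  have : Nontrivial B := hB.coe_sort
  have hT : ∀ᶠ n in U, T = touchGraph (fun i ↦ (D n)⁻¹ * c n i + b n) (w n) := by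
    filter_upwards [hc, hD] with n ⟨⟨L, hL⟩, hn⟩ hDn
    rw [hn, hL.touchGraph_affine (inv_ne_zero hDn)]
  refine ⟨D, B, hk, hconv.isBubble hD hB, ?_, hconv.connected_comap hT, fun hBuniv ↦ ?_⟩
  · exact (Finset.sum_coe_sort B v).symm.trans hconv.isResidueConfig_limit.sum_weight_eq_zero
  · exact hconv.isRealizable_of_surjective (fun i ↦ ⟨⟨i, hBuniv ▸ Finset.mem_univ i⟩, rfl⟩) hT

end Realizable

section EdgeSides

variable {ι : Type*} {T : SimpleGraph ι} {a b : ι} {S : Finset ι}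

/-- The edge from `a ∈ S` to `b ∉ S` is the only edge of `T` that leaves `S`. -/
structure IsEdgeSide (T : SimpleGraph ι) (a b : ι) (S : Finset ι) : Prop where
  adj : T.Adj a b
  left_mem : a ∈ S
  right_notMem : b ∉ S
  eq_of_adj : ∀ x y, T.Adj x y → x ∈ S → y ∉ S → x = a ∧ y = b

theorem exists_isEdgeSide [Finite ι] (hT : T.IsAcyclic) (hab : T.Adj a b) :
    ∃ S, IsEdgeSide T a b S := by
  classical
  have := Fintype.ofFinite ι
  have hbridge := SimpleGraph.isAcyclic_iff_forall_adj_isBridge.mp hT hab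
  rw [SimpleGraph.isBridge_iff] at hbridge
  refine ⟨({x | (T.deleteEdges {s(a, b)}).Reachable a x} : Finset ι), hab, by simp,
    by simpa using hbridge, fun x y hxy hx hy ↦ ?_⟩
  simp only [Finset.mem_filter_univ] at hx hy
  by_cases hedge : s(x, y) = s(a, b)
  · rcases Sym2.eq_iff.mp hedge with h | ⟨rfl, rfl⟩
    · exact h
    · exact absurd hx hbridge
  · exact absurd (hx.trans (SimpleGraph.Adj.reachable (by simp [hxy, hedge]))) hy

theorem exists_adj_of_ne_univ [Fintype ι] (hT : T.Connected) (ha : a ∈ S) (hS : S ≠ Finset.univ) :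
    ∃ x ∈ S, ∃ y ∉ S, T.Adj x y := by
  by_contra! hcon
  refine hS (Finset.eq_univ_of_forall fun y ↦ ?_)
  have hconst := eq_of_reachable (γ := (· ∈ S)) (fun x y hxy ↦ propext
    ⟨fun hx ↦ by_contra fun hy ↦ hcon x hx y hy hxy,
      fun hy ↦ by_contra fun hx ↦ hcon y hy x hx hxy.symm⟩) (hT.preconnected a y)
  exact hconst ▸ ha

variable {B : ι → Finset ι}

theorem IsEdgeSide.mem_iff_of_connected (hS : IsEdgeSide T a b S) {C : Finset ι}
    (hC : (T.comap (Subtype.val : C → ι)).Connected) (hab : a ∈ C → b ∉ C) {x y : ι} (hx : x ∈ C)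
    (hy : y ∈ C) : x ∈ S ↔ y ∈ S := by
  have hstep : ∀ x y : C, T.Adj x y → (x : ι) ∈ S → (y : ι) ∈ S := fun x y hxy hxS ↦ by
    by_contra hyS
    obtain ⟨hxa, hyb⟩ := hS.eq_of_adj x y hxy hxS hyS
    exact hab (hxa ▸ x.2) (hyb ▸ y.2)
  exact (eq_of_reachable (γ := fun x : C ↦ (x : ι) ∈ S) (fun x y hxy ↦ propext
    ⟨hstep x y hxy, hstep y x hxy.symm⟩) (hC.preconnected ⟨x, hx⟩ ⟨y, hy⟩)).to_iff

theorem IsEdgeSide.sum_eq_zero (hS : IsEdgeSide T a b S) {v : ι → ℝ} (hmem : ∀ i, i ∈ B i)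
    (heq : ∀ i j, j ∈ B i → B j = B i) (hsum : ∀ i, ∑ j ∈ B i, v j = 0)
    (hconn : ∀ i, (T.comap (Subtype.val : B i → ι)).Connected) (hb : b ∉ B a) :
    ∑ i ∈ S, v i = 0 := by
  classical
  rw [← Finset.sum_fiberwise_of_maps_to (t := S.image B) (g := B)
    fun i hi ↦ Finset.mem_image_of_mem _ hi]
  refine Finset.sum_eq_zero fun C hC ↦ ?_
  obtain ⟨j, hj, rfl⟩ := Finset.mem_image.mp hC
  have hiff := fun i (hi : i ∈ B j) ↦ hS.mem_iff_of_connected (hconn j)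
    (fun ha hb' ↦ hb (heq j a ha ▸ hb')) hi (hmem j)
  rw [← hsum j]
  congr 1
  ext i
  rw [Finset.mem_filter]
  exact ⟨fun hi ↦ hi.2 ▸ hmem i, fun hi ↦ ⟨(hiff i hi).mpr hj, heq j i hi⟩⟩

end EdgeSides

/-- If the points do not converge after rescaling, they form several bubbles, and the limit weights
sum to zero over each of them, hence over the side of an edge joining two of them. -/
theorem isRealizable_of_tendsto {β ι : Type*} [Fintype ι] [Nontrivial ι] {T : SimpleGraph ι}
    (hT : T.IsTree) (U : Ultrafilter β) {w : β → ι → ℝ} {v : ι → ℝ}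
    (hw : ∀ i, Tendsto (fun n ↦ w n i) U (𝓝 (v i))) (hv : ∀ i, v i ≠ 0)
    (hside : ∀ a b S, IsEdgeSide T a b S → ∑ i ∈ S, v i ≠ 0)
    (hreal : ∀ᶠ n in U, IsRealizable T (w n)) : IsRealizable T v := by
  obtain ⟨c, hc⟩ := hreal.choice
  have hgraph : ∀ᶠ n in U, IsResidueConfig (c n) (w n) ∧ T = touchGraph (c n) (w n) := by
    filter_upwards [hc] with n ⟨⟨L, hL⟩, hle⟩
    exact ⟨⟨L, hL⟩, hL.eq_touchGraph_of_le hT.connected hle⟩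
  choose D B hmem hbubble hsum hconn huniv using exists_isBubble U hw hv hgraph
  by_contra hno
  obtain ⟨k⟩ := hT.connected.nonempty
  obtain ⟨a, ha, b, hb, hab⟩ := exists_adj_of_ne_univ hT.connected (hmem k) fun h ↦ hno (huniv k h)
  have heq : ∀ i j, j ∈ B i → B j = B i := fun i j hj ↦
    (hbubble j).eq_of_mem (hbubble i) (hmem j) hj
  obtain ⟨S, hS⟩ := exists_isEdgeSide hT.isAcyclic hab
  exact hside a b S hS (hS.sum_eq_zero hmem heq hsum hconn (heq k a ha ▸ hb))

/-! ### Flows on trees -/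

/-- Edge weights `t k l`, positive exactly on the edges of `T`, with a sign `ε` that alternates
along the edges: each edge carries the flow `ε k * t k l` from `k` to `l`. -/
structure IsSignedFlow {ι : Type*} (T : SimpleGraph ι) (ε : ι → ℝ) (t : ι → ι → ℝ) : Prop where
  sign : ∀ k, ε k = 1 ∨ ε k = -1
  sign_of_adj : ∀ k l, T.Adj k l → ε l = -ε k
  symm : ∀ k l, t k l = t l k
  pos : ∀ k l, T.Adj k l → 0 < t k l
  eq_zero : ∀ k l, ¬T.Adj k l → t k l = 0

/-- The total flow out of the vertex `k`. -/
def netFlow {ι : Type*} [Fintype ι] (ε : ι → ℝ) (t : ι → ι → ℝ) (k : ι) : ℝ :=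
  ε k * ∑ l, t k l

namespace IsSignedFlow

variable {ι : Type*} {T : SimpleGraph ι} {ε : ι → ℝ} {t t' : ι → ι → ℝ}

theorem sign_ne_zero (h : IsSignedFlow T ε t) (k : ι) : ε k ≠ 0 := by
  rcases h.sign k with hk | hk <;> simp [hk]

theorem nonneg (h : IsSignedFlow T ε t) (k l : ι) : 0 ≤ t k l := by
  by_cases hkl : T.Adj k l
  · exact (h.pos k l hkl).le
  · exact (h.eq_zero k l hkl).ge

theorem antisymm (h : IsSignedFlow T ε t) (k l : ι) : ε k * t k l = -(ε l * t l k) := by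
  by_cases hkl : T.Adj k l
  · rw [h.sign_of_adj k l hkl, h.symm k l, neg_mul, neg_neg]
  · rw [h.eq_zero k l hkl, h.eq_zero l k fun hlk ↦ hkl hlk.symm, mul_zero, mul_zero, neg_zero]

theorem sum_sum_eq_zero (h : IsSignedFlow T ε t) (S : Finset ι) :
    ∑ k ∈ S, ∑ l ∈ S, ε k * t k l = 0 := by
  refine self_eq_neg.mp ?_
  conv_lhs => rw [Finset.sum_comm]
  simp only [← Finset.sum_neg_distrib, ← h.antisymm]

theorem convexCombination (h : IsSignedFlow T ε t) (h' : IsSignedFlow T ε t') {s : ℝ}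
    (hs : s ∈ Icc 0 1) : IsSignedFlow T ε ((1 - s) • t + s • t') where
  sign := h.sign
  sign_of_adj := h.sign_of_adj
  symm k l := by simp [h.symm k l, h'.symm k l]
  pos k l hkl := convex_Ioi (0 : ℝ) (h.pos k l hkl) (h'.pos k l hkl) (sub_nonneg.mpr hs.2) hs.1
    (by ring)
  eq_zero k l hkl := by simp [h.eq_zero k l hkl, h'.eq_zero k l hkl]

variable [Fintype ι]

theorem sum_netFlow (h : IsSignedFlow T ε t) : ∑ k, netFlow ε t k = 0 := by
  simpa only [netFlow, Finset.mul_sum] using h.sum_sum_eq_zero Finset.univ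

theorem sum_pos [Nontrivial ι] (h : IsSignedFlow T ε t) (hT : T.Connected) (k : ι) :
    0 < ∑ l, t k l :=
  let ⟨l, hl⟩ := hT.preconnected.exists_adj_of_nontrivial k
  Finset.sum_pos' (fun l _ ↦ h.nonneg k l) ⟨l, Finset.mem_univ l, h.pos k l hl⟩

theorem netFlow_ne_zero [Nontrivial ι] (h : IsSignedFlow T ε t) (hT : T.Connected) (k : ι) :
    netFlow ε t k ≠ 0 :=
  mul_ne_zero (h.sign_ne_zero k) (h.sum_pos hT k).ne'

theorem sum_netFlow_of_isEdgeSide (h : IsSignedFlow T ε t) {a b : ι} {S : Finset ι}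
    (hS : IsEdgeSide T a b S) : ∑ i ∈ S, netFlow ε t i = ε a * t a b := by
  classical
  simp only [netFlow, ← Finset.sum_add_sum_compl S, mul_add, Finset.mul_sum]
  rw [Finset.sum_add_distrib, h.sum_sum_eq_zero, zero_add,
    Finset.sum_eq_single_of_mem a hS.left_mem,
    Finset.sum_eq_single_of_mem b (Finset.mem_compl.mpr hS.right_notMem)]
  · intro l hl hlb
    rw [h.eq_zero a l fun hal ↦ hlb (hS.eq_of_adj a l hal hS.left_mem (Finset.mem_compl.mp hl)).2,
      mul_zero]
  · refine fun k hk hka ↦ Finset.sum_eq_zero fun l hl ↦ ?_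
    rw [h.eq_zero k l fun hkl ↦ hka (hS.eq_of_adj k l hkl hk (Finset.mem_compl.mp hl)).1, mul_zero]

theorem sum_netFlow_ne_zero (h : IsSignedFlow T ε t) {a b : ι} {S : Finset ι}
    (hS : IsEdgeSide T a b S) : ∑ i ∈ S, netFlow ε t i ≠ 0 := by
  rw [h.sum_netFlow_of_isEdgeSide hS]
  exact mul_ne_zero (h.sign_ne_zero a) (h.pos a b hS.adj).ne'

theorem isRealizable_of_tendsto [Nontrivial ι] (h : IsSignedFlow T ε t) (hT : T.IsTree)
    {β : Type*} (U : Ultrafilter β) {w : β → ι → ℝ} (hw : Tendsto w U (𝓝 (netFlow ε t)))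
    (hreal : ∀ᶠ n in U, IsRealizable T (w n)) : IsRealizable T (netFlow ε t) :=
  Zannier.isRealizable_of_tendsto hT U (tendsto_pi_nhds.mp hw) (h.netFlow_ne_zero hT.connected)
    (fun _ _ _ ↦ h.sum_netFlow_ne_zero) hreal

/-- The continuity method: along the segment from `t` to `t'` realizability is an open and closed
condition. -/
theorem isRealizable_of_isRealizable [Nontrivial ι] (h : IsSignedFlow T ε t)
    (h' : IsSignedFlow T ε t') (hT : T.IsTree) (hreal : IsRealizable T (netFlow ε t)) :
    IsRealizable T (netFlow ε t') := by
  set w : ℝ → ι → ℝ := fun s ↦ netFlow ε ((1 - s) • t + s • t') with hw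
  have hcont : Continuous w := continuous_pi fun k ↦ by simp only [hw, netFlow]; fun_prop
  have hflow : ∀ s ∈ Icc (0 : ℝ) 1, IsSignedFlow T ε ((1 - s) • t + s • t') := fun s hs ↦
    h.convexCombination h' hs
  have hclosed : IsClosed ({s | IsRealizable T (w s)} ∩ Icc 0 1) := by
    refine isClosed_iff_ultrafilter.mpr fun s U hU hmem ↦ ?_
    have hs := isClosed_iff_ultrafilter.mp isClosed_Icc s U hU
      (mem_of_superset hmem inter_subset_right)
    exact ⟨(hflow s hs).isRealizable_of_tendsto hT U ((hcont.tendsto s).mono_left hU)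
      (mem_of_superset hmem inter_subset_left), hs⟩
  have hsub : Icc 0 1 ⊆ {s | IsRealizable T (w s)} := by
    refine hclosed.Icc_subset_of_forall_exists_gt (by simpa [hw] using hreal) ?_
    rintro s ⟨⟨c, hc, hTc⟩, hs⟩ r hr
    have hopen := ((hcont.tendsto s).eventually hc.eventually_exists_touchGraph_le).filter_mono
      (nhdsWithin_le_nhds (s := Ioi s))
    obtain ⟨s', hs', hmem⟩ := (hopen.and (Ioc_mem_nhdsGT (lt_min hr hs.2))).exists
    have hs'1 : s' ≤ 1 := hmem.2.trans (min_le_right _ _)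
    obtain ⟨c', hc', hle⟩ := hs' (hflow s' ⟨hs.1.trans hmem.1.le, hs'1⟩).sum_netFlow
    exact ⟨s', ⟨c', hc', hTc.trans hle⟩, hmem.1, hmem.2.trans (min_le_left _ _)⟩
  simpa [hw] using hsub (right_mem_Icc.mpr zero_le_one)

end IsSignedFlow

/-! ### The potential near infinity -/

theorem eventually_cobounded_forall_mul {p : ℂ → Prop} (h : ∀ᶠ x in cobounded ℂ, p x) :
    ∀ᶠ x in cobounded ℂ, ∀ ρ : ℝ, 1 ≤ ρ → p (ρ * x) := by
  obtain ⟨r, -, hr⟩ := hasBasis_cobounded_norm.eventually_iff.mp h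
  refine hasBasis_cobounded_norm.eventually_iff.mpr ⟨r, trivial, fun x hx ρ hρ ↦ hr ?_⟩
  rw [mem_ofPred_eq, norm_mul, Complex.norm_real, Real.norm_of_nonneg (zero_le_one.trans hρ)]
  exact hx.trans (le_mul_of_one_le_left (norm_nonneg x) hρ)

theorem tendsto_ofReal_mul_cobounded {x : ℂ} (hx : x ≠ 0) :
    Tendsto (fun s : ℝ ↦ s * x) atTop (cobounded ℂ) := by
  rw [← tendsto_norm_atTop_iff_cobounded]
  simpa using tendsto_abs_atTop_atTop.atTop_mul_const (norm_pos_iff.mpr hx)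

theorem eventually_cobounded_ne {ι : Type*} [Finite ι] (c : ι → ℂ) :
    ∀ᶠ x in cobounded ℂ, ∀ k, x ≠ c k :=
  Metric.cobounded_eq_cocompact (α := ℂ) ▸ eventually_cocompact_ne c

theorem re_neg_of_norm_sub_le {z A : ℂ} (hA : A ≠ 0) (hz : ‖z - A‖ ≤ 1 / 10 * ‖A‖)
    (hre : A.re ≤ -(1 / 2) * ‖A‖) : z.re < 0 := by
  have := norm_pos_iff.mpr hA
  have := (Complex.re_le_norm _).trans hz
  rw [Complex.sub_re] at this
  linarith

theorem half_norm_le_abs_re {z A : ℂ} (hz : ‖z - A‖ ≤ 1 / 10 * ‖A‖) (him : z.im = 0) :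
    1 / 2 * ‖A‖ ≤ |A.re| := by
  have hAim := (Complex.abs_im_le_norm _).trans hz
  rw [Complex.sub_im, him, zero_sub, abs_neg] at hAim
  linarith [Complex.norm_le_abs_re_add_abs_im A, norm_nonneg A]

theorem exists_rotation {M : ℕ} (hM : M ≠ 0) (L x : ℂ) :
    ∃ γ : ℝ → ℂ, Continuous γ ∧ γ 0 = x ∧ (∀ s, ‖γ s‖ = ‖x‖) ∧
      (∀ s ∈ Icc (0 : ℝ) 1, (L / γ s ^ M).re ≤ (L / x ^ M).re) ∧
      L / γ 1 ^ M = -(‖L / x ^ M‖ : ℂ) := by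
  set A := L / x ^ M with hA
  set φ := (-A).arg
  have hpolar : A = -(‖A‖ * Complex.exp (φ * Complex.I)) := by
    rw [← norm_neg, Complex.norm_mul_exp_arg_mul_I, neg_neg]
  let γ : ℝ → ℂ := fun s ↦ x * Complex.exp ((s * (φ / M) : ℝ) * Complex.I)
  have hγ (s : ℝ) : L / γ s ^ M = -(‖A‖ * Complex.exp (((1 - s) * φ : ℝ) * Complex.I)) := by
    calc L / γ s ^ M = A * Complex.exp (-((s * φ : ℝ) * Complex.I)) := by
          have hMc : (M : ℂ) ≠ 0 := mod_cast hM
          rw [mul_pow, ← Complex.exp_nat_mul, ← div_div, div_eq_mul_inv _ (Complex.exp _),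
            ← Complex.exp_neg, hA]
          congr 2
          push_cast
          field_simp
      _ = -(‖A‖ * (Complex.exp (φ * Complex.I) * Complex.exp (-((s * φ : ℝ) * Complex.I)))) := by
          conv_lhs => rw [hpolar]
          ring
      _ = _ := by
          rw [← Complex.exp_add]
          congr 3
          push_cast
          ring
  refine ⟨γ, by fun_prop, by simp [γ], fun s ↦ ?_, fun s hs ↦ ?_, by simp [hγ]⟩
  · rw [norm_mul, Complex.norm_exp_ofReal_mul_I, mul_one]
  have hcos : Real.cos φ ≤ Real.cos ((1 - s) * φ) := by
    rw [← Real.cos_abs φ, ← Real.cos_abs ((1 - s) * φ), abs_mul,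
      abs_of_nonneg (sub_nonneg.mpr hs.2)]
    exact Real.cos_le_cos_of_nonneg_of_le_pi 
      (mul_nonneg (sub_nonneg.mpr hs.2) (abs_nonneg _))
      (Complex.abs_arg_le_pi _) (mul_le_of_le_one_left (abs_nonneg _) (by linarith [hs.1]))
  have hre (θ : ℝ) : (-(‖A‖ * Complex.exp (θ * Complex.I))).re = -(‖A‖ * Real.cos θ) := by
    rw [Complex.neg_re, Complex.re_ofReal_mul, Complex.exp_ofReal_mul_I_re]
  conv_rhs => rw [hpolar]
  rw [hγ, hre, hre]
  gcongr

section Infinity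

variable {ι : Type*} [Fintype ι] {c : ι → ℂ} {w : ι → ℝ} {L x : ℂ}

theorem tendsto_prod_one_sub_mul_inv (c : ι → ℂ) :
    Tendsto (fun y ↦ ∏ k, (1 - c k * y⁻¹)) (cobounded ℂ) (𝓝 1) := by
  rw [← Finset.prod_const_one (s := (Finset.univ : Finset ι))]
  refine tendsto_finsetProd _ fun k _ ↦ ?_
  simpa using ((tendsto_inv₀_cobounded (α := ℂ)).const_mul (c k)).const_sub 1

theorem HasResidues.isEquivalent_mul_sum_weight_div [Nonempty ι] (h : HasResidues c w L) :
    Asymptotics.IsEquivalent (cobounded ℂ) (fun y ↦ y * ∑ k, (w k : ℂ) / (y - c k))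
      (fun y ↦ L / y ^ (Fintype.card ι - 1)) := by
  refine Asymptotics.isEquivalent_of_tendsto_one ?_
  refine (by simpa using (tendsto_prod_one_sub_mul_inv c).inv₀ one_ne_zero :
    Tendsto (fun y ↦ (∏ k, (1 - c k * y⁻¹))⁻¹) (cobounded ℂ) (𝓝 1)).congr' ?_
  filter_upwards [eventually_cobounded_ne c,
    eventually_ne_cobounded 0] with y hy hy0
  have hprod : ∏ k, (y - c k) = y ^ (Fintype.card ι - 1) * y * ∏ k, (1 - c k * y⁻¹) := by
    rw [← pow_succ, Nat.sub_add_cancel Fintype.card_pos, ← Finset.card_univ, ← Finset.prod_const,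
      ← Finset.prod_mul_distrib]
    exact Finset.prod_congr rfl fun k _ ↦ by field_simp
  have := h.ne_zero
  rw [Pi.div_apply, h.sum_weight_div hy, hprod]
  field_simp

theorem HasResidues.eventually_norm_sub_le [Nonempty ι] (h : HasResidues c w L) :
    ∀ᶠ y in cobounded ℂ, ‖y * ∑ k, (w k : ℂ) / (y - c k) - L / y ^ (Fintype.card ι - 1)‖ ≤
      1 / 10 * ‖L / y ^ (Fintype.card ι - 1)‖ :=
  h.isEquivalent_mul_sum_weight_div.isLittleO.def (by norm_num)

/-- The potential vanishes at infinity and decreases along the ray from `x`. -/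
theorem logPotential_pos_of_forall_re_neg (hw : ∑ k, w k = 0) (hx : x ≠ 0)
    (hne : ∀ ρ : ℝ, 1 ≤ ρ → ∀ k, ρ * x ≠ c k)
    (hneg : ∀ ρ : ℝ, 1 ≤ ρ → (x * ∑ k, (w k : ℂ) / (ρ * x - c k)).re < 0) :
    0 < logPotential c w x := by
  have hderiv (ρ : ℝ) (hρ : 1 ≤ ρ) : HasDerivAt (fun s : ℝ ↦ logPotential c w (s * x))
      (x * ∑ k, (w k : ℂ) / (ρ * x - c k)).re ρ :=
    hasDerivAt_logPotential_comp (by simpa using Complex.ofRealCLM.hasDerivAt.mul_const x)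
      (hne ρ hρ)
  have hanti : StrictAntiOn (fun s : ℝ ↦ logPotential c w (s * x)) (Ici 1) := by
    refine strictAntiOn_of_deriv_neg (convex_Ici 1)
      (fun ρ hρ ↦ (hderiv ρ hρ).continuousAt.continuousWithinAt) fun ρ hρ ↦ ?_
    rw [interior_Ici] at hρ
    rw [(hderiv ρ hρ.le).deriv]
    exact hneg ρ hρ.le
  have hray := Metric.cobounded_eq_cocompact (α := ℂ) ▸ tendsto_ofReal_mul_cobounded hx
  have htwo : 0 ≤ logPotential c w ((2 : ℝ) * x) := by
    refine le_of_tendsto ((tendsto_logPotential (c := c) hw).comp hray) ?_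
    filter_upwards [eventually_ge_atTop 2] with ρ hρ
    exact hanti.antitoneOn (by norm_num) (by simp only [mem_Ici]; linarith) hρ
  have hlt := hanti (mem_Ici.mpr le_rfl) (by norm_num : (2 : ℝ) ∈ Ici 1) one_lt_two
  simp only [Complex.ofReal_one, one_mul] at hlt
  exact htwo.trans_lt hlt

theorem potential_pos_iff (hx : ∀ k, x ≠ c k) : 0 < potential c w x ↔ 0 < logPotential c w x := by
  have htanh := strictMono_tanh.lt_iff_lt (a := 0) (b := logPotential c w x / 2)
  rw [Real.tanh_zero, lt_div_iff₀ two_pos, zero_mul] at htanh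
  rw [potential_eq_tanh hx, htanh]

theorem HasResidues.eventually_potential_pos [Nontrivial ι] (h : HasResidues c w L) :
    ∀ᶠ x in cobounded ℂ,
      (L / x ^ (Fintype.card ι - 1)).re ≤ -(1 / 2) * ‖L / x ^ (Fintype.card ι - 1)‖ →
      0 < potential c w x := by
  filter_upwards [eventually_cobounded_forall_mul h.eventually_norm_sub_le,
    eventually_cobounded_forall_mul (eventually_cobounded_ne c), eventually_ne_cobounded 0]
    with x hnear hne hx hre
  rw [potential_pos_iff (by simpa using hne 1 le_rfl)]
  refine logPotential_pos_of_forall_re_neg h.sum_weight_eq_zero hx hne fun ρ hρ ↦ ?_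
  have hρ0 : 0 < ρ := zero_lt_one.trans_le hρ
  set A := L / x ^ (Fintype.card ι - 1) with hA
  have hscale : L / (ρ * x) ^ (Fintype.card ι - 1) =
      ((ρ ^ (Fintype.card ι - 1))⁻¹ : ℝ) * A := by
    rw [mul_pow, hA]
    push_cast
    field_simp
  have hmul := re_neg_of_norm_sub_le (div_ne_zero h.ne_zero (pow_ne_zero _ (mul_ne_zero
    (Complex.ofReal_ne_zero.mpr hρ0.ne') hx))) (hnear ρ hρ) (by
      rw [hscale, Complex.re_ofReal_mul, norm_mul, Complex.norm_real,
        Real.norm_of_nonneg (by positivity), mul_left_comm]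
      gcongr)
  rw [mul_assoc, Complex.re_ofReal_mul] at hmul
  exact (pos_iff_neg_of_mul_neg hmul).mp hρ0

theorem im_mul_sum_weight_div_eq_zero (hx : ∀ k, x ≠ c k)
    (hmax : IsLocalMaxOn (potential c w) (Metric.sphere 0 ‖x‖) x) :
    (x * ∑ k, (w k : ℂ) / (x - c k)).im = 0 := by
  let γ : ℝ → ℂ := fun θ ↦ x * Complex.exp (θ * Complex.I)
  have hγ0 : γ 0 = x := by simp [γ]
  have hγ : HasDerivAt γ (x * Complex.I) 0 := by
    simpa using ((Complex.ofRealCLM.hasDerivAt (x := 0)).mul_const Complex.I).cexp.const_mul x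
  have hderiv := hasDerivAt_logPotential_comp (w := w) hγ (by simpa [hγ0] using hx)
  have hlim : Tendsto γ (𝓝 0) (𝓝[Metric.sphere 0 ‖x‖] x) := by
    refine tendsto_nhdsWithin_iff.mpr ⟨hγ0 ▸ hγ.continuousAt, Eventually.of_forall fun θ ↦ ?_⟩
    simp [γ, Complex.norm_exp_ofReal_mul_I]
  have hlocal : IsLocalMax (fun θ ↦ logPotential c w (γ θ)) 0 := by
    filter_upwards [hlim.eventually hmax,
      (hlim.mono_right nhdsWithin_le_nhds).eventually (eventually_nhds_ne hx)] with θ hle hne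
    rw [hγ0]
    exact not_lt.mp fun hlt ↦ hle.not_gt ((potential_lt_potential_iff hx hne).mpr hlt)
  have hzero := hlocal.hasDerivAt_eq_zero hderiv
  rwa [hγ0, mul_right_comm, Complex.mul_I_re, neg_eq_zero] at hzero

theorem HasResidues.eventually_re_neg_of_isLocalMaxOn [Nontrivial ι] (h : HasResidues c w L) :
    ∀ᶠ x in cobounded ℂ, 0 < potential c w x →
      IsLocalMaxOn (potential c w) (Metric.sphere 0 ‖x‖) x →
      (L / x ^ (Fintype.card ι - 1)).re ≤ -(1 / 2) * ‖L / x ^ (Fintype.card ι - 1)‖ := by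
  filter_upwards [h.eventually_norm_sub_le, eventually_cobounded_ne c,
    h.neg.eventually_potential_pos] with x hnear hx hneg hpos hmax
  rw [neg_div, Complex.neg_re, norm_neg, potential_neg, Pi.neg_apply, neg_pos] at hneg
  rcases le_abs'.mp (half_norm_le_abs_re hnear (im_mul_sum_weight_div_eq_zero hx hmax)) with
    hre | hre
  · linarith
  · exact absurd (hneg (by linarith)) hpos.not_gt

theorem HasResidues.eventually_exists_isLocalMaxOn_mem_cell [Nontrivial ι]
    (h : HasResidues c w L) {b : ι} (hb : w b < 0) :
    ∀ᶠ r in atTop, ∃ x ∈ cell (-potential c w) 0 (c b), ‖x‖ = r ∧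
      IsLocalMaxOn (potential c w) (Metric.sphere 0 ‖x‖) x := by
  filter_upwards [eventually_gt_atTop ‖c b‖] with r hr
  have hpole : (-potential c w) (c b) = -1 := by
    rw [Pi.neg_apply, potential_of_neg h.injective hb]
  have hcont : Continuous (potential c w) := continuous_potential h.injective
  obtain ⟨y, hy, hyr⟩ := exists_mem_norm_eq isPreconnected_cell
    (h.isRegularPotential.neg.not_isBounded_cell_zero hpole)
    (mem_cell_self (by rw [hpole]; norm_num)) hr
  have hyK : y ∈ closure (cell (-potential c w) 0 (c b)) ∩ Metric.sphere 0 r :=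
    ⟨subset_closure hy, by simpa using hyr⟩
  obtain ⟨x, ⟨hxcl, hxr⟩, hmax⟩ := ((isCompact_sphere _ _).inter_left
    isClosed_closure).exists_isMaxOn ⟨y, hyK⟩ hcont.continuousOn
  rw [mem_sphere_zero_iff_norm] at hxr
  have hx : x ∈ cell (-potential c w) 0 (c b) := mem_cell_of_mem_closure hxcl <|
    neg_lt_zero.mpr ((pos_of_mem_cell_neg hy).trans_le (hmax hyK))
  refine ⟨x, hx, hxr, ?_⟩
  filter_upwards [mem_nhdsWithin_of_mem_nhds ((isOpen_cell hcont.neg).mem_nhds hx),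
    self_mem_nhdsWithin] with z hz hzr
  exact hmax ⟨subset_closure hz, hxr ▸ hzr⟩

theorem HasResidues.frequently_mem_cell_and_eq_neg [Nontrivial ι] (h : HasResidues c w L) {b : ι}
    (hb : w b < 0) : ∃ᶠ x in cobounded ℂ, x ∈ cell (-potential c w) 0 (c b) ∧
      ∃ A : ℝ, 0 < A ∧ L / x ^ (Fintype.card ι - 1) = -(A : ℂ) := by
  refine hasBasis_cobounded_norm.frequently_iff.mpr fun r₀ _ ↦ ?_
  obtain ⟨r₁, -, hfar⟩ := hasBasis_cobounded_norm.eventually_iff.mp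
    (h.eventually_potential_pos.and (h.eventually_re_neg_of_isLocalMaxOn.and
      (eventually_ne_cobounded 0)))
  obtain ⟨r, ⟨x, hxcell, hxr, hmax⟩, hr⟩ := ((h.eventually_exists_isLocalMaxOn_mem_cell hb).and
    (eventually_ge_atTop (max r₀ r₁))).exists
  rw [← hxr, max_le_iff] at hr
  have hre := (hfar hr.2).2.1 (pos_of_mem_cell_neg hxcell) hmax
  obtain ⟨γ, hγ, hγ0, hnorm, hγre, hγ1⟩ := exists_rotation
    (Nat.sub_ne_zero_of_lt (Fintype.one_lt_card (α := ι))) L x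
  have hpos : ∀ s ∈ Icc (0 : ℝ) 1, 0 < potential c w (γ s) := fun s hs ↦
    (hfar (hr.2.trans (hnorm s).ge)).1 <| by
      rw [norm_div, norm_pow, hnorm, ← norm_pow, ← norm_div]
      exact (hγre s hs).trans hre
  refine ⟨γ 1, hr.1.trans (hnorm 1).ge, ?_, _, norm_pos_iff.mpr ?_, hγ1⟩
  · rw [cell_eq_of_mem hxcell]
    refine hγ0 ▸ subset_cell (isPreconnected_Icc.image γ hγ.continuousOn)
      (mem_image_of_mem γ (left_mem_Icc.mpr zero_le_one)) ?_
      (mem_image_of_mem γ (right_mem_Icc.mpr zero_le_one))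
    rintro _ ⟨s, hs, rfl⟩
    exact neg_lt_zero.mpr (hpos s hs)
  · exact div_ne_zero h.ne_zero (pow_ne_zero _ (hfar hr.2).2.2)

end Infinity

/-! ### Attaching a leaf -/

theorem tendsto_div_pow_atTop (A : ℝ) {M : ℕ} (hM : M ≠ 0) :
    Tendsto (fun T : ℝ ↦ A / T ^ M) atTop (𝓝 0) :=
  tendsto_const_nhds.div_atTop (tendsto_pow_atTop hM)

section AttachWeight

variable {κ : Type*} [DecidableEq κ]

/-- The weights obtained from `w` by hanging on the point `b` a new point `none` of weight `s`, the
weight of `b` being diminished by `s` so that the total weight does not change. -/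
def attachWeight (w : κ → ℝ) (b : κ) (s : ℝ) : Option κ → ℝ :=
  Option.elim' s (w - Pi.single b s)

theorem attachWeight_zero_comp_some (w : κ → ℝ) (b : κ) : attachWeight w b 0 ∘ some = w := by
  ext k
  simp [attachWeight]

theorem continuous_attachWeight (w : κ → ℝ) (b : κ) : Continuous (attachWeight w b) := by
  refine continuous_pi fun i ↦ ?_
  cases i with
  | none => exact continuous_id
  | some k =>
    simp only [attachWeight, Option.elim'_some, Pi.sub_apply]
    have hsingle : Continuous fun s : ℝ ↦ (Pi.single b s : κ → ℝ) :=
      continuous_single (A := fun _ ↦ ℝ) b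
    exact continuous_const.sub (continuous_pi_iff.mp hsingle k)

theorem attachWeight_ne_zero {w : κ → ℝ} (hw : ∀ k, w k ≠ 0) {b : κ} (hb : w b < 0) {s : ℝ}
    (hs : 0 < s) (i : Option κ) : attachWeight w b s i ≠ 0 := by
  rcases i with _ | k
  · exact hs.ne'
  · rcases eq_or_ne k b with rfl | hk
    · simp only [attachWeight, Option.elim'_some, Pi.sub_apply, Pi.single_eq_same]
      linarith
    · simpa [attachWeight, hk] using hw k

end AttachWeight

section Attach

variable {κ : Type*} [Fintype κ]

theorem eventually_re_prod_div_pos (c : κ → ℂ) :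
    ∀ᶠ x : ℂ in cobounded ℂ, ∀ᶠ u : κ → ℂ in 𝓝 c, ∀ ρ σ : ℝ, 1 ≤ ρ → 1 ≤ σ →
      (∀ k, σ * x ≠ u k) ∧ 0 < (∏ k, (ρ * x - u k) / (σ * x - u k)).re := by
  let F : (κ → ℂ) × ℂ × ℂ → ℂ := fun p ↦ ∏ k, (1 - p.1 k * p.2.1) / (1 - p.1 k * p.2.2)
  have hcont : ContinuousAt (fun p ↦ (F p).re) (c, 0, 0) :=
    Complex.continuous_re.continuousAt.comp <| tendsto_finsetProd _ fun k _ ↦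
      ContinuousAt.div (by fun_prop) (by fun_prop) (by simp)
  have hne : ∀ᶠ p : (κ → ℂ) × ℂ × ℂ in 𝓝 (c, 0, 0), ∀ k, 1 - p.1 k * p.2.2 ≠ 0 :=
    eventually_all.mpr fun k ↦ ContinuousAt.eventually_ne (by fun_prop) (by simp)
  have hev := hne.and (hcont.eventually (lt_mem_nhds (by simp [F] : 0 < (F (c, 0, 0)).re)))
  rw [nhds_prod_eq, nhds_prod_eq] at hev
  obtain ⟨N, hN, Z, hZ, hNZ⟩ := mem_prod_iff.mp hev
  obtain ⟨S, hS, hSZ⟩ := mem_prod_same_iff.mp hZ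
  filter_upwards [eventually_cobounded_forall_mul (tendsto_inv₀_cobounded.eventually hS),
    eventually_ne_cobounded 0] with x hxS hx
  filter_upwards [hN] with u hu ρ σ hρ hσ
  obtain ⟨hune, hupos⟩ := hNZ (mk_mem_prod hu (hSZ (mk_mem_prod (hxS ρ hρ) (hxS σ hσ))))
  have hρ0 : 0 < ρ := zero_lt_one.trans_le hρ
  have hσ0 : 0 < σ := zero_lt_one.trans_le hσ
  have hρC : (ρ : ℂ) ≠ 0 := Complex.ofReal_ne_zero.mpr hρ0.ne'
  have hσC : (σ : ℂ) ≠ 0 := Complex.ofReal_ne_zero.mpr hσ0.ne'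
  have hρx : (ρ : ℂ) * x ≠ 0 := mul_ne_zero hρC hx
  have hσx : (σ : ℂ) * x ≠ 0 := mul_ne_zero hσC hx
  dsimp only at hune
  have hσu : ∀ k, σ * x ≠ u k := fun k hk ↦ hune k (by rw [← hk, mul_inv_cancel₀ hσx, sub_self])
  refine ⟨hσu, ?_⟩
  have hfactor (k : κ) : (ρ * x - u k) / (σ * x - u k) =
      ((ρ / σ : ℝ) : ℂ) * ((1 - u k * (ρ * x)⁻¹) / (1 - u k * (σ * x)⁻¹)) := by
    have hinv {z : ℂ} (hz : z ≠ 0) : 1 - u k * z⁻¹ = (z - u k) / z := by field_simp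
    rw [hinv hρx, hinv hσx]
    push_cast
    generalize (σ : ℂ) * x - u k = v
    field_simp
  rw [Finset.prod_congr rfl fun k _ ↦ hfactor k, Finset.prod_mul_distrib, Finset.prod_const,
    ← Complex.ofReal_pow, Complex.re_ofReal_mul]
  exact mul_pos (by positivity) hupos

theorem HasResidues.weight_none_mul_prod {R L : ℂ} {u : κ → ℂ} {w : Option κ → ℝ}
    (h : HasResidues (Option.elim' R u) w L) : (w none : ℂ) * ∏ k, (R - u k) = L := by
  rw [← h.weight_mul_prod none,
    Finset.prod_congr (s₂ := Finset.univ.map .some) (by ext (_ | k) <;> simp) fun _ _ ↦ rfl,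
    Finset.prod_map]
  rfl

theorem HasResidues.neg_mul_sum_weight_div {L x : ℂ} {T t : ℝ} {u : κ → ℂ} {w : Option κ → ℝ}
    (h : HasResidues (Option.elim' (T * x) u) w L) (hx : x ≠ 0) (ht : t ≠ 0)
    (hne : ∀ k, ((T - t : ℝ) * x : ℂ) ≠ Option.elim' (T * x) u k) :
    -x * ∑ k, (w k : ℂ) / ((T - t : ℝ) * x - Option.elim' (T * x) u k) =
      (w none / t : ℝ) * ∏ k, (T * x - u k) / ((T - t : ℝ) * x - u k) := by
  have ht' : (t : ℂ) ≠ 0 := Complex.ofReal_ne_zero.mpr ht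
  rw [h.sum_weight_div hne, Fintype.prod_option, ← h.weight_none_mul_prod, Finset.prod_div_distrib]
  simp only [Option.elim'_none, Option.elim'_some]
  rw [show ((T - t : ℝ) * x - T * x : ℂ) = t * -x by push_cast; ring, Complex.ofReal_div]
  field_simp

/-- On the segment from `T * x` to `x` the potential increases, so this segment crosses from the
cell of the new point to that of `u b`. -/
theorem HasResidues.adj_none_some {L x : ℂ} {T : ℝ} {u : κ → ℂ} {w : Option κ → ℝ} {b : κ}
    (h : HasResidues (Option.elim' (T * x) u) w L) (hnone : 0 < w none) (hb : w (some b) < 0)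
    (hT : 1 < T) (hx : x ≠ 0) (hne : ∀ σ : ℝ, 1 ≤ σ → ∀ k, σ * x ≠ u k)
    (hre : ∀ σ : ℝ, 1 ≤ σ → 0 < (∏ k, (T * x - u k) / (σ * x - u k)).re)
    (hcell : x ∈ cell (-potential (Option.elim' (T * x) u) w) 0 (u b)) :
    (touchGraph (Option.elim' (T * x) u) w).Adj none (some b) := by
  set c := Option.elim' (T * x) u with hc
  have hcont : Continuous (potential c w) := continuous_potential h.injective
  let γ : ℝ → ℂ := fun t ↦ T * x + t * -x
  have hγ (t : ℝ) : γ t = (T - t : ℝ) * x := by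
    simp only [γ]
    push_cast
    ring
  have hγc : Continuous γ := by fun_prop
  have havoid : ∀ t ∈ Ioc 0 (T - 1), ∀ k, γ t ≠ c k := by
    rintro t ⟨ht, htT⟩ (_ | k)
    · simpa [γ, hc, hx] using ht.ne'
    · exact hγ t ▸ hne _ (by linarith) k
  have hpos : ∀ t ∈ Ioc 0 (T - 1), 0 < (-x * ∑ k, (w k : ℂ) / (γ t - c k)).re := by
    intro t ht
    rw [hγ, h.neg_mul_sum_weight_div hx ht.1.ne' (hγ t ▸ havoid t ht), Complex.re_ofReal_mul]
    exact mul_pos (div_pos hnone ht.1) (hre _ (by linarith [ht.2]))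
  have hstart : ∀ᶠ t in 𝓝[>] 0, γ t ∈ cell (potential c w) 0 (c none) := by
    refine nhdsWithin_le_nhds (hγc.continuousAt.eventually_mem ((isOpen_cell hcont).mem_nhds ?_))
    have : γ 0 = c none := by simp [γ, hc]
    rw [this]
    exact mem_cell_self (by rw [potential_of_pos h.injective hnone]; norm_num)
  obtain ⟨s, hs, hs0, hsT⟩ := (hstart.and (Ioo_mem_nhdsGT (sub_pos.mpr hT))).exists
  refine Or.inl ⟨hnone, hb, cellsTouch_of_strictMonoOn hsT hcont hγc.continuousOn
    (strictMonoOn_potential_line (fun t ht ↦ havoid t ⟨hs0.trans_le ht.1, ht.2⟩)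
      fun t ht ↦ hpos t ⟨hs0.trans_le ht.1, ht.2⟩) hs ?_⟩
  simpa [hγ, hc] using hcell

variable {c : κ → ℂ} {w : κ → ℝ} {L x : ℂ} {b : κ} {A : ℝ}

theorem HasResidues.tendsto_neg_mul_pow (h : HasResidues c w L) (hx : x ≠ 0)
    (hA : L / x ^ (Fintype.card κ - 1) = -(A : ℂ)) {j : ℕ}
    (hj : j + 1 ≤ Fintype.card κ - 1) :
    Tendsto (fun T : ℝ ↦ -((A / T ^ (Fintype.card κ - 1) : ℝ) : ℂ) * (T * x) ^ (j + 1)) atTop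
      (𝓝 (∑ k, (w k : ℂ) * c k ^ (j + 1))) := by
  set M := Fintype.card κ - 1
  have hlimit : ∑ k, (w k : ℂ) * c k ^ (j + 1) = L * 0 ^ (M - (j + 1)) := by
    rcases hj.eq_or_lt with hjM | hjM
    · rw [h.sum_weight_mul_pow_top (by omega), ← hjM, Nat.sub_self, pow_zero, mul_one]
    · rw [h.sum_weight_mul_pow (by omega), zero_pow (by omega), mul_zero]
  rw [hlimit]
  refine (((tendsto_inv₀_cobounded.comp (tendsto_ofReal_mul_cobounded hx)).pow
    (M - (j + 1))).const_mul L).congr' ?_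
  filter_upwards [eventually_ne_atTop 0] with T hT
  have hT : (T : ℂ) ≠ 0 := Complex.ofReal_ne_zero.mpr hT
  have hL : L = -(A : ℂ) * x ^ M := by rw [← hA, div_mul_cancel₀ _ (pow_ne_zero _ hx)]
  have hpow : (T * x) ^ M = (T * x) ^ (M - (j + 1)) * (T * x) ^ (j + 1) := by
    rw [← pow_add, Nat.sub_add_cancel hj]
  rw [Function.comp_apply, inv_pow, ← div_eq_mul_inv, div_eq_iff (by positivity), mul_assoc,
    mul_comm (_ ^ (j + 1)), ← hpow, hL, mul_pow]
  push_cast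
  field_simp

variable [DecidableEq κ]

theorem sum_attachWeight (w : κ → ℝ) (b : κ) (s : ℝ) : ∑ i, attachWeight w b s i = ∑ k, w k := by
  simp [attachWeight, Fintype.sum_option]

theorem isResidueConfig_attachWeight {R : ℂ} {u : κ → ℂ} {s : ℝ}
    (hu : Function.Injective u) (hR : ∀ k, u k ≠ R) (hw : ∀ i, attachWeight w b s i ≠ 0)
    (hsum : ∑ k, w k = 0) (hmom : ∀ j : Fin (Fintype.card κ - 1),
      (moments _ (u, fun k ↦ (attachWeight w b s (some k) : ℂ))).1 j = -s * R ^ ((j : ℕ) + 1)) :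
    IsResidueConfig (Option.elim' R u) (attachWeight w b s) := by
  refine isResidueConfig_of_moments ?_ hw fun j hj ↦ ?_
  · rintro (_ | k) (_ | l) hkl
    · rfl
    · exact absurd hkl.symm (hR l)
    · exact absurd hkl (hR k)
    · exact congrArg some (hu hkl)
  rw [Fintype.card_option] at hj
  cases j with
  | zero =>
    simp only [pow_zero, mul_one]
    rw [← Complex.ofReal_sum, sum_attachWeight, hsum, Complex.ofReal_zero]
  | succ j =>
    rw [Fintype.sum_option]
    simp only [Option.elim'_none, Option.elim'_some]
    rw [show ∑ k, (attachWeight w b s (some k) : ℂ) * u k ^ (j + 1) = _ from hmom ⟨j, by omega⟩]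
    simp [attachWeight]

theorem HasResidues.frequently_isResidueConfig_attachWeight [Nontrivial κ] (h : HasResidues c w L)
    (hb : w b < 0) (hx : x ≠ 0) (hA : 0 < A) (hLA : L / x ^ (Fintype.card κ - 1) = -(A : ℂ)) :
    ∃ᶠ p : (κ → ℂ) × ℝ in 𝓝 c ×ˢ atTop, IsResidueConfig (Option.elim' (p.2 * x) p.1)
      (attachWeight w b (A / p.2 ^ (Fintype.card κ - 1))) := by
  set M := Fintype.card κ - 1
  have hM0 : M ≠ 0 := Nat.sub_ne_zero_of_lt Fintype.one_lt_card
  refine frequently_iff.mpr fun {U} hU ↦ ?_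
  have hsep : ∀ᶠ p : (κ → ℂ) × ℝ in 𝓝 c ×ˢ atTop, ∀ k, p.1 k ≠ p.2 * x :=
    eventually_all.mpr fun k ↦ ((tendsto_sub_cobounded
      (((continuous_apply k).tendsto c).comp tendsto_fst)
      ((tendsto_ofReal_mul_cobounded hx).comp tendsto_snd)).eventually
        (eventually_ne_cobounded 0)).mono fun p hp ↦ sub_ne_zero.mp hp
  obtain ⟨N, hN, Z, hZ, hNZ⟩ := mem_prod_iff.mp (inter_mem hU hsep)
  have htarget : Tendsto (fun T : ℝ ↦ ((fun j : Fin M ↦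
      -((A / T ^ M : ℝ) : ℂ) * (T * x) ^ ((j : ℕ) + 1)),
      fun k ↦ (attachWeight w b (A / T ^ M) (some k) : ℂ))) atTop
      (𝓝 (moments M (c, fun k ↦ (w k : ℂ)))) := by
    refine (tendsto_pi_nhds.mpr fun j ↦ h.tendsto_neg_mul_pow hx hLA j.2).prodMk_nhds
      (tendsto_pi_nhds.mpr fun k ↦ (Complex.continuous_ofReal.tendsto _).comp ?_)
    have := tendsto_pi_nhds.mp (((continuous_attachWeight w b).tendsto 0).comp
      (tendsto_div_pow_atTop A hM0)) (some k)
    rwa [← Function.comp_apply (f := attachWeight w b 0), attachWeight_zero_comp_some] at this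
  obtain ⟨T, ⟨⟨u, huN, huinj, hu⟩, hTZ⟩, hT⟩ := (((htarget.eventually
    (eventually_exists_moments_eq (Nat.sub_le _ _) h.injective
      (fun k ↦ Complex.ofReal_ne_zero.mpr (h.weight_ne_zero k)) hN)).and hZ).and
    (eventually_gt_atTop 0)).exists
  obtain ⟨hU, hsep⟩ := hNZ (mk_mem_prod huN hTZ)
  exact ⟨(u, T), hU, isResidueConfig_attachWeight huinj hsep
    (attachWeight_ne_zero h.weight_ne_zero hb (by positivity)) h.sum_weight_eq_zero
    fun j ↦ congrFun (congrArg Prod.fst hu) j⟩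

theorem IsResidueConfig.convergesTo_attachWeight [Nontrivial κ] (h : IsResidueConfig c w) (b : κ)
    (hx : x ≠ 0) (A : ℝ) :
    ConvergesTo ((𝓝 c ×ˢ atTop) ⊓ 𝓟 {p : (κ → ℂ) × ℝ | IsResidueConfig
        (Option.elim' (p.2 * x) p.1) (attachWeight w b (A / p.2 ^ (Fintype.card κ - 1)))})
      (fun p ↦ Option.elim' (p.2 * x) p.1)
      (fun p ↦ attachWeight w b (A / p.2 ^ (Fintype.card κ - 1))) some c (attachWeight w b 0) where
  injective := Option.some_injective κ
  tendsto k := (((continuous_apply k).tendsto c).comp tendsto_fst).mono_left inf_le_left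
  tendsto_cobounded i hi := by
    cases i with
    | none => exact ((tendsto_ofReal_mul_cobounded hx).comp tendsto_snd).mono_left inf_le_left
    | some k => exact absurd (mem_range_self k) hi
  tendsto_weight := tendsto_pi_nhds.mp <| ((((continuous_attachWeight w b).tendsto 0).comp
    (tendsto_div_pow_atTop A (Nat.sub_ne_zero_of_lt Fintype.one_lt_card))).comp
    tendsto_snd).mono_left inf_le_left
  isResidueConfig := mem_inf_of_right (mem_principal_self _)
  isResidueConfig_limit := by rwa [attachWeight_zero_comp_some]

theorem IsResidueConfig.exists_attachWeight [Nontrivial κ] (h : IsResidueConfig c w)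
    (hb : w b < 0) : ∃ s > 0, ∃ c', IsResidueConfig c' (attachWeight w b s) ∧
      (∀ k l, (touchGraph c w).Adj k l →
        (touchGraph c' (attachWeight w b s)).Adj (some k) (some l)) ∧
      (touchGraph c' (attachWeight w b s)).Adj none (some b) := by
  obtain ⟨L, hL⟩ := h
  obtain ⟨x, ⟨hcell, A, hA, hLA⟩, hsector, hx⟩ :=
    ((hL.frequently_mem_cell_and_eq_neg hb).and_eventually
      ((eventually_re_prod_div_pos c).and (eventually_ne_cobounded 0))).exists
  have hconv := IsResidueConfig.convergesTo_attachWeight ⟨L, hL⟩ b hx A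
  have hneBot := frequently_iff_neBot.mp (hL.frequently_isResidueConfig_attachWeight hb hx hA hLA)
  have hsome := attachWeight_zero_comp_some w b
  obtain ⟨⟨u, T⟩, ⟨⟨hcfg, hadj⟩, hcellT⟩, hT, hsector⟩ := (((hconv.isResidueConfig.and
    hconv.eventually_adj_touchGraph).and (hconv.neg.eventually_mem_cell (k := b) (x := x) (by
      rwa [Pi.neg_comp, hsome, potential_neg]))).and
    ((tendsto_snd.mono_left inf_le_left).eventually (eventually_gt_atTop 1) |>.and
      ((tendsto_fst.mono_left inf_le_left).eventually hsector))).exists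
  rw [hsome] at hadj
  obtain ⟨Λ, hΛ⟩ := hcfg
  have hs : 0 < A / T ^ (Fintype.card κ - 1) := by positivity
  refine ⟨_, hs, _, ⟨Λ, hΛ⟩, hadj, hΛ.adj_none_some hs ?_ hT hx
    (fun σ hσ ↦ (hsector T σ hT.le hσ).1) (fun σ hσ ↦ (hsector T σ hT.le hσ).2) ?_⟩
  · simp only [attachWeight, Option.elim'_some, Pi.sub_apply, Pi.single_eq_same]
    linarith
  · rwa [← potential_neg]

end Attach

/-! ### Every flow on a tree is realizable -/

section Reindex

variable {ι κ : Type*} [Fintype ι] [Fintype κ] {T : SimpleGraph ι} {w : ι → ℝ}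
  {c : ι → ℂ}

theorem potential_comp_equiv (e : κ ≃ ι) (c : ι → ℂ) (w : ι → ℝ) :
    potential (c ∘ e) (w ∘ e) = potential c w := by
  have hprod (v : ι → ℝ) : posProd (c ∘ e) (v ∘ e) = posProd c v :=
    funext fun x ↦ e.prod_comp fun k ↦ ‖x - c k‖ ^ max (v k) 0
  ext x
  rw [potential, potential, hprod w, show -(w ∘ e) = (-w) ∘ e from rfl, hprod (-w)]

theorem touchGraph_comp_equiv (e : κ ≃ ι) (c : ι → ℂ) (w : ι → ℝ) :
    touchGraph (c ∘ e) (w ∘ e) = (touchGraph c w).comap e := by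
  ext k l
  simp only [touchGraph, potential_comp_equiv, SimpleGraph.comap_adj, Function.comp_apply]

theorem IsResidueConfig.comp_equiv (h : IsResidueConfig c w) (e : κ ≃ ι) :
    IsResidueConfig (c ∘ e) (w ∘ e) := by
  obtain ⟨L, hL⟩ := h
  refine isResidueConfig_of_moments (hL.injective.comp e.injective)
    (fun k ↦ hL.weight_ne_zero (e k)) fun j hj ↦ ?_
  rw [Fintype.card_congr e] at hj
  exact (e.sum_comp fun k ↦ (w k : ℂ) * c k ^ j).trans (hL.sum_weight_mul_pow hj)

theorem IsRealizable.of_comap (e : κ ≃ ι) (h : IsRealizable (T.comap e) (w ∘ e)) :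
    IsRealizable T w := by
  obtain ⟨c, hc, hle⟩ := h
  have hw : (w ∘ e) ∘ e.symm = w := funext fun k ↦ congrArg w (e.apply_symm_apply k)
  have hconfig := hc.comp_equiv e.symm
  have hgraph := touchGraph_comp_equiv e.symm c (w ∘ e)
  rw [hw] at hconfig hgraph
  refine ⟨c ∘ e.symm, hconfig, fun k l hkl ↦ ?_⟩
  rw [hgraph]
  exact hle (by simpa using hkl)

theorem netFlow_comp_equiv (e : κ ≃ ι) (ε : ι → ℝ) (t : ι → ι → ℝ) :
    netFlow (ε ∘ e) (fun k l ↦ t (e k) (e l)) = netFlow ε t ∘ e :=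
  funext fun k ↦ congrArg (ε (e k) * ·) (e.sum_comp (t (e k)))

theorem IsSignedFlow.comap {κ ι : Type*} {T : SimpleGraph ι} {ε : ι → ℝ} {t : ι → ι → ℝ}
    (h : IsSignedFlow T ε t) (f : κ → ι) :
    IsSignedFlow (T.comap f) (ε ∘ f) fun k l ↦ t (f k) (f l) where
  sign k := h.sign (f k)
  sign_of_adj k l := h.sign_of_adj (f k) (f l)
  symm k l := h.symm (f k) (f l)
  pos k l := h.pos (f k) (f l)
  eq_zero k l := h.eq_zero (f k) (f l)

end Reindex

section Neg

variable {ι : Type*} [Fintype ι] {T : SimpleGraph ι} {w : ι → ℝ}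

theorem netFlow_neg (ε : ι → ℝ) (t : ι → ι → ℝ) : netFlow (-ε) t = -netFlow ε t :=
  funext fun k ↦ neg_mul (ε k) _

theorem IsRealizable.neg (h : IsRealizable T w) : IsRealizable T (-w) :=
  let ⟨c, hc, hle⟩ := h
  ⟨c, hc.neg, hle.trans_eq touchGraph_neg.symm⟩

theorem IsSignedFlow.neg {ι : Type*} {T : SimpleGraph ι} {ε : ι → ℝ} {t : ι → ι → ℝ}
    (h : IsSignedFlow T ε t) : IsSignedFlow T (-ε) t where
  sign k := by rcases h.sign k with hk | hk <;> simp [hk]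
  sign_of_adj k l hkl := congrArg Neg.neg (h.sign_of_adj k l hkl)
  symm := h.symm
  pos := h.pos
  eq_zero := h.eq_zero

end Neg

section Leaf

variable {κ : Type*}

section AttachFlow

variable [DecidableEq κ]

/-- The edge weights obtained from `t` by adding an edge of weight `s` from `b` to a new vertex
`none`. -/
def attachFlow (t : κ → κ → ℝ) (b : κ) (s : ℝ) : Option κ → Option κ → ℝ
  | none, none => 0
  | none, some l => (Pi.single b s : κ → ℝ) l
  | some k, none => (Pi.single b s : κ → ℝ) k
  | some k, some l => t k l

theorem IsSignedFlow.attachFlow {T : SimpleGraph (Option κ)} {ε : Option κ → ℝ}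
    {t : Option κ → Option κ → ℝ} (h : IsSignedFlow T ε t) {b : κ} {s : ℝ} (hs : 0 < s)
    (hleaf : ∀ i, T.Adj none i ↔ i = some b) :
    IsSignedFlow T ε (attachFlow (fun k l ↦ t (some k) (some l)) b s) where
  sign := h.sign
  sign_of_adj := h.sign_of_adj
  symm
    | none, none | none, some _ | some _, none => rfl
    | some k, some l => h.symm (some k) (some l)
  pos
    | none, none, hkl => (T.irrefl hkl).elim
    | none, some l, hkl => by
      obtain rfl : l = b := Option.some.inj ((hleaf _).mp hkl)
      simpa [Zannier.attachFlow] using hs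
    | some k, none, hkl => by
      obtain rfl : k = b := Option.some.inj ((hleaf _).mp hkl.symm)
      simpa [Zannier.attachFlow] using hs
    | some k, some l, hkl => h.pos (some k) (some l) hkl
  eq_zero
    | none, none, _ => rfl
    | none, some l, hkl => by
      have hl : l ≠ b := fun hl ↦ hkl ((hleaf _).mpr (congrArg some hl))
      simp [Zannier.attachFlow, hl]
    | some k, none, hkl => by
      have hk : k ≠ b := fun hk ↦ hkl ((hleaf _).mpr (congrArg some hk)).symm
      simp [Zannier.attachFlow, hk]
    | some k, some l, hkl => h.eq_zero (some k) (some l) hkl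

theorem netFlow_attachFlow [Fintype κ] {ε : Option κ → ℝ} {b : κ} (hnone : ε none = 1)
    (hb : ε (some b) = -1) (t : κ → κ → ℝ) (s : ℝ) :
    netFlow ε (attachFlow t b s) = attachWeight (netFlow (ε ∘ some) t) b s := by
  ext (_ | k)
  · simp [netFlow, attachFlow, attachWeight, hnone]
  · rcases eq_or_ne k b with rfl | hk
    · simp [netFlow, attachFlow, attachWeight, hb]
      ring
    · simp [netFlow, attachFlow, attachWeight, hk]

end AttachFlow

variable [Fintype κ]

theorem IsSignedFlow.isRealizable_of_leaf_of_neg [Nontrivial κ] {T : SimpleGraph (Option κ)}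
    {ε : Option κ → ℝ} {t : Option κ → Option κ → ℝ} (h : IsSignedFlow T ε t) (hT : T.IsTree)
    (hT' : (T.comap some).Connected) {b : κ} (hleaf : ∀ i, T.Adj none i ↔ i = some b)
    (hb : ε (some b) = -1)
    (hreal : IsRealizable (T.comap some) (netFlow (ε ∘ some) fun k l ↦ t (some k) (some l))) :
    IsRealizable T (netFlow ε t) := by
  classical
  obtain ⟨c, hc, hle⟩ := hreal
  have hnone : ε none = 1 := by
    rw [h.sign_of_adj (some b) none ((hleaf _).mpr rfl).symm, hb, neg_neg]
  have hneg : netFlow (ε ∘ some) (fun k l ↦ t (some k) (some l)) b < 0 :=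
    mul_neg_of_neg_of_pos (by simp [hb]) ((h.comap some).sum_pos hT' b)
  obtain ⟨s, hs, c', hc', hsome, hadj⟩ := hc.exists_attachWeight hneg
  rw [← netFlow_attachFlow hnone hb] at hc' hsome hadj
  refine (h.attachFlow hs hleaf).isRealizable_of_isRealizable h hT ⟨c', hc', ?_⟩
  rintro (_ | k) i hi
  · exact (hleaf i).mp hi ▸ hadj
  · cases i with
    | none => exact (hleaf _).mp hi.symm ▸ hadj.symm
    | some l => exact hsome k l (hle hi)

theorem IsSignedFlow.isRealizable_of_leaf [Nontrivial κ] {T : SimpleGraph (Option κ)}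
    {ε : Option κ → ℝ} {t : Option κ → Option κ → ℝ} (h : IsSignedFlow T ε t) (hT : T.IsTree)
    (hT' : (T.comap some).Connected) {b : κ} (hleaf : ∀ i, T.Adj none i ↔ i = some b)
    (hreal : IsRealizable (T.comap some) (netFlow (ε ∘ some) fun k l ↦ t (some k) (some l))) :
    IsRealizable T (netFlow ε t) := by
  rcases h.sign (some b) with hb | hb
  · have hreal' := hreal.neg
    rw [← netFlow_neg] at hreal'
    simpa [netFlow_neg] using
      (h.neg.isRealizable_of_leaf_of_neg hT hT' hleaf (by simp [hb]) hreal').neg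
  · exact h.isRealizable_of_leaf_of_neg hT hT' hleaf hb hreal

end Leaf

theorem isRealizable_of_card_eq_two {ι : Type*} [Fintype ι] (hcard : Fintype.card ι = 2)
    {w : ι → ℝ} (hw : ∀ k, w k ≠ 0) (hsum : ∑ k, w k = 0) (T : SimpleGraph ι) :
    IsRealizable T w := by
  have : Nontrivial ι := Fintype.one_lt_card_iff_nontrivial.mp (by omega)
  let c : ι ↪ ℂ :=
    ((Fintype.equivFin ι).toEmbedding.trans Fin.valEmbedding).trans Nat.castEmbedding
  obtain ⟨L, hL⟩ : IsResidueConfig c w :=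
    isResidueConfig_of_moments c.injective hw fun j hj ↦ by
      obtain rfl : j = 0 := by omega
      simp only [pow_zero, mul_one]
      exact_mod_cast hsum
  refine ⟨c, ⟨L, hL⟩, fun k l hkl ↦ ?_⟩
  obtain ⟨m, hm⟩ := hL.connected_touchGraph.preconnected.exists_adj_of_nontrivial k
  have huniv := (Nat.card_eq_two_iff' k).mp (Nat.card_eq_fintype_card.trans hcard)
  exact huniv.unique hkl.ne' hm.ne' ▸ hm

theorem IsSignedFlow.isRealizable {ι : Type*} [Fintype ι] [Nontrivial ι] {T : SimpleGraph ι}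
    {ε : ι → ℝ} {t : ι → ι → ℝ} (h : IsSignedFlow T ε t) (hT : T.IsTree) :
    IsRealizable T (netFlow ε t) := by
  induction hn : Fintype.card ι using Nat.strong_induction_on generalizing ι with
  | _ n ih =>
  subst hn
  classical
  rcases (Nat.succ_le_iff.mpr (Fintype.one_lt_card (α := ι))).eq_or_lt with hcard | hcard
  · exact isRealizable_of_card_eq_two hcard.symm (h.netFlow_ne_zero hT.connected) h.sum_netFlow T
  obtain ⟨a, ha⟩ := hT.exists_vert_degree_one_of_nontrivial
  obtain ⟨b, hab, hleaf⟩ := SimpleGraph.degree_eq_one_iff_existsUnique_adj.mp ha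
  have hcard' : Fintype.card {x // x ≠ a} = Fintype.card ι - 1 := by simp
  have : Nontrivial {x // x ≠ a} := Fintype.one_lt_card_iff_nontrivial.mp (by omega)
  let e : Option {x // x ≠ a} ≃ ι := Equiv.optionSubtypeNe a
  have hTe : (T.comap e).IsTree := (SimpleGraph.Iso.comap e T).isTree_iff.mpr hT
  have hconn : ((T.comap e).comap some).Connected :=
    hT.connected.induce_compl_singleton_of_degree_eq_one ha
  have hacyclic : ((T.comap e).comap some).IsAcyclic :=
    hTe.isAcyclic.comap (SimpleGraph.Embedding.comap .some (T.comap e)).toHom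
      (Option.some_injective _)
  refine .of_comap e ?_
  rw [← netFlow_comp_equiv]
  refine (h.comap e).isRealizable_of_leaf hTe hconn (b := ⟨b, hab.ne'⟩) ?_
    (ih _ (by omega) ((h.comap e).comap some) ⟨hconn, hacyclic⟩ rfl)
  rintro (_ | ⟨k, hk⟩)
  · simp
  · exact ⟨fun hak ↦ by simpa using hleaf k hak, fun hkb ↦ by
      obtain rfl : k = b := by simpa using hkb
      exact hab⟩

/-! ### Weighted bipartite trees with prescribed vertex weights -/

section Transport

variable {I J : Type*} [Fintype I] [Fintype J] {m x : I × J → ℝ} {w : I ⊕ J → ℝ}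

/-- The net flow out of each vertex when `x (i, j)` flows from `i` to `j`. -/
def divergence : (I × J → ℝ) →ₗ[ℝ] (I ⊕ J → ℝ) where
  toFun x := Sum.elim (fun i ↦ ∑ j, x (i, j)) fun j ↦ -∑ i, x (i, j)
  map_add' x y := by
    ext (i | j)
    · simp [Finset.sum_add_distrib]
    · simp [Finset.sum_add_distrib, add_comm]
  map_smul' r x := by ext (i | j) <;> simp [Finset.mul_sum]

theorem sum_mul_divergence (g : I ⊕ J → ℝ) (x : I × J → ℝ) :
    ∑ v, g v * divergence x v = ∑ e : I × J, x e * (g (.inl e.1) - g (.inr e.2)) := by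
  simp only [divergence, LinearMap.coe_mk, AddHom.coe_mk, Fintype.sum_sum_type, Sum.elim_inl,
    Sum.elim_inr, Fintype.sum_prod_type, mul_sub, Finset.sum_sub_distrib, mul_neg,
    Finset.sum_neg_distrib, Finset.mul_sum, ← sub_eq_add_neg]
  rw [Finset.sum_comm (f := fun j i ↦ g (.inr j) * x (i, j))]
  simp only [mul_comm]

theorem sum_mul_divergence_eq_zero {g : I ⊕ J → ℝ} (h : ∀ e ∈ Function.support x,
    g (.inl e.1) = g (.inr e.2)) : ∑ v, g v * divergence x v = 0 := by
  rw [sum_mul_divergence]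
  refine Finset.sum_eq_zero fun e _ ↦ ?_
  by_cases he : x e = 0
  · rw [he, zero_mul]
  · rw [h e he, sub_self, mul_zero]

theorem exists_neg_of_divergence_eq_zero (hx : divergence x = 0) (hne : x ≠ 0) :
    ∃ e, x e < 0 := by
  by_contra! hnonneg
  have hsum := sum_mul_divergence (Sum.elim 1 0) x
  rw [hx] at hsum
  simp only [Pi.zero_apply, mul_zero, Finset.sum_const_zero, Sum.elim_inl, Pi.one_apply,
    Sum.elim_inr, sub_zero, mul_one] at hsum
  exact hne (funext fun e ↦ (Finset.sum_eq_zero_iff_of_nonneg fun e _ ↦ hnonneg e).mp hsum.symm e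
    (Finset.mem_univ e))

/-- The transportation polytope: the nonnegative flows with prescribed net flow at each vertex. -/
def transports (w : I ⊕ J → ℝ) : Set (I × J → ℝ) := {m | 0 ≤ m ∧ divergence m = w}

/-- The edges in the support of `m` carry no nonzero circulation. For a point `m` of a
transportation polytope this says that `m` is a vertex. -/
def HasIndependentSupport (m : I × J → ℝ) : Prop :=
  ∀ x : I × J → ℝ, Function.support x ⊆ Function.support m → divergence x = 0 → x = 0

theorem exists_add_smul_support_ssubset {E : Type*} [Finite E] {m x : E → ℝ} (hm : 0 ≤ m)
    (hsub : Function.support x ⊆ Function.support m) (hneg : ∃ e, x e < 0) :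
    ∃ r : ℝ, 0 ≤ m + r • x ∧ Function.support (m + r • x) ⊂ Function.support m := by
  obtain ⟨e, he : x e < 0, hmin⟩ := Set.exists_min_image {e | x e < 0} (fun e ↦ m e / -x e)
    (Set.toFinite _) hneg
  have hr : 0 ≤ m e / -x e := div_nonneg (hm e) (neg_nonneg.mpr he.le)
  refine ⟨m e / -x e, fun f ↦ ?_, ?_, fun hsup ↦ ?_⟩
  · rcases lt_or_ge (x f) 0 with hf | hf
    · have := (le_div_iff₀ (neg_pos.mpr hf)).mp (hmin f hf)
      simp only [Pi.zero_apply, Pi.add_apply, Pi.smul_apply, smul_eq_mul]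
      linarith
    · exact add_nonneg (hm f) (mul_nonneg hr hf)
  · intro f hf hmf
    have hxf : x f = 0 := by_contra fun hxf ↦ hsub hxf hmf
    exact hf (by simp [hmf, hxf])
  · refine hsup (hsub he.ne) ?_
    simp only [Pi.add_apply, Pi.smul_apply, smul_eq_mul]
    field_simp [he.ne]
    ring

theorem exists_hasIndependentSupport (h : (transports w).Nonempty) :
    ∃ m ∈ transports w, HasIndependentSupport m := by
  obtain ⟨m, ⟨hm, hmw⟩, hmin⟩ :=
    Set.Finite.exists_minimalFor' Function.support (transports w) (Set.toFinite _) h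
  refine ⟨m, ⟨hm, hmw⟩, fun x hsub hx ↦ by_contra fun hne ↦ ?_⟩
  obtain ⟨r, hr, hlt⟩ :=
    exists_add_smul_support_ssubset hm hsub (exists_neg_of_divergence_eq_zero hx hne)
  exact hlt.2 (hmin ⟨hr, by simp [hmw, hx]⟩ hlt.1)

/-- The space of flows supported on the edges of `m` injects by `divergence` into the orthogonal
complement of the functions that are constant on the classes of `γ`. -/
theorem HasIndependentSupport.ncard_support_add_card_le (h : HasIndependentSupport m) {C : Type*}
    [Finite C] {γ : I ⊕ J → C} (hγ : Function.Surjective γ)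
    (hedge : ∀ e ∈ Function.support m, γ (.inl e.1) = γ (.inr e.2)) :
    (Function.support m).ncard + Nat.card C ≤ Fintype.card I + Fintype.card J := by
  classical
  have := Fintype.ofFinite C
  let ext : (Function.support m → ℝ) →ₗ[ℝ] (I × J → ℝ) :=
    Function.ExtendByZero.linearMap ℝ Subtype.val
  have hext (f) : Function.support (ext f) ⊆ Function.support m := fun e he ↦ by
    by_contra hme
    exact he (Function.extend_apply' _ _ _ fun ⟨e', he'⟩ ↦ hme (he' ▸ e'.2))
  let Φ := (divergence ∘ₗ ext).coprod (LinearMap.funLeft ℝ ℝ γ)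
  have hΦ : Function.Injective Φ := by
    refine (injective_iff_map_eq_zero Φ).mpr fun ⟨f, g⟩ hfg ↦ ?_
    have hfg' (v) : divergence (ext f) v + g (γ v) = 0 := congrFun hfg v
    have horth : ∑ v, g (γ v) * divergence (ext f) v = 0 :=
      sum_mul_divergence_eq_zero fun e he ↦ congrArg g (hedge e (hext f he))
    have hsq : ∑ v, g (γ v) ^ 2 = 0 := by
      rw [← neg_eq_zero, ← horth, ← Finset.sum_neg_distrib]
      exact Finset.sum_congr rfl fun v _ ↦ by linear_combination -g (γ v) * hfg' v
    have hg : g = 0 := funext <| hγ.forall.mpr fun v ↦ pow_eq_zero_iff two_ne_zero |>.mp <|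
      (Finset.sum_eq_zero_iff_of_nonneg fun _ _ ↦ sq_nonneg _).mp hsq v (Finset.mem_univ v)
    have hf : ext f = 0 := h _ (hext f) (funext fun v ↦ by simpa [hg] using hfg' v)
    refine Prod.ext (funext fun e ↦ ?_) hg
    simpa [ext, Subtype.val_injective.extend_apply] using congrFun hf e
  have hrank := LinearMap.finrank_le_finrank_of_injective hΦ
  rwa [Module.finrank_prod, Module.finrank_pi, Module.finrank_pi, Module.finrank_pi,
    Fintype.card_sum, ← Nat.card_eq_fintype_card, ← Nat.card_eq_fintype_card] at hrank

end Transport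

section SupportGraph

variable {I J : Type*} {m : I × J → ℝ}

/-- The symmetric edge weights on the complete bipartite graph given by `m`. -/
def bipartiteWeight (m : I × J → ℝ) : I ⊕ J → I ⊕ J → ℝ
  | .inl i, .inr j => m (i, j)
  | .inr j, .inl i => m (i, j)
  | _, _ => 0

/-- The sign that distinguishes the two sides of a bipartite graph. -/
def bipartiteSign : I ⊕ J → ℝ := Sum.elim 1 (-1)

/-- The bipartite graph whose edges are the pairs in the support of `m`. -/
def supportGraph (m : I × J → ℝ) : SimpleGraph (I ⊕ J) where
  Adj u v := bipartiteWeight m u v ≠ 0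
  symm := ⟨by rintro (i | j) (i' | j') h <;> exact h⟩
  loopless := ⟨by rintro (i | j) h <;> exact h rfl⟩

theorem isSignedFlow_bipartiteWeight (hm : 0 ≤ m) :
    IsSignedFlow (supportGraph m) bipartiteSign (bipartiteWeight m) where
  sign := by rintro (i | j) <;> simp [bipartiteSign]
  sign_of_adj := by
    rintro (i | j) (i' | j') h <;> simp [supportGraph, bipartiteWeight, bipartiteSign] at h ⊢
  symm := by rintro (i | j) (i' | j') <;> rfl
  pos := by
    rintro (i | j) (i' | j') h
    exacts [(h rfl).elim, (hm _).lt_of_ne' h, (hm _).lt_of_ne' h, (h rfl).elim]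
  eq_zero _ _ h := not_not.mp h

theorem connectedComponentMk_eq_of_mem_support {e : I × J} (he : e ∈ Function.support m) :
    (supportGraph m).connectedComponentMk (.inl e.1) =
      (supportGraph m).connectedComponentMk (.inr e.2) :=
  SimpleGraph.ConnectedComponent.connectedComponentMk_eq_of_adj he

theorem edgeSet_supportGraph_subset :
    (supportGraph m).edgeSet ⊆ (fun e ↦ s(.inl e.1, .inr e.2)) '' Function.support m := by
  refine Sym2.ind ?_
  rintro (i | j) (i' | j') h
  exacts [(h rfl).elim, ⟨(i, j'), h, rfl⟩, ⟨(i', j), h, Sym2.eq_swap⟩, (h rfl).elim]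

variable [Fintype I] [Fintype J]

theorem netFlow_bipartiteWeight (m : I × J → ℝ) :
    netFlow bipartiteSign (bipartiteWeight m) = divergence m := by
  ext (i | j) <;> simp [netFlow, bipartiteSign, bipartiteWeight, divergence]

theorem HasIndependentSupport.isTree (h : HasIndependentSupport m)
    (hconn : (supportGraph m).Connected) : (supportGraph m).IsTree := by
  have := hconn.nonempty
  have hvert := hconn.card_vert_le_card_edgeSet_add_one
  have hedge : Nat.card (supportGraph m).edgeSet ≤ (Function.support m).ncard :=
    (Set.ncard_le_ncard edgeSet_supportGraph_subset (Set.toFinite _)).trans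
      (Set.ncard_image_le (Set.toFinite _))
  have hrank := h.ncard_support_add_card_le (Function.surjective_to_subsingleton
    fun _ : I ⊕ J ↦ ()) fun _ _ ↦ rfl
  rw [Nat.card_unique, ← Fintype.card_sum, ← Nat.card_eq_fintype_card] at hrank
  exact SimpleGraph.isTree_iff_connected_and_card.mpr ⟨hconn, by omega⟩

end SupportGraph

section Exchange

variable {I J : Type*} {i₁ i₂ : I} {j₁ j₂ : J} {m : I × J → ℝ}

section DecidableEq

variable [DecidableEq I] [DecidableEq J]

/-- The elementary circulation around the quadrilateral `i₁, j₂, i₂, j₁`. -/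
def exchange (i₁ i₂ : I) (j₁ j₂ : J) (e : I × J) : ℝ :=
  (Pi.single i₁ 1 - Pi.single i₂ 1 : I → ℝ) e.1 * (Pi.single j₂ 1 - Pi.single j₁ 1 : J → ℝ) e.2

theorem divergence_exchange [Fintype I] [Fintype J] (i₁ i₂ : I) (j₁ j₂ : J) :
    divergence (exchange i₁ i₂ j₁ j₂) = 0 := by
  ext (i | j) <;>
    simp [divergence, exchange, ← Finset.mul_sum, ← Finset.sum_mul, Finset.sum_sub_distrib]

theorem forall_of_exchange_eq_zero {p : I × J → Prop} (h₁₁ : p (i₁, j₁)) (h₁₂ : p (i₁, j₂))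
    (h₂₁ : p (i₂, j₁)) (h₂₂ : p (i₂, j₂)) (h : ∀ e, exchange i₁ i₂ j₁ j₂ e = 0 → p e)
    (e : I × J) : p e := by
  by_cases he : exchange i₁ i₂ j₁ j₂ e = 0
  · exact h e he
  obtain ⟨i, j⟩ := e
  obtain ⟨hi, hj⟩ := mul_ne_zero_iff.mp he
  have hi' : i = i₁ ∨ i = i₂ := by
    by_contra! hne
    simp [hne.1, hne.2] at hi
  have hj' : j = j₁ ∨ j = j₂ := by
    by_contra! hne
    simp [hne.1, hne.2] at hj
  rcases hi' with rfl | rfl <;> rcases hj' with rfl | rfl <;> assumption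

theorem add_smul_exchange_nonneg (hm : 0 ≤ m) (hi : i₁ ≠ i₂) (hj : j₁ ≠ j₂)
    (hle : m (i₁, j₁) ≤ m (i₂, j₂)) : 0 ≤ m + m (i₁, j₁) • exchange i₁ i₂ j₁ j₂ := by
  have hm₁₁ : 0 ≤ m (i₁, j₁) := hm _
  refine forall_of_exchange_eq_zero (i₁ := i₁) (i₂ := i₂) (j₁ := j₁) (j₂ := j₂) ?_ ?_ ?_ ?_
    fun e he ↦ by simpa [he] using hm e
  · simp [exchange, hi, hj]
  · simpa [exchange, hi, hj.symm] using add_nonneg (hm (i₁, j₂)) hm₁₁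
  · simpa [exchange, hi.symm, hj] using add_nonneg (hm (i₂, j₁)) hm₁₁
  · simpa [exchange, hi.symm, hj.symm] using hle

theorem support_add_smul_exchange (hi : i₁ ≠ i₂) (hj : j₁ ≠ j₂) (h₁₂ : m (i₁, j₂) = 0)
    (h₂₁ : m (i₂, j₁) = 0) (hpos : 0 < m (i₁, j₁)) (hlt : m (i₁, j₁) < m (i₂, j₂)) :
    Function.support (m + m (i₁, j₁) • exchange i₁ i₂ j₁ j₂) =
      insert (i₁, j₂) (insert (i₂, j₁) (Function.support m \ {(i₁, j₁)})) := by
  ext e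
  revert e
  refine forall_of_exchange_eq_zero (i₁ := i₁) (i₂ := i₂) (j₁ := j₁) (j₂ := j₂) ?_ ?_ ?_ ?_
    fun e he ↦ ?_
  · simp [exchange, hi, hj]
  · simp [exchange, hi, hj.symm, h₁₂, hpos.ne']
  · simp [exchange, hi.symm, hj, h₂₁, hpos.ne']
  · simp [exchange, hi.symm, hj.symm, (hpos.trans hlt).ne', ← sub_eq_add_neg, sub_eq_zero, hlt.ne']
  · have h₁₁ : e ≠ (i₁, j₁) := by
      rintro rfl
      simp [exchange, hi, hj] at he
    have h₁₂ : e ≠ (i₁, j₂) := by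
      rintro rfl
      simp [exchange, hi, hj.symm] at he
    have h₂₁ : e ≠ (i₂, j₁) := by
      rintro rfl
      simp [exchange, hi.symm, hj] at he
    simp [he, h₁₁, h₁₂, h₂₁]

theorem ncard_support_lt_ncard_support_add_smul_exchange [Finite I] [Finite J] (hi : i₁ ≠ i₂)
    (hj : j₁ ≠ j₂) (h₁₂ : m (i₁, j₂) = 0) (h₂₁ : m (i₂, j₁) = 0) (hpos : 0 < m (i₁, j₁))
    (hlt : m (i₁, j₁) < m (i₂, j₂)) : (Function.support m).ncard <
      (Function.support (m + m (i₁, j₁) • exchange i₁ i₂ j₁ j₂)).ncard := by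
  rw [support_add_smul_exchange hi hj h₁₂ h₂₁ hpos hlt,
    Set.ncard_insert_of_notMem (by simp [hi, h₁₂]), Set.ncard_insert_of_notMem (by simp [h₂₁]),
    Set.ncard_sdiff_singleton_add_one (Function.mem_support.mpr hpos.ne')]
  exact Nat.lt_succ_self _

end DecidableEq

/-- A circulation on the new support, corrected by a multiple of the exchange, crosses between the
classes of `γ` only along the edge `(i₂, j₁)`, hence vanishes there. -/
theorem HasIndependentSupport.of_support_subset [Fintype I] [Fintype J] {m' : I × J → ℝ}
    {C : Type*} {γ : I ⊕ J → C} (hI : HasIndependentSupport m)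
    (hγ : ∀ e ∈ Function.support m, γ (.inl e.1) = γ (.inr e.2))
    (hne : γ (.inl i₁) ≠ γ (.inl i₂)) (h₁₁ : m (i₁, j₁) ≠ 0) (h₂₂ : m (i₂, j₂) ≠ 0)
    (hsub : Function.support m' ⊆
      insert (i₁, j₂) (insert (i₂, j₁) (Function.support m \ {(i₁, j₁)}))) :
    HasIndependentSupport m' := by
  classical
  have hγ₁ : γ (.inr j₁) = γ (.inl i₁) := (hγ _ h₁₁).symm
  have hγ₂ : γ (.inr j₂) = γ (.inl i₂) := (hγ _ h₂₂).symm
  have hi : i₁ ≠ i₂ := fun h ↦ hne (h ▸ rfl)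
  have hj : j₁ ≠ j₂ := fun h ↦ hne (by rw [← hγ₁, h, hγ₂])
  intro x hx hdiv
  set y := x - x (i₁, j₂) • exchange i₁ i₂ j₁ j₂ with hy
  have hydiv : divergence y = 0 := by simp [hy, hdiv, divergence_exchange]
  have hysupp : ∀ e, e ≠ (i₂, j₁) → m e = 0 → y e = 0 := by
    refine forall_of_exchange_eq_zero (i₁ := i₁) (i₂ := i₂) (j₁ := j₁) (j₂ := j₂)
      (fun _ h ↦ (h₁₁ h).elim) (fun _ _ ↦ by simp [hy, exchange, hi, hj.symm])
      (fun h ↦ (h rfl).elim) (fun _ h ↦ (h₂₂ h).elim) fun e he hne hme ↦ ?_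
    have he₁₂ : e ≠ (i₁, j₂) := by
      rintro rfl
      simp [exchange, hi, hj.symm] at he
    have hxe : x e = 0 := by_contra fun hxe ↦ by simpa [he₁₂, hne, hme] using hsub (hx hxe)
    simp [hy, he, hxe]
  have hy₂₁ : y (i₂, j₁) = 0 := by
    have hcut := sum_mul_divergence (fun v ↦ if γ v = γ (.inl i₁) then 1 else 0) y
    rw [hydiv, Finset.sum_eq_single (i₂, j₁)] at hcut
    · simpa [hγ₁, hne.symm] using hcut
    · intro e _ he
      by_cases hme : m e = 0
      · rw [hysupp e he hme, zero_mul]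
      · rw [hγ e hme, sub_self, mul_zero]
    · simp
  have hy0 : y = 0 := hI y (fun e he hme ↦ he (by
    by_cases he₂₁ : e = (i₂, j₁)
    exacts [he₂₁ ▸ hy₂₁, hysupp e he₂₁ hme])) hydiv
  have hx₁₁ : x (i₁, j₁) = 0 := by_contra fun h ↦ by simpa [hi, hj] using hsub (hx h)
  have hx₁₂ : x (i₁, j₂) = 0 := by
    simpa [hy, exchange, hi, hj, hx₁₁] using congrFun hy0 (i₁, j₁)
  simpa [hy, hx₁₂] using hy0

end Exchange

section MaximalSupport

variable {I J C : Type*} [Fintype I] [Fintype J] {m : I × J → ℝ} {w : I ⊕ J → ℝ} {γ : I ⊕ J → C}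

theorem exists_ncard_support_lt (hm : m ∈ transports w) (hI : HasIndependentSupport m)
    (hγ : ∀ e ∈ Function.support m, γ (.inl e.1) = γ (.inr e.2)) {e f : I × J}
    (hef : γ (.inl e.1) ≠ γ (.inl f.1)) (he : m e ≠ 0) (hlt : m e < m f) :
    ∃ m' ∈ transports w, HasIndependentSupport m' ∧
      (Function.support m).ncard < (Function.support m').ncard := by
  classical
  obtain ⟨i₁, j₁⟩ := e
  obtain ⟨i₂, j₂⟩ := f
  obtain ⟨hm0, hmw⟩ := hm
  have hpos : 0 < m (i₁, j₁) := (hm0 _).lt_of_ne' he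
  have hf : m (i₂, j₂) ≠ 0 := (hpos.trans hlt).ne'
  have hγ₁ := hγ _ he
  have hγ₂ := hγ _ hf
  have hi : i₁ ≠ i₂ := fun h ↦ hef (h ▸ rfl)
  have hj : j₁ ≠ j₂ := by
    rintro rfl
    exact hef (hγ₁.trans hγ₂.symm)
  have h₁₂ : m (i₁, j₂) = 0 := by_contra fun h ↦ hef ((hγ _ h).trans hγ₂.symm)
  have h₂₁ : m (i₂, j₁) = 0 := by_contra fun h ↦ hef (hγ₁.trans (hγ _ h).symm)
  refine ⟨m + m (i₁, j₁) • exchange i₁ i₂ j₁ j₂,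
    ⟨add_smul_exchange_nonneg hm0 hi hj hlt.le, by simp [hmw, divergence_exchange]⟩,
    hI.of_support_subset hγ hef he hf (support_add_smul_exchange hi hj h₁₂ h₂₁ hpos hlt).subset,
    ncard_support_lt_ncard_support_add_smul_exchange hi hj h₁₂ h₂₁ hpos hlt⟩

theorem exists_maximal_hasIndependentSupport (h : (transports w).Nonempty) :
    ∃ m ∈ transports w, HasIndependentSupport m ∧ ∀ m' ∈ transports w, HasIndependentSupport m' →
      (Function.support m').ncard ≤ (Function.support m).ncard := by
  obtain ⟨m, ⟨hm, hI⟩, hmax⟩ := Set.Finite.exists_maximalFor'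
    (fun m ↦ (Function.support m).ncard) {m | m ∈ transports w ∧ HasIndependentSupport m}
    ((Set.finite_Iic (Nat.card (I × J))).subset
      (Set.image_subset_iff.mpr fun m _ ↦ Set.ncard_le_card _))
    (exists_hasIndependentSupport h)
  exact ⟨m, hm, hI, fun m' hm' hI' ↦ (le_total _ _).elim id (hmax ⟨hm', hI'⟩)⟩

theorem exists_mem_support_connectedComponentMk_eq (hw : ∀ v, w v ≠ 0) (hm : m ∈ transports w)
    (v : I ⊕ J) : ∃ e ∈ Function.support m, (supportGraph m).connectedComponentMk (.inl e.1) =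
      (supportGraph m).connectedComponentMk v := by
  have hv : divergence m v ≠ 0 := hm.2 ▸ hw v
  rcases v with i | j
  · obtain ⟨j, -, hj⟩ := Finset.exists_ne_zero_of_sum_ne_zero hv
    exact ⟨(i, j), hj, rfl⟩
  · obtain ⟨i, -, hi⟩ := Finset.exists_ne_zero_of_sum_ne_zero (neg_ne_zero.mp hv)
    exact ⟨(i, j), hi, connectedComponentMk_eq_of_mem_support hi⟩

theorem exists_forall_mem_support_eq_of_not_preconnected (hw : ∀ v, w v ≠ 0) (hm : m ∈ transports w)
    (hI : HasIndependentSupport m)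
    (hmax : ∀ m' ∈ transports w, HasIndependentSupport m' →
      (Function.support m').ncard ≤ (Function.support m).ncard)
    (hconn : ¬(supportGraph m).Preconnected) :
    ∃ τ : ℝ, ∀ e ∈ Function.support m, m e = τ := by
  let comp (e : I × J) := (supportGraph m).connectedComponentMk (.inl e.1)
  have hle : ∀ e ∈ Function.support m, ∀ f, comp e ≠ comp f → m f ≤ m e := fun e he f hef ↦ by
    by_contra! hlt
    obtain ⟨m', hm', hI', hcard⟩ := exists_ncard_support_lt hm hI
      (fun _ ↦ connectedComponentMk_eq_of_mem_support) hef he hlt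
    exact hcard.not_ge (hmax m' hm' hI')
  have heq : ∀ e ∈ Function.support m, ∀ f ∈ Function.support m, comp e ≠ comp f → m e = m f :=
    fun e he f hf hef ↦ (hle f hf e hef.symm).antisymm (hle e he f hef)
  simp only [SimpleGraph.Preconnected, not_forall] at hconn
  obtain ⟨u, v, huv⟩ := hconn
  obtain ⟨e, he, heu⟩ := exists_mem_support_connectedComponentMk_eq hw hm u
  obtain ⟨f, hf, hfv⟩ := exists_mem_support_connectedComponentMk_eq hw hm v
  have hef : comp e ≠ comp f := fun h ↦
    huv (SimpleGraph.ConnectedComponent.exact (heu.symm.trans (h.trans hfv)))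
  refine ⟨m e, fun g hg ↦ ?_⟩
  by_cases hge : comp g = comp e
  · rw [heq g hg f hf (hge ▸ hef), heq e he f hf hef]
  · exact heq g hg e he hge

end MaximalSupport

section IntegerWeights

theorem sum_eq_mul_ncard_support {E : Type*} [Fintype E] {f : E → ℝ} {τ : ℝ}
    (h : ∀ e ∈ Function.support f, f e = τ) : ∑ e, f e = τ * (Function.support f).ncard := by
  classical
  have hsupp : Function.support f = (Finset.univ.filter (f · ≠ 0) : Finset E) := by
    ext e
    simp
  rw [hsupp, Set.ncard_coe_finset, ← Finset.sum_filter_ne_zero, mul_comm, ← nsmul_eq_mul]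
  exact Finset.sum_eq_card_nsmul fun e he ↦ h e (Finset.mem_filter.mp he).2

variable {I J : Type*} [Fintype I] [Fintype J] {α : I → ℕ} {β : J → ℕ}

theorem transports_nonempty (hsum : ∑ i, α i = ∑ j, β j) (hpos : 0 < ∑ i, α i) :
    (transports (Sum.elim (fun i ↦ (α i : ℝ)) fun j ↦ -(β j : ℝ))).Nonempty := by
  have hα : (∑ i, (α i : ℝ)) ≠ 0 := by exact_mod_cast hpos.ne'
  have hβ : ∑ j, (β j : ℝ) = ∑ i, (α i : ℝ) := by exact_mod_cast hsum.symm
  refine ⟨fun e ↦ α e.1 * β e.2 / ∑ i, (α i : ℝ), fun e ↦ by positivity, ?_⟩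
  ext (i | j)
  · simp [divergence, ← Finset.sum_div, ← Finset.mul_sum, hβ, hα]
  · simp [divergence, ← Finset.sum_div, ← Finset.sum_mul, hα]

/-- If all edges have weight `τ`, the vertex weights are multiples of `τ`, and the total weight is
`τ` times the number of edges. -/
theorem sum_dvd_ncard_support_mul_gcd {m : I × J → ℝ}
    (hm : divergence m = Sum.elim (fun i ↦ (α i : ℝ)) fun j ↦ -(β j : ℝ)) {τ : ℝ}
    (hτ : ∀ e ∈ Function.support m, m e = τ) : ∑ i, α i ∣
      (Function.support m).ncard * Nat.gcd (Finset.univ.gcd α) (Finset.univ.gcd β) := by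
  have hrow (i : I) : ∑ j, m (i, j) = α i := congrFun hm (.inl i)
  have hcol (j : J) : ∑ i, m (i, j) = β j := neg_injective (congrFun hm (.inr j))
  have htotal : (∑ i, (α i : ℝ)) = τ * (Function.support m).ncard := by
    rw [← sum_eq_mul_ncard_support hτ, Fintype.sum_prod_type, Finset.sum_congr rfl fun i _ ↦ hrow i]
  have hdvd {a k : ℕ} (ha : (a : ℝ) = τ * k) : ∑ i, α i ∣ (Function.support m).ncard * a := by
    refine ⟨k, ?_⟩
    have : ((Function.support m).ncard : ℝ) * a = (∑ i, (α i : ℝ)) * k := by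
      rw [ha, htotal]
      ring
    exact_mod_cast this
  rw [← Nat.gcd_mul_left]
  refine Nat.dvd_gcd ?_ ?_
  · rw [← normalize_eq (Function.support m).ncard, ← Finset.gcd_mul_left]
    exact Finset.dvd_gcd fun i _ ↦ hdvd <|
      (hrow i).symm.trans (sum_eq_mul_ncard_support fun j hj ↦ hτ (i, j) hj)
  · rw [← normalize_eq (Function.support m).ncard, ← Finset.gcd_mul_left]
    exact Finset.dvd_gcd fun j _ ↦ hdvd <|
      (hcol j).symm.trans (sum_eq_mul_ncard_support fun i hi ↦ hτ (i, j) hi)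

theorem sum_div_gcd_le_ncard_support (hα : 0 < ∑ i, α i) {m : I × J → ℝ}
    (hm : divergence m = Sum.elim (fun i ↦ (α i : ℝ)) fun j ↦ -(β j : ℝ)) {τ : ℝ}
    (hτ : ∀ e ∈ Function.support m, m e = τ) :
    (∑ i, α i) / Nat.gcd (Finset.univ.gcd α) (Finset.univ.gcd β) ≤ (Function.support m).ncard := by
  have hsupp : (Function.support m).Nonempty := by
    by_contra hempty
    rw [Set.not_nonempty_iff_eq_empty, Function.support_eq_empty_iff] at hempty
    subst hempty
    refine hα.ne' (Finset.sum_eq_zero fun i _ ↦ ?_)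
    simpa using (congrFun hm (.inl i)).symm
  have hgcd : Nat.gcd (Finset.univ.gcd α) (Finset.univ.gcd β) ∣ ∑ i, α i :=
    (Nat.gcd_dvd_left _ _).trans (Finset.dvd_sum fun i hi ↦ Finset.gcd_dvd hi)
  refine Nat.div_le_of_le_mul ((Nat.le_of_dvd ?_ (sum_dvd_ncard_support_mul_gcd hm hτ)).trans_eq
    (mul_comm _ _))
  exact Nat.mul_pos ((Set.ncard_pos (Set.toFinite _)).mpr hsupp) (Nat.pos_of_dvd_of_pos hgcd hα)

theorem exists_isTree_supportGraph [Nonempty I] (hα : ∀ i, 0 < α i) (hβ : ∀ j, 0 < β j)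
    (hsum : ∑ i, α i = ∑ j, β j) (hcard : Fintype.card I + Fintype.card J ≤
      (∑ i, α i) / Nat.gcd (Finset.univ.gcd α) (Finset.univ.gcd β) + 1) :
    ∃ m ∈ transports (Sum.elim (fun i ↦ (α i : ℝ)) fun j ↦ -(β j : ℝ)),
      (supportGraph m).IsTree := by
  have hpos : 0 < ∑ i, α i := Finset.sum_pos (fun i _ ↦ hα i) Finset.univ_nonempty
  obtain ⟨m, hm, hI, hmax⟩ := exists_maximal_hasIndependentSupport (transports_nonempty hsum hpos)
  refine ⟨m, hm, hI.isTree ⟨by_contra fun hconn ↦ ?_⟩⟩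
  have hw (v) : Sum.elim (fun i ↦ (α i : ℝ)) (fun j ↦ -(β j : ℝ)) v ≠ 0 := by
    rcases v with i | j
    · simpa using (hα i).ne'
    · simpa using (hβ j).ne'
  obtain ⟨τ, hτ⟩ := exists_forall_mem_support_eq_of_not_preconnected hw hm hI hmax hconn
  have hcomp : 1 < Nat.card (supportGraph m).ConnectedComponent := by
    obtain ⟨u, v, huv⟩ : ∃ u v, ¬(supportGraph m).Reachable u v := by
      simpa only [SimpleGraph.Preconnected, not_forall] using hconn
    exact Finite.one_lt_card_iff_nontrivial.mpr
      ⟨_, _, SimpleGraph.ConnectedComponent.eq.not.mpr huv⟩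
  have hrank := hI.ncard_support_add_card_le (γ := (supportGraph m).connectedComponentMk)
    Quot.mk_surjective fun _ ↦ connectedComponentMk_eq_of_mem_support
  have hdiv := sum_div_gcd_le_ncard_support hpos hm.2 hτ
  omega

end IntegerWeights

end Zannier

namespace Zannier

open Finset

/-! ### Polynomials with prescribed factorization patterns -/

section Wronskian

variable {R : Type*} [CommRing R]

theorem coeff_X_mul_derivative (P : R[X]) (k : ℕ) :
    (X * derivative P).coeff k = k * P.coeff k := by
  cases k with
  | zero => simp
  | succ k =>
    rw [coeff_X_mul, coeff_derivative, Nat.cast_succ, mul_comm]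

theorem natDegree_X_mul_derivative_le (P : R[X]) :
    (X * derivative P).natDegree ≤ P.natDegree :=
  natDegree_le_iff_coeff_eq_zero.mpr fun k hk ↦ by
    rw [coeff_X_mul_derivative, coeff_eq_zero_of_natDegree_lt hk, mul_zero]

theorem coeff_X_mul_wronskian (P Q : R[X]) :
    (X * wronskian P Q).coeff (P.natDegree + Q.natDegree) =
      (Q.natDegree - P.natDegree) * (P.leadingCoeff * Q.leadingCoeff) := by
  have hexpand : X * wronskian P Q = P * (X * derivative Q) - X * derivative P * Q := by
    rw [wronskian]
    ring
  rw [hexpand, coeff_sub,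
    coeff_mul_add_eq_of_natDegree_le le_rfl (natDegree_X_mul_derivative_le Q),
    coeff_mul_add_eq_of_natDegree_le (natDegree_X_mul_derivative_le P) le_rfl,
    coeff_X_mul_derivative, coeff_X_mul_derivative]
  simp only [coeff_natDegree]
  ring

variable [IsDomain R] [CharZero R]

theorem natDegree_wronskian_add_one {P Q : R[X]} (hP : P ≠ 0) (hQ : Q ≠ 0)
    (hdeg : P.natDegree ≠ Q.natDegree) :
    (wronskian P Q).natDegree + 1 = P.natDegree + Q.natDegree := by
  have hcoeff : (X * wronskian P Q).coeff (P.natDegree + Q.natDegree) ≠ 0 := by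
    rw [coeff_X_mul_wronskian]
    exact mul_ne_zero (sub_ne_zero.mpr (Nat.cast_injective.ne hdeg.symm))
      (mul_ne_zero (leadingCoeff_ne_zero.mpr hP) (leadingCoeff_ne_zero.mpr hQ))
  have hW : wronskian P Q ≠ 0 := by
    intro hW
    simp [hW] at hcoeff
  refine le_antisymm (natDegree_wronskian_lt_add hW) ?_
  rw [← natDegree_X_mul hW]
  exact le_natDegree_of_ne_zero hcoeff

theorem natDegree_wronskian_add_one_of_monic {P Q : R[X]} (hP : P.Monic) (hQ : Q.Monic)
    (hdeg : P.natDegree = Q.natDegree) (hne : P ≠ Q) :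
    (wronskian P Q).natDegree + 1 = P.natDegree + (P - Q).natDegree := by
  have hlt : (P - Q).natDegree < P.natDegree :=
    natDegree_lt_natDegree (sub_ne_zero.mpr hne) <| degree_sub_lt_left
      (by rw [degree_eq_natDegree hP.ne_zero, degree_eq_natDegree hQ.ne_zero, hdeg]) hP.ne_zero
      (by rw [hP.leadingCoeff, hQ.leadingCoeff])
  have hW : wronskian P (P - Q) = -wronskian P Q := by
    simp only [wronskian, derivative_sub]
    ring
  rw [← natDegree_wronskian_add_one hP.ne_zero (sub_ne_zero.mpr hne) hlt.ne', hW, natDegree_neg]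

end Wronskian

section Patterns

variable {R K : Type*} [CommRing R] [Field K] {I J : Type*} [Fintype I] [Fintype J]

/-- The monic polynomial `∏ i, (X - a i) ^ α i`, which has factorization pattern `α` when the
points `a i` are distinct. -/
noncomputable def patternPoly (a : I → R) (α : I → ℕ) : R[X] := ∏ i, (X - C (a i)) ^ α i

theorem monic_patternPoly (a : I → R) (α : I → ℕ) : (patternPoly a α).Monic :=
  monic_prod_of_monic _ _ fun i _ ↦ (monic_X_sub_C (a i)).pow (α i)

theorem natDegree_patternPoly [Nontrivial R] (a : I → R) (α : I → ℕ) :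
    (patternPoly a α).natDegree = ∑ i, α i := by
  rw [patternPoly, natDegree_prod_of_monic _ _ fun i _ ↦ (monic_X_sub_C (a i)).pow (α i)]
  simp only [(monic_X_sub_C _).natDegree_pow, natDegree_X_sub_C, mul_one]

theorem patternPoly_mul (a : I → R) (α : I → ℕ) (d : ℕ) :
    patternPoly a (fun i ↦ d * α i) = patternPoly a α ^ d := by
  simp only [patternPoly, ← prod_pow, ← pow_mul, mul_comm d]

theorem eval_derivative_patternPoly (a : I → K) (α : I → ℕ) {x : K} (hx : ∀ i, x ≠ a i) :
    (derivative (patternPoly a α)).eval x =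
      (patternPoly a α).eval x * ∑ i, (α i : K) / (x - a i) := by
  classical
  rw [patternPoly, derivative_prod_finset, eval_finsetSum, mul_sum]
  refine sum_congr rfl fun i hi ↦ ?_
  have hne : x - a i ≠ 0 := sub_ne_zero.mpr (hx i)
  rw [← mul_prod_erase univ _ hi, derivative_X_sub_C_pow]
  rcases Nat.eq_zero_or_pos (α i) with hzero | hpos
  · simp [hzero]
  · simp only [eval_mul, eval_pow, eval_sub, eval_X, eval_C]
    rw [← Nat.sub_add_cancel hpos, pow_succ, Nat.add_sub_cancel]
    field_simp

theorem isCoprime_patternPoly {a : I → K} {b : J → K} (α : I → ℕ) (β : J → ℕ)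
    (hab : ∀ i j, a i ≠ b j) : IsCoprime (patternPoly a α) (patternPoly b β) :=
  IsCoprime.prod_left fun i _ ↦ IsCoprime.prod_right fun j _ ↦ IsCoprime.pow <|
    isCoprime_X_sub_C_of_isUnit_sub (sub_ne_zero.mpr (hab i j)).isUnit

end Patterns

section Residues

variable {I J : Type*} [Fintype I] [Fintype J] {α : I → ℕ} {β : J → ℕ} {c : I ⊕ J → ℂ} {L : ℂ}

theorem HasResidues.wronskian_mul_prod [Nonempty I]
    (h : HasResidues c (Sum.elim (fun i ↦ (α i : ℝ)) fun j ↦ -(β j : ℝ)) L) :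
    wronskian (patternPoly (c ∘ .inl) α) (patternPoly (c ∘ .inr) β) * ∏ k, (X - C (c k)) =
      -C L * (patternPoly (c ∘ .inl) α * patternPoly (c ∘ .inr) β) := by
  refine eq_of_infinite_eval_eq _ _ <| (Set.finite_range c).infinite_compl.mono fun x hx ↦ ?_
  have hne (k) : x ≠ c k := fun hk ↦ hx ⟨k, hk.symm⟩
  have hprod : ∏ k, (x - c k) ≠ 0 := prod_ne_zero_iff.mpr fun k _ ↦ sub_ne_zero.mpr (hne k)
  have hL : (∑ i, (α i : ℂ) / (x - c (.inl i)) - ∑ j, (β j : ℂ) / (x - c (.inr j))) *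
      ∏ k, (x - c k) = L := by
    rw [← (eq_div_iff hprod).mp (h.sum_weight_div hne), Fintype.sum_sum_type]
    simp [neg_div, sub_eq_add_neg]
  rw [Set.mem_ofPred_eq, wronskian]
  simp only [eval_mul, eval_sub, eval_neg, eval_C, eval_prod, eval_X,
    eval_derivative_patternPoly (c ∘ .inl) α fun i ↦ hne (.inl i),
    eval_derivative_patternPoly (c ∘ .inr) β fun j ↦ hne (.inr j), Function.comp_apply]
  rw [← hL]
  ring

theorem IsResidueConfig.natDegree_sub_add_card [Nonempty I]
    (h : IsResidueConfig c (Sum.elim (fun i ↦ (α i : ℝ)) fun j ↦ -(β j : ℝ)))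
    (hsum : ∑ i, α i = ∑ j, β j) :
    (patternPoly (c ∘ .inl) α - patternPoly (c ∘ .inr) β).natDegree +
      (Fintype.card I + Fintype.card J) = ∑ i, α i + 1 := by
  obtain ⟨L, hL⟩ := h
  set P := patternPoly (c ∘ .inl) α
  set Q := patternPoly (c ∘ .inr) β
  have hP : P.Monic := monic_patternPoly _ _
  have hQ : Q.Monic := monic_patternPoly _ _
  have hPdeg : P.natDegree = ∑ i, α i := natDegree_patternPoly _ _
  have hQdeg : Q.natDegree = ∑ i, α i := (natDegree_patternPoly _ _).trans hsum.symm
  have hR : (∏ k, (X - C (c k))).Monic := monic_prod_X_sub_C c univ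
  have hLne : -C L ≠ 0 := neg_ne_zero.mpr (C_ne_zero.mpr hL.ne_zero)
  have hW : wronskian P Q ≠ 0 := by
    refine left_ne_zero_of_mul (b := ∏ k, (X - C (c k))) ?_
    rw [hL.wronskian_mul_prod]
    exact mul_ne_zero hLne (mul_ne_zero hP.ne_zero hQ.ne_zero)
  have hdeg := congrArg natDegree hL.wronskian_mul_prod
  rw [natDegree_mul hW hR.ne_zero, natDegree_finsetProd_X_sub_C_eq_card, card_univ,
    Fintype.card_sum, natDegree_mul hLne (mul_ne_zero hP.ne_zero hQ.ne_zero), natDegree_neg,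
    natDegree_C, natDegree_mul hP.ne_zero hQ.ne_zero, hPdeg, hQdeg] at hdeg
  have hsub := natDegree_wronskian_add_one_of_monic hP hQ (hPdeg.trans hQdeg.symm) <| by
    intro hPQ
    rw [hPQ, wronskian_self_eq_zero] at hW
    exact hW rfl
  omega

theorem exists_natDegree_patternPoly_sub_add_card [Nonempty I] [Nonempty J]
    (hα : ∀ i, 0 < α i) (hβ : ∀ j, 0 < β j) (hsum : ∑ i, α i = ∑ j, β j)
    (hcard : Fintype.card I + Fintype.card J ≤
      (∑ i, α i) / Nat.gcd (univ.gcd α) (univ.gcd β) + 1) :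
    ∃ (a : I → ℂ) (b : J → ℂ), Function.Injective a ∧ Function.Injective b ∧
      IsCoprime (patternPoly a α) (patternPoly b β) ∧
      (patternPoly a α - patternPoly b β).natDegree + (Fintype.card I + Fintype.card J) =
        ∑ i, α i + 1 := by
  have : Nontrivial (I ⊕ J) := ⟨.inl (Classical.arbitrary I), .inr (Classical.arbitrary J), nofun⟩
  obtain ⟨m, hm, htree⟩ := exists_isTree_supportGraph hα hβ hsum hcard
  obtain ⟨c, hc, -⟩ := (isSignedFlow_bipartiteWeight hm.1).isRealizable htree
  rw [netFlow_bipartiteWeight, hm.2] at hc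
  exact ⟨c ∘ .inl, c ∘ .inr, hc.injective.comp Sum.inl_injective,
    hc.injective.comp Sum.inr_injective,
    isCoprime_patternPoly α β fun i j ↦ hc.injective.ne Sum.inl_ne_inr,
    hc.natDegree_sub_add_card hsum⟩

end Residues

section CommonDivisor

variable {R : Type*} [CommRing R] [IsDomain R] [CharZero R]

/-- `P ^ d - Q ^ d` is `P - Q` times a sum of `d` monic polynomials of degree
`(d - 1) * P.natDegree`. -/
theorem mul_natDegree_le_natDegree_pow_sub_pow {P Q : R[X]} (hP : P.Monic) (hQ : Q.Monic)
    (hdeg : P.natDegree = Q.natDegree) {d : ℕ} (hne : P ^ d ≠ Q ^ d) :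
    (d - 1) * P.natDegree ≤ (P ^ d - Q ^ d).natDegree := by
  have hd : d ≠ 0 := by
    rintro rfl
    simp at hne
  have hcoeff : (∑ i ∈ range d, P ^ i * Q ^ (d - 1 - i)).coeff ((d - 1) * P.natDegree) = d := by
    rw [finsetSum_coeff, sum_eq_card_nsmul (b := 1), card_range, nsmul_one]
    intro i hi
    have hmonic : (P ^ i * Q ^ (d - 1 - i)).Monic := (hP.pow _).mul (hQ.pow _)
    have hterm : (P ^ i * Q ^ (d - 1 - i)).natDegree = (d - 1) * P.natDegree := by
      rw [(hP.pow _).natDegree_mul (hQ.pow _), hP.natDegree_pow, hQ.natDegree_pow, ← hdeg,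
        ← add_mul, Nat.add_sub_cancel' (Nat.le_sub_one_of_lt (mem_range.mp hi))]
    rw [← hterm, hmonic.coeff_natDegree]
  have hfactor := (Commute.all P Q).geom_sum₂_mul d
  have hne' := sub_ne_zero.mpr hne
  rw [← hfactor] at hne' ⊢
  rw [natDegree_mul (left_ne_zero_of_mul hne') (right_ne_zero_of_mul hne')]
  refine le_add_right (le_natDegree_of_ne_zero ?_)
  rw [hcoeff]
  exact_mod_cast hd

variable {I J : Type*} [Fintype I] [Fintype J] {α : I → ℕ} {β : J → ℕ}

theorem sum_le_natDegree_patternPoly_sub_add_div {d : ℕ} (hα : ∀ i, d ∣ α i) (hβ : ∀ j, d ∣ β j)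
    (hsum : ∑ i, α i = ∑ j, β j) {a : I → R} {b : J → R}
    (hne : patternPoly a α ≠ patternPoly b β) :
    ∑ i, α i ≤ (patternPoly a α - patternPoly b β).natDegree + (∑ i, α i) / d := by
  obtain ⟨α', rfl⟩ : ∃ α' : I → ℕ, α = fun i ↦ d * α' i :=
    ⟨fun i ↦ α i / d, funext fun i ↦ (Nat.mul_div_cancel' (hα i)).symm⟩
  obtain ⟨β', rfl⟩ : ∃ β' : J → ℕ, β = fun j ↦ d * β' j :=
    ⟨fun j ↦ β j / d, funext fun j ↦ (Nat.mul_div_cancel' (hβ j)).symm⟩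
  rcases Nat.eq_zero_or_pos d with rfl | hd
  · simp
  rw [← mul_sum, ← mul_sum] at hsum
  rw [patternPoly_mul, patternPoly_mul] at hne ⊢
  have hle := mul_natDegree_le_natDegree_pow_sub_pow (monic_patternPoly a α')
    (monic_patternPoly b β') (by
      rw [natDegree_patternPoly, natDegree_patternPoly, Nat.eq_of_mul_eq_mul_left hd hsum]) hne
  rw [natDegree_patternPoly, Nat.sub_one_mul] at hle
  rw [← mul_sum, Nat.mul_div_cancel_left _ hd]
  omega

end CommonDivisor

end Zannier

/-- Zannier's theorem: for partitions `α, β` of `n` with `p` and `q` parts and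
`d = gcd(α, β)`, there exist coprime monic `P, Q` with factorization patterns
`α, β` and `deg (P - Q) = (n + 1) - (p + q)` iff `p + q ≤ n/d + 1`. -/
theorem stmt5 (n p q d : ℕ) (hn : 1 ≤ n)
    (α : Fin p → ℕ) (β : Fin q → ℕ)
    (hα : ∀ i, 0 < α i) (hβ : ∀ j, 0 < β j)
    (hαsum : ∑ i, α i = n) (hβsum : ∑ j, β j = n)
    (hd : d = Nat.gcd (Finset.univ.gcd α) (Finset.univ.gcd β)) :
    (∃ (P Q : ℂ[X]) (a : Fin p → ℂ) (b : Fin q → ℂ),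
        Function.Injective a ∧ Function.Injective b ∧
        P = ∏ i, (X - C (a i)) ^ α i ∧
        Q = ∏ j, (X - C (b j)) ^ β j ∧
        IsCoprime P Q ∧
        ((P - Q).natDegree : ℤ) = (n + 1 : ℤ) - ((p : ℤ) + (q : ℤ))) ↔
      p + q ≤ n / d + 1 := by
  subst hαsum hd
  constructor
  · rintro ⟨P, Q, a, b, -, -, hP, hQ, hcop, hdeg⟩
    have hne : P ≠ Q := by
      rintro rfl
      have hunit := natDegree_eq_zero_of_isUnit (isCoprime_self.mp hcop)
      rw [hP, ← Zannier.patternPoly, Zannier.natDegree_patternPoly] at hunit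
      omega
    subst hP hQ
    have hle := Zannier.sum_le_natDegree_patternPoly_sub_add_div
      (fun i ↦ (Nat.gcd_dvd_left _ _).trans (Finset.gcd_dvd (Finset.mem_univ i)))
      (fun j ↦ (Nat.gcd_dvd_right _ _).trans (Finset.gcd_dvd (Finset.mem_univ j))) hβsum.symm hne
    simp only [Zannier.patternPoly] at hle
    omega
  · intro hcard
    have : Nonempty (Fin p) := not_isEmpty_iff.mp fun _ ↦ by simp at hn
    have : Nonempty (Fin q) := not_isEmpty_iff.mp fun _ ↦ by simp [← hβsum] at hn
    obtain ⟨a, b, ha, hb, hcop, hdeg⟩ :=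
      Zannier.exists_natDegree_patternPoly_sub_add_card hα hβ hβsum.symm (by simpa using hcard)
    simp only [Fintype.card_fin, Zannier.patternPoly] at hcop hdeg
    exact ⟨_, _, a, b, ha, hb, rfl, rfl, hcop, by omega⟩
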